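/- arXiv:1603.04344 — 2 statements merged into one kernel-verified Lean document; each statement's English description precedes it below -/
import Mathlib

section
/- Let conditions A, B, C and D₁ hold, with v_ε = p_ε^{−1}. Then, for any family of initial distributions q̄_ε, the first-rare-event-time processes ξ_ε(t) converge in finite-dimensional distributions to the process ξ₀(t) = θ₀(tν₀), where θ₀(t) is a nonnegative Lévy process with E e^{−sθ₀(t)} = e^{−tA(s)} and ν₀ is an exponential random variable with parameter 1 independent of θ₀(·); explicitly, for any 0 = t₀ ≤ t₁ ≤ … ≤ t_n < ∞ and s₁, …, s_n > 0: E exp{−Σ_{r=1}^n s_r (ξ_ε(t_r) − ξ_ε(t_{r−1}))} → (1 + Σ_{r=1}^n A(s_r)(t_r − t_{r−1}))^{−1} as ε → 0. -/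
open MeasureTheory Filter Set
open scoped Topology ENNReal

noncomputable section

/-- Condition B: there exists a ring chain of states `c 0, c 1, …, c N = c 0`
containing all states of the phase space, with
`liminf_{ε→0+} p ε (c (k-1)) (c k) > 0` for `k = 1, …, N`. -/
def CondB {m : ℕ} (p : ℝ → Fin m → Fin m → ℝ) : Prop :=
  ∃ N : ℕ, 0 < N ∧ ∃ c : ℕ → Fin m, c N = c 0 ∧
    (∀ i : Fin m, ∃ k ≤ N, c k = i) ∧
    ∀ k < N, 0 < Filter.liminf (fun ε => p ε (c k) (c (k + 1))) (𝓝[>] (0 : ℝ))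

/-- `π` is a stationary distribution of the transition matrix `p`. -/
def IsStationaryDist {m : ℕ} (p : Fin m → Fin m → ℝ) (π : Fin m → ℝ) : Prop :=
  (∀ i, 0 ≤ π i) ∧ (∑ i, π i = 1) ∧ ∀ j, π j = ∑ i, π i * p i j

/-- `p_{ε,i} = P_i(ζ_{ε,1} = 1)`, the probability of occurrence of the rare event during
one transition step, starting from state `i`. -/
def rareP {m : ℕ} {Ω : Type} [MeasurableSpace Ω]
    (Pstart : ℝ → Fin m → Measure Ω) (ζ : ℝ → ℕ → Ω → Bool) (ε : ℝ) (i : Fin m) : ℝ :=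
  (Pstart ε i {ω | ζ ε 1 ω = true}).toReal

/-- `p_ε = Σ_i π_{ε,i} p_{ε,i}`, the stationary average of the rare-event probabilities. -/
def avgRare {m : ℕ} {Ω : Type} [MeasurableSpace Ω]
    (Pstart : ℝ → Fin m → Measure Ω) (ζ : ℝ → ℕ → Ω → Bool) (π : ℝ → Fin m → ℝ)
    (ε : ℝ) : ℝ :=
  ∑ i, π ε i * rareP Pstart ζ ε i

/-- `φ_ε(s) = Σ_i π_{ε,i} E_i e^{−sκ_{ε,1}}`, the stationary average of the Laplace
transforms of the sojourn times. -/
def lapPhi {m : ℕ} {Ω : Type} [MeasurableSpace Ω]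
    (Pstart : ℝ → Fin m → Measure Ω) (κ : ℝ → ℕ → Ω → ℝ) (π : ℝ → Fin m → ℝ)
    (ε s : ℝ) : ℝ :=
  ∑ i, π ε i * ∫ ω, Real.exp (-(s * κ ε 1 ω)) ∂(Pstart ε i)

/-- `ν_ε = min{n ≥ 1 : ζ_{ε,n} = 1}`, the number of steps until the first rare event. -/
def nuRE {Ω : Type} (ζ : ℝ → ℕ → Ω → Bool) (ε : ℝ) (ω : Ω) : ℕ :=
  sInf {n : ℕ | 1 ≤ n ∧ ζ ε n ω = true}

/-- `ξ_ε = Σ_{n=1}^{ν_ε} κ_{ε,n}`, the first-rare-event time. -/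
def xiRE {Ω : Type} (κ : ℝ → ℕ → Ω → ℝ) (ζ : ℝ → ℕ → Ω → Bool) (ε : ℝ) (ω : Ω) : ℝ :=
  ∑ n ∈ Finset.Icc 1 (nuRE ζ ε ω), κ ε n ω

/-- The first-rare-event-time process `ξ_ε(t) = Σ_{n=1}^{[t ν_ε]} κ_{ε,n}`. -/
def xiProc {Ω : Type} (κ : ℝ → ℕ → Ω → ℝ) (ζ : ℝ → ℕ → Ω → Bool) (ε t : ℝ) (ω : Ω) : ℝ :=
  ∑ n ∈ Finset.Icc 1 (Nat.floor (t * (nuRE ζ ε ω : ℝ))), κ ε n ω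


/-! ### Part A: the Markov structure for one fixed value of the parameter -/

/-- A Markov renewal process (for one fixed value of the parameter). -/
structure MRP {m : ℕ} {Ω : Type} [MeasurableSpace Ω]
    (η : ℕ → Ω → Fin m) (κ : ℕ → Ω → ℝ) (ζ : ℕ → Ω → Bool) (P : Fin m → Measure Ω)
    (Q : Fin m → Fin m → ℝ → Bool → ℝ) : Prop where
  prob : ∀ i, IsProbabilityMeasure (P i)
  mη : ∀ n, Measurable (η n)
  mκ : ∀ n, Measurable (κ n)
  mζ : ∀ n, Measurable (ζ n)
  nn : ∀ n ω, 0 ≤ κ n ω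
  law : ∀ n : ℕ, ∀ I : ℕ → Fin m, ∀ T : ℕ → ℝ, ∀ Z : ℕ → Bool,
      P (I 0)
          {ω | ∀ k ≤ n, (η k ω = I k ∧ (1 ≤ k → (κ k ω ≤ T k ∧ ζ k ω = Z k)))}
        = ENNReal.ofReal (∏ k ∈ Finset.Icc 1 n, Q (I (k - 1)) (I k) (T k) (Z k))

/-- The law of the first sojourn time, restricted to a given first transition. -/
def muK {m : ℕ} {Ω : Type} [MeasurableSpace Ω]
    (η : ℕ → Ω → Fin m) (κ : ℕ → Ω → ℝ) (ζ : ℕ → Ω → Bool) (P : Fin m → Measure Ω)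
    (i j : Fin m) (z : Bool) : Measure ℝ :=
  ((P i).restrict {ω | η 1 ω = j ∧ ζ 1 ω = z}).map (κ 1)

section PartA

variable {m : ℕ} {Ω : Type} [MeasurableSpace Ω]
    {η : ℕ → Ω → Fin m} {κ : ℕ → Ω → ℝ} {ζ : ℕ → Ω → Bool} {P : Fin m → Measure Ω}
    {Q : Fin m → Fin m → ℝ → Bool → ℝ}

lemma muK_finite (h : MRP η κ ζ P Q) (i j : Fin m) (z : Bool) :
    IsFiniteMeasure (muK η κ ζ P i j z) := by
  have := h.prob i
  unfold muK
  infer_instance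

lemma mrp_start (h : MRP η κ ζ P Q) (i : Fin m) : ∀ᵐ ω ∂(P i), η 0 ω = i := by
  have := h.prob i
  have h0 := h.law 0 (fun _ => i) (fun _ => 0) (fun _ => true)
  have hs : {ω | ∀ k ≤ 0, (η k ω = i ∧ (1 ≤ k → (κ k ω ≤ 0 ∧ ζ k ω = true)))}
      = {ω | η 0 ω = i} := by
    ext ω
    simp
  simp only [hs] at h0
  simp at h0
  have hm : MeasurableSet {ω | η 0 ω = i} := (h.mη 0) (measurableSet_singleton i)
  have := (prob_compl_eq_zero_iff hm).2 h0
  exact this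

lemma muK_Iic (h : MRP η κ ζ P Q) (i j : Fin m) (z : Bool) (t : ℝ) :
    muK η κ ζ P i j z (Iic t) = ENNReal.ofReal (Q i j t z) := by
  have h1 := h.law 1 (fun k => if k = 0 then i else j) (fun _ => t) (fun _ => z)
  simp at h1
  rw [← h1]
  unfold muK
  rw [Measure.map_apply (h.mκ 1) measurableSet_Iic,
    Measure.restrict_apply ((h.mκ 1) measurableSet_Iic)]
  apply measure_congr
  filter_upwards [mrp_start h i] with ω hω
  apply propext
  constructor
  · rintro ⟨h1, h2, h3⟩ k hk
    interval_cases k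
    · simp [hω]
    · simp only [mem_preimage, mem_Iic] at h1
      simp [h1, h2, h3]
  · intro hh
    have := hh 1 le_rfl
    simp at this
    exact ⟨this.2.1, this.1, this.2.2⟩

lemma ofReal_prodQ (h : MRP η κ ζ P Q) (I : ℕ → Fin m) (T : ℕ → ℝ) (Z : ℕ → Bool) (n : ℕ) :
    ENNReal.ofReal (∏ k ∈ Finset.Icc 1 n, Q (I (k - 1)) (I k) (T k) (Z k)) =
    ∏ k ∈ Finset.range n, ENNReal.ofReal (Q (I k) (I (k+1)) (T (k+1)) (Z (k+1))) := by
  induction n with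
  | zero => simp
  | succ n ih =>
    rw [Finset.prod_range_succ, ← ih]
    have e : ∏ k ∈ Finset.Icc 1 (n+1), Q (I (k - 1)) (I k) (T k) (Z k) =
      (∏ k ∈ Finset.Icc 1 n, Q (I (k - 1)) (I k) (T k) (Z k)) *
        Q (I n) (I (n+1)) (T (n+1)) (Z (n+1)) := by
      rw [Finset.prod_Icc_succ_top (by omega)]
      simp
    by_cases hp : 0 ≤ ∏ k ∈ Finset.Icc 1 n, Q (I (k - 1)) (I k) (T k) (Z k)
    · rw [e, ENNReal.ofReal_mul hp]
    · have h0 : ENNReal.ofReal (∏ k ∈ Finset.Icc 1 n, Q (I (k - 1)) (I k) (T k) (Z k)) = 0 :=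
        ENNReal.ofReal_of_nonpos (not_le.1 hp).le
      rw [h0, zero_mul, ← h.law (n+1)]
      rw [← h.law n] at h0
      refine measure_mono_null ?_ h0
      intro ω hω k hk
      exact hω k (by omega)

/-- state path -/
def stPath (i : Fin m) {n : ℕ} (J : Fin n → Fin m × Bool) (k : ℕ) : Fin m :=
  if h : 1 ≤ k ∧ k - 1 < n then (J ⟨k - 1, h.2⟩).1 else i

lemma stPath_zero (i : Fin m) {n : ℕ} (J : Fin n → Fin m × Bool) : stPath i J 0 = i := by
  simp [stPath]

lemma stPath_succ (i : Fin m) {n : ℕ} (J : Fin n → Fin m × Bool) (k : Fin n) :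
    stPath i J (k + 1) = (J k).1 := by
  simp [stPath]

lemma stPath_cons (i : Fin m) {n : ℕ} (x : Fin m × Bool) (J : Fin n → Fin m × Bool) (k : ℕ)
    (hk : k ≤ n) :
    stPath i (Fin.cons x J : Fin (n+1) → Fin m × Bool) (k + 1) = stPath x.1 J k := by
  cases k with
  | zero => simp [stPath]
  | succ k =>
    have h1 := stPath_succ i (Fin.cons x J : Fin (n+1) → Fin m × Bool) (⟨k, by omega⟩ : Fin n).succ
    have h2 := stPath_succ x.1 J (⟨k, by omega⟩ : Fin n)
    simp at h1 h2
    rw [h1, h2]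
    rfl

lemma law_pi (h : MRP η κ ζ P Q) (i : Fin m) {n : ℕ} (J : Fin n → Fin m × Bool) :
    Measure.pi (fun k : Fin n => muK η κ ζ P (stPath i J k) (J k).1 (J k).2) =
    ((P i).restrict {ω | ∀ k : Fin n, (η (k+1) ω, ζ (k+1) ω) = J k}).map
      (fun ω (k : Fin n) => κ (k+1) ω) := by
  have hfin : ∀ k : Fin n, IsFiniteMeasure (muK η κ ζ P (stPath i J k) (J k).1 (J k).2) :=
    fun k => muK_finite h _ _ _
  have mvec : Measurable (fun ω (k : Fin n) => κ (k+1) ω) :=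
    measurable_pi_lambda _ (fun k => h.mκ _)
  refine Measure.pi_eq_generateFrom (C := fun _ => range Iic) ?_ ?_ ?_ ?_
  · intro k
    rw [← borel_eq_generateFrom_Iic]
    exact (BorelSpace.measurable_eq).symm
  · intro k; exact isPiSystem_Iic
  · intro k
    refine ⟨fun n => Iic (n:ℝ), fun n => ⟨_, rfl⟩, fun n => measure_lt_top _ _, ?_⟩
    rw [Set.iUnion_eq_univ_iff]
    intro x
    obtain ⟨n, hn⟩ := exists_nat_ge x
    exact ⟨n, hn⟩
  · intro s hs
    choose t ht using hs
    have hs' : s = fun k => Iic (t k) := by ext1 k; exact (ht k).symm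
    subst hs'
    simp only [muK_Iic h]
    have mS : MeasurableSet (univ.pi fun k : Fin n => Iic (t k)) :=
      MeasurableSet.univ_pi (fun k => measurableSet_Iic)
    rw [Measure.map_apply mvec mS, Measure.restrict_apply (mvec mS)]
    set T : ℕ → ℝ := fun k => if hk : 1 ≤ k ∧ k - 1 < n then t ⟨k - 1, hk.2⟩ else 0 with hT
    set Z : ℕ → Bool := fun k => if hk : 1 ≤ k ∧ k - 1 < n then (J ⟨k - 1, hk.2⟩).2 else true
      with hZ
    have hl := h.law n (stPath i J) T Z
    rw [ofReal_prodQ h, stPath_zero] at hl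
    rw [Finset.prod_range] at hl
    have T1 : ∀ k : Fin n, T (k+1) = t k := by intro k; simp [hT]
    have Z1 : ∀ k : Fin n, Z (k+1) = (J k).2 := by intro k; simp [hZ]
    simp only [stPath_succ, T1, Z1] at hl
    rw [← hl]
    apply measure_congr
    filter_upwards [mrp_start h i] with ω hω
    apply propext
    constructor
    · rintro ⟨h1, h2⟩ k hk
      cases k with
      | zero => simp [hω, stPath_zero]
      | succ k =>
        have h3 := h2 ⟨k, by omega⟩
        have h1 := h1 ⟨k, by omega⟩ (mem_univ _)
        simp only [mem_Iic] at h1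
        have e1 := stPath_succ i J ⟨k, by omega⟩
        have e2 := T1 ⟨k, by omega⟩
        have e3 := Z1 ⟨k, by omega⟩
        simp only at e1 e2 e3 h1 h3
        rw [e1, e2, e3, ← h3]
        exact ⟨rfl, fun _ => ⟨h1, rfl⟩⟩
    · intro hh
      refine ⟨?_, ?_⟩
      · intro k _
        have := (hh (k+1) (by omega)).2 (by omega)
        rw [T1] at this
        exact this.1
      · intro k
        have := (hh (k+1) (by omega))
        rw [T1, Z1, stPath_succ] at this
        exact Prod.ext this.1 (this.2 (by omega)).2

/-- Iterated matrix action on the constant vector. -/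
def Vit (W : ℕ → Fin m → Fin m → ℝ) : ℕ → ℕ → Fin m → ℝ
  | _, 0 => fun _ => 1
  | k, (n+1) => fun i => ∑ j, W k i j * Vit W (k+1) n j

lemma sum_paths (c : ℕ → Fin m → Fin m × Bool → ℝ) (n : ℕ) : ∀ (k : ℕ) (i : Fin m),
    ∑ J : Fin n → Fin m × Bool, ∏ l : Fin n, c (k + l) (stPath i J l) (J l) =
      Vit (fun k i j => ∑ z, c k i (j, z)) k n i := by
  induction n with
  | zero => intro k i; simp [Vit]
  | succ n ih =>
    intro k i
    rw [← (Fin.consEquiv (fun _ : Fin (n+1) => Fin m × Bool)).sum_comp]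
    rw [Fintype.sum_prod_type]
    simp only [Fin.consEquiv, Equiv.coe_fn_mk, Fin.prod_univ_succ, Fin.cons_zero, Fin.cons_succ,
      Fin.val_zero, Fin.val_succ, stPath_zero]
    have e : ∀ (x : Fin m × Bool) (J : Fin n → Fin m × Bool) (l : Fin n),
        stPath i (Fin.cons x J : Fin (n+1) → Fin m × Bool) (l + 1) = stPath x.1 J l :=
      fun x J l => stPath_cons i x J l (by omega)
    simp only [e, ← Finset.mul_sum]
    have e2 : ∀ x : Fin m × Bool, ∑ J : Fin n → Fin m × Bool,
        ∏ l : Fin n, c (k + (l + 1)) (stPath x.1 J l) (J l) =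
        Vit (fun k i j => ∑ z, c k i (j, z)) (k+1) n x.1 := by
      intro x
      rw [← ih (k+1) x.1]
      refine Finset.sum_congr rfl fun J _ => Finset.prod_congr rfl fun l _ => ?_
      rw [show k + (l.1 + 1) = k + 1 + l.1 by omega]
    simp only [e2]
    rw [Fintype.sum_prod_type]
    simp only [Vit, add_zero, Finset.sum_mul]

lemma markov_integral (h : MRP η κ ζ P Q) (g : ℕ → Bool → ℝ → ℝ)
    (hg : ∀ k z, Measurable (g k z)) (hb : ∀ k z x, 0 ≤ x → |g k z x| ≤ 1) (n : ℕ) (i : Fin m) :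
    ∫ ω, ∏ k ∈ Finset.range n, g k (ζ (k+1) ω) (κ (k+1) ω) ∂(P i) =
    Vit (fun k i j => ∫ ω, (if η 1 ω = j then g k (ζ 1 ω) (κ 1 ω) else 0) ∂(P i)) 0 n i := by
  have hpr := h.prob
  have mg : ∀ k l, Measurable (fun ω => g k (ζ l ω) (κ l ω)) := by
    intro k l
    have : Measurable (fun x : Bool × ℝ => g k x.1 x.2) :=
      measurable_from_prod_countable_right (fun z => hg k z)
    exact this.comp ((h.mζ l).prodMk (h.mκ l))
  have e0 : ∀ k (i j : Fin m),
      ∫ ω, (if η 1 ω = j then g k (ζ 1 ω) (κ 1 ω) else 0) ∂(P i) =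
      ∑ z : Bool, ∫ x, g k z x ∂(muK η κ ζ P i j z) := by
    intro k i j
    have hz : ∀ z, MeasurableSet {ω | η 1 ω = j ∧ ζ 1 ω = z} := fun z =>
      ((h.mη 1) (measurableSet_singleton j)).inter ((h.mζ 1) (measurableSet_singleton z))
    have : ∀ z : Bool, ∫ x, g k z x ∂(muK η κ ζ P i j z) =
        ∫ ω, ({ω | η 1 ω = j ∧ ζ 1 ω = z}.indicator (fun ω => g k z (κ 1 ω))) ω ∂(P i) := by
      intro z
      unfold muK
      rw [integral_map (h.mκ 1).aemeasurable (hg k z).aestronglyMeasurable,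
        integral_indicator (hz z)]
    simp only [this]
    rw [← integral_finsetSum]
    · congr 1
      ext ω
      simp only [Fintype.sum_bool, indicator, mem_ofPred_eq]
      by_cases h1 : η 1 ω = j <;> cases h2 : ζ 1 ω <;> simp [h1]
    · intro z _
      refine Integrable.indicator ?_ (hz z)
      refine Integrable.of_bound (C := 1) ((hg k z).comp (h.mκ 1)).aestronglyMeasurable ?_
      exact Filter.Eventually.of_forall fun ω => hb k z _ (h.nn 1 ω)
  simp only [e0]
  rw [← sum_paths (fun k i jz => ∫ x, g k jz.2 x ∂(muK η κ ζ P i jz.1 jz.2)) n 0 i]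
  have hA : ∀ J : Fin n → Fin m × Bool,
      MeasurableSet {ω | ∀ k : Fin n, (η (k+1) ω, ζ (k+1) ω) = J k} := by
    intro J
    rw [ofPred_forall]
    exact MeasurableSet.iInter fun k =>
      ((h.mη _).prodMk (h.mζ _)) (measurableSet_singleton (J k))
  have e1 : ∀ J : Fin n → Fin m × Bool,
      ∏ l : Fin n, ∫ x, g (0 + l) (J l).2 x ∂(muK η κ ζ P (stPath i J l) (J l).1 (J l).2) =
      ∫ ω, ({ω | ∀ k : Fin n, (η (k+1) ω, ζ (k+1) ω) = J k}.indicator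
        (fun ω => ∏ k ∈ Finset.range n, g k (ζ (k+1) ω) (κ (k+1) ω))) ω ∂(P i) := by
    intro J
    have hfin : ∀ k : Fin n, IsFiniteMeasure (muK η κ ζ P (stPath i J k) (J k).1 (J k).2) :=
      fun k => muK_finite h _ _ _
    have mvec : Measurable (fun ω (k : Fin n) => κ (k+1) ω) :=
      measurable_pi_lambda _ (fun k => h.mκ _)
    rw [← integral_fintype_prod_eq_prod
      (μ := fun l : Fin n => muK η κ ζ P (stPath i J l) (J l).1 (J l).2)
      (fun (l : Fin n) (x : ℝ) => g (0 + l) (J l).2 x), law_pi h i J, integral_map mvec.aemeasurable,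
      integral_indicator (hA J)]
    · refine setIntegral_congr_fun (hA J) ?_
      intro ω hω
      simp only
      rw [Finset.prod_range]
      refine Finset.prod_congr rfl fun l _ => ?_
      have := hω l
      rw [← this]
      simp
    · refine Measurable.aestronglyMeasurable ?_
      exact Finset.measurable_prod _ fun l _ => (hg _ _).comp (measurable_pi_apply l)
  simp only [e1]
  rw [← integral_finsetSum]
  · congr 1
    ext ω
    rw [Finset.sum_eq_single (fun k : Fin n => (η (k+1) ω, ζ (k+1) ω))]
    · simp
    · intro J _ hJ
      rw [indicator_of_notMem]
      intro hω
      exact hJ (funext fun k => (hω k).symm)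
    · simp
  · intro J _
    refine Integrable.indicator ?_ (hA J)
    refine Integrable.of_bound (C := 1)
      (Finset.measurable_prod _ fun k _ => mg k (k+1)).aestronglyMeasurable ?_
    refine Filter.Eventually.of_forall fun ω => ?_
    rw [Real.norm_eq_abs, Finset.abs_prod]
    exact Finset.prod_le_one (fun _ _ => abs_nonneg _) (fun k _ => hb k _ _ (h.nn _ ω))

end PartA


/-! ### Part B: perturbation of stochastic matrices -/

section PartB

variable {m : ℕ}

/-- A ring chain with uniform lower bound. -/
structure Ring1 (P : Fin m → Fin m → ℝ) (π : Fin m → ℝ) (c : ℕ → Fin m) (N : ℕ) (a : ℝ) :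
    Prop where
  nn : ∀ i j, 0 ≤ P i j
  row : ∀ i, ∑ j, P i j = 1
  st : IsStationaryDist P π
  apos : 0 < a
  ale : a ≤ 1
  step : ∀ k, a ≤ P (c k) (c (k+1))
  reach : ∀ i j, ∃ k l, l ≤ N ∧ c k = i ∧ c (k + l) = j

/-- The uniform constant. -/
def KR (N : ℕ) (a : ℝ) : ℝ := N * (a⁻¹) ^ N

lemma KR_nonneg {N : ℕ} {a : ℝ} (ha : 0 < a) : 0 ≤ KR N a := by unfold KR; positivity

lemma ring_osc {P : Fin m → Fin m → ℝ} {π : Fin m → ℝ} {c : ℕ → Fin m} {N : ℕ} {a : ℝ}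
    (h : Ring1 P π c N a) (g f : Fin m → ℝ) (F : ℝ) (hF : ∀ i, |f i| ≤ F)
    (hg : ∀ i, g i = f i + ∑ j, P i j * g j) (i j : Fin m) : g i - g j ≤ F * KR N a := by
  have hne : (Finset.univ : Finset (Fin m)).Nonempty := ⟨i, Finset.mem_univ _⟩
  obtain ⟨i0, -, hi0⟩ := Finset.exists_max_image Finset.univ g hne
  have hF0 : 0 ≤ F := (abs_nonneg _).trans (hF i)
  have hai : 1 ≤ a⁻¹ := (one_le_inv₀ h.apos).2 h.ale
  obtain ⟨k, l, hl, hk, hj⟩ := h.reach i0 j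
  have key : ∀ l, g i0 - g (c (k + l)) ≤ F * (l * a⁻¹ ^ l) := by
    intro l
    induction l with
    | zero => simp [hk]
    | succ l ih =>
      have h1 : ∑ x, P (c (k+l)) x * (g i0 - g x) = g i0 - g (c (k+l)) + f (c (k+l)) := by
        simp only [mul_sub, Finset.sum_sub_distrib]
        rw [← Finset.sum_mul, h.row, hg (c (k+l))]
        ring
      have h2 : P (c (k+l)) (c (k+l+1)) * (g i0 - g (c (k+l+1))) ≤
          ∑ x, P (c (k+l)) x * (g i0 - g x) :=
        Finset.single_le_sum (f := fun x => P (c (k+l)) x * (g i0 - g x))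
          (fun x _ => mul_nonneg (h.nn _ _) (sub_nonneg.2 (hi0 x (Finset.mem_univ _))))
          (Finset.mem_univ _)
      have h3 : a * (g i0 - g (c (k+l+1))) ≤ P (c (k+l)) (c (k+l+1)) * (g i0 - g (c (k+l+1))) :=
        mul_le_mul_of_nonneg_right (h.step _) (sub_nonneg.2 (hi0 _ (Finset.mem_univ _)))
      have h4 := (abs_le.1 (hF (c (k+l)))).2
      have h5 : a * (g i0 - g (c (k+l+1))) ≤ F * (l * a⁻¹ ^ l) + F := by linarith
      have h6 : g i0 - g (c (k+l+1)) ≤ a⁻¹ * (F * (l * a⁻¹ ^ l) + F) := by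
        rw [inv_mul_eq_div, le_div_iff₀ h.apos]; linarith
      have h7 : (1:ℝ) ≤ a⁻¹ ^ l := one_le_pow₀ hai
      have h8 : F ≤ F * a⁻¹ ^ l := le_mul_of_one_le_right hF0 h7
      rw [← add_assoc]
      calc g i0 - g (c (k+l+1)) ≤ a⁻¹ * (F * (l * a⁻¹ ^ l) + F) := h6
        _ ≤ a⁻¹ * (F * (l * a⁻¹ ^ l) + F * a⁻¹ ^ l) := by
            apply mul_le_mul_of_nonneg_left _ (by positivity)
            linarith
        _ = F * (((l+1 : ℕ):ℝ) * a⁻¹ ^ (l+1)) := by push_cast; ring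
  have h1 := key l
  rw [hj] at h1
  have h2 := hi0 i (Finset.mem_univ _)
  have h3 : F * (l * a⁻¹ ^ l) ≤ F * KR N a := by
    unfold KR
    have : (a⁻¹)^l ≤ (a⁻¹)^N := pow_le_pow_right₀ hai hl
    have h0 : (0:ℝ) ≤ a⁻¹ := by linarith
    gcongr
  linarith

lemma poisson {P : Fin m → Fin m → ℝ} {π : Fin m → ℝ} {c : ℕ → Fin m} {N : ℕ} {a : ℝ}
    (h : Ring1 P π c N a) (f : Fin m → ℝ) (F : ℝ) (hF : ∀ i, |f i| ≤ F)
    (hf : ∑ i, π i * f i = 0) :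
    ∃ g : Fin m → ℝ, (∀ i, g i = f i + ∑ j, P i j * g j) ∧ ∀ i, |g i| ≤ F * KR N a := by
  obtain ⟨hπ0, hπ1, hπ2⟩ := h.st
  have stat : ∀ g : Fin m → ℝ, ∑ i, π i * ∑ j, P i j * g j = ∑ j, π j * g j := by
    intro g
    simp only [Finset.mul_sum]
    rw [Finset.sum_comm]
    refine Finset.sum_congr rfl fun j _ => ?_
    rw [hπ2 j, Finset.sum_mul]
    refine Finset.sum_congr rfl fun i _ => by ring
  let T : (Fin m → ℝ) →ₗ[ℝ] (Fin m → ℝ) :=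
    { toFun := fun g i => g i - ∑ j, P i j * g j + ∑ j, π j * g j
      map_add' := by
        intro x y; ext i
        simp only [Pi.add_apply, mul_add, Finset.sum_add_distrib]; ring
      map_smul' := by
        intro r x; ext i
        simp only [Pi.smul_apply, smul_eq_mul, RingHom.id_apply]
        have e1 : ∀ w : Fin m → ℝ, ∑ j, w j * (r * x j) = r * ∑ j, w j * x j := by
          intro w; rw [Finset.mul_sum]; exact Finset.sum_congr rfl fun _ _ => by ring
        rw [e1, e1]; ring }
  have hT : ∀ g i, T g i = g i - ∑ j, P i j * g j + ∑ j, π j * g j := fun _ _ => rfl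
  have hTπ : ∀ g, ∑ i, π i * T g i = ∑ j, π j * g j := by
    intro g
    simp only [hT, mul_add, mul_sub, Finset.sum_add_distrib, Finset.sum_sub_distrib]
    rw [stat, ← Finset.sum_mul, hπ1]; ring
  have hinj : Function.Injective T := by
    rw [← LinearMap.ker_eq_bot, LinearMap.ker_eq_bot']
    intro g hg
    have h1 : ∑ j, π j * g j = 0 := by rw [← hTπ, hg]; simp
    have h2 : ∀ i, g i = (0 : Fin m → ℝ) i + ∑ j, P i j * g j := by
      intro i
      have := congrFun hg i
      rw [hT, h1] at this
      simp at this ⊢; linarith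
    have h3 := ring_osc h g 0 0 (by simp) h2
    ext i
    have h4 : ∀ j, g j = g i := fun j => by
      have := h3 i j; have := h3 j i; linarith
    simp only [h4, ← Finset.sum_mul, hπ1] at h1
    simpa using h1
  obtain ⟨g, hg⟩ := (LinearMap.injective_iff_surjective.1 hinj) f
  have h1 : ∑ j, π j * g j = 0 := by rw [← hTπ, hg, hf]
  have h2 : ∀ i, g i = f i + ∑ j, P i j * g j := by
    intro i
    have := congrFun hg i
    rw [hT, h1] at this
    linarith
  have hosc := ring_osc h g f F hF h2
  rcases isEmpty_or_nonempty (Fin m) with hE | ⟨⟨i0⟩⟩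
  · exact ⟨g, h2, fun i => hE.elim i⟩
  · refine ⟨fun i => g i - g i0, fun i => ?_, fun i => ?_⟩
    · simp only [mul_sub, Finset.sum_sub_distrib]
      rw [← Finset.sum_mul, h.row, h2 i]
      ring
    · rw [abs_le]
      exact ⟨by have := hosc i0 i; linarith, hosc i i0⟩

lemma pi_lower {P : Fin m → Fin m → ℝ} {π : Fin m → ℝ} {c : ℕ → Fin m} {N : ℕ} {a : ℝ}
    (h : Ring1 P π c N a) (i : Fin m) : a ^ N / m ≤ π i := by
  obtain ⟨hπ0, hπ1, hπ2⟩ := h.st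
  have hm : (0:ℝ) < m := by
    have : 0 < m := i.pos
    exact_mod_cast this
  obtain ⟨i0, hi0⟩ : ∃ i0, 1 / (m:ℝ) ≤ π i0 := by
    by_contra! hcon
    have : ∑ i, π i < ∑ i : Fin m, 1 / (m:ℝ) :=
      Finset.sum_lt_sum_of_nonempty ⟨i, Finset.mem_univ _⟩ (fun j _ => hcon j)
    rw [hπ1] at this
    simp at this
    rw [mul_inv_cancel₀ hm.ne'] at this
    exact lt_irrefl _ this
  obtain ⟨k, l, hl, hk, hj⟩ := h.reach i0 i
  have key : ∀ l, a ^ l / m ≤ π (c (k + l)) := by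
    intro l
    induction l with
    | zero => simpa [hk] using hi0
    | succ l ih =>
      have h1 : π (c (k+l)) * P (c (k+l)) (c (k+l+1)) ≤ π (c (k+l+1)) := by
        rw [hπ2 (c (k+l+1))]
        exact Finset.single_le_sum (f := fun x => π x * P x (c (k+l+1)))
          (fun x _ => mul_nonneg (hπ0 _) (h.nn _ _)) (Finset.mem_univ _)
      have h2 : a ^ l / m * a ≤ π (c (k+l)) * P (c (k+l)) (c (k+l+1)) :=
        mul_le_mul ih (h.step _) h.apos.le (hπ0 _)
      rw [← add_assoc, pow_succ]
      calc a ^ l * a / m = a ^ l / m * a := by ring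
        _ ≤ _ := h2.trans h1
  have h1 := key l
  rw [hj] at h1
  refine le_trans ?_ h1
  exact div_le_div_of_nonneg_right (pow_le_pow_of_le_one h.apos.le h.ale hl) hm.le

/-- Near eigenvector of a perturbed stochastic matrix. -/
lemma near_eig {P : Fin m → Fin m → ℝ} {π : Fin m → ℝ} {c : ℕ → Fin m} {N : ℕ} {a : ℝ}
    (h : Ring1 P π c N a) (G : Fin m → Fin m → ℝ) (hGP : ∀ i j, G i j ≤ P i j)
    (D : ℝ) (hD : ∀ i, 1 - ∑ j, G i j ≤ D) :
    ∃ u : Fin m → ℝ, (∀ i, |u i - 1| ≤ D * KR N a) ∧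
      ∀ i, |∑ j, G i j * u j - (1 - ∑ i, π i * (1 - ∑ j, G i j)) * u i| ≤ 2 * D ^ 2 * KR N a := by
  obtain ⟨hπ0, hπ1, hπ2⟩ := h.st
  set lam := ∑ i, π i * (1 - ∑ j, G i j) with hlam
  have hd0 : ∀ i, 0 ≤ 1 - ∑ j, G i j := by
    intro i
    rw [← h.row i, sub_nonneg]
    exact Finset.sum_le_sum fun j _ => hGP i j
  have hl0 : 0 ≤ lam := Finset.sum_nonneg fun i _ => mul_nonneg (hπ0 i) (hd0 i)
  have hlD : lam ≤ D := by
    calc lam ≤ ∑ i, π i * D := Finset.sum_le_sum fun i _ => mul_le_mul_of_nonneg_left (hD i) (hπ0 i)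
      _ = D := by rw [← Finset.sum_mul, hπ1, one_mul]
  obtain ⟨g, hg1, hg2⟩ := poisson h (fun i => lam - (1 - ∑ j, G i j)) D
    (fun i => by rw [abs_le]; constructor <;> linarith [hd0 i, hD i])
    (by simp only [mul_sub (π _) lam, Finset.sum_sub_distrib]
        rw [← Finset.sum_mul, hπ1, ← hlam]; ring)
  refine ⟨fun i => 1 + g i, fun i => by simpa using hg2 i, fun i => ?_⟩
  have hD0 : 0 ≤ D := hl0.trans hlD
  have e : ∑ j, G i j * (1 + g j) - (1 - lam) * (1 + g i) =
      lam * g i - ∑ j, (P i j - G i j) * g j := by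
    have := hg1 i
    simp only [mul_add, sub_mul, Finset.sum_add_distrib, Finset.sum_sub_distrib, mul_one] at this ⊢
    linarith
  rw [e]
  have b1 : |lam * g i| ≤ D * (D * KR N a) := by
    rw [abs_mul, abs_of_nonneg hl0]
    exact mul_le_mul hlD (hg2 i) (abs_nonneg _) hD0
  have b2 : |∑ j, (P i j - G i j) * g j| ≤ D * (D * KR N a) := by
    calc |∑ j, (P i j - G i j) * g j| ≤ ∑ j, |(P i j - G i j) * g j| :=
          Finset.abs_sum_le_sum_abs _ _
      _ ≤ ∑ j, (P i j - G i j) * (D * KR N a) := by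
          refine Finset.sum_le_sum fun j _ => ?_
          rw [abs_mul, abs_of_nonneg (sub_nonneg.2 (hGP i j))]
          exact mul_le_mul_of_nonneg_left (hg2 j) (sub_nonneg.2 (hGP i j))
      _ = (1 - ∑ j, G i j) * (D * KR N a) := by
          rw [← Finset.sum_mul, Finset.sum_sub_distrib, h.row]
      _ ≤ D * (D * KR N a) :=
          mul_le_mul_of_nonneg_right (hD i) (mul_nonneg hD0 (KR_nonneg h.apos))
  calc _ ≤ |lam * g i| + |∑ j, (P i j - G i j) * g j| := abs_sub _ _
    _ ≤ 2 * D ^ 2 * KR N a := by linarith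

/-- Upper bound for iterated products. -/
lemma Vit_upper (W : ℕ → Fin m → Fin m → ℝ) (hW : ∀ k i j, 0 ≤ W k i j)
    (u : ℕ → Fin m → ℝ) (r : ℕ → ℝ) (hr : ∀ k, 0 ≤ r k) (K : ℝ) (hK : 0 ≤ K)
    (hu : ∀ k i, 1 ≤ K * u k i)
    (n : ℕ) : ∀ k, (∀ l < n, ∀ i, ∑ j, W (k + l) i j * u (k + l + 1) j ≤ r (k + l) * u (k + l) i) →
    ∀ i, Vit W k n i ≤ K * (∏ l ∈ Finset.range n, r (k + l)) * u k i := by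
  induction n with
  | zero => intro k _ i; simpa [Vit] using hu k i
  | succ n ih =>
    intro k h i
    have h1 := ih (k+1) (fun l hl i => by
      have := h (l+1) (by omega) i
      rw [show k + 1 + l = k + (l + 1) by omega]; exact this)
    have h0 := h 0 (by omega) i
    simp only [add_zero] at h0
    simp only [Vit]
    have hp : 0 ≤ K * ∏ l ∈ Finset.range n, r (k + 1 + l) :=
      mul_nonneg hK (Finset.prod_nonneg fun _ _ => hr _)
    calc ∑ j, W k i j * Vit W (k+1) n j
        ≤ ∑ j, W k i j * (K * (∏ l ∈ Finset.range n, r (k + 1 + l)) * u (k+1) j) :=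
          Finset.sum_le_sum fun j _ => mul_le_mul_of_nonneg_left (h1 j) (hW _ _ _)
      _ = (K * ∏ l ∈ Finset.range n, r (k + 1 + l)) * ∑ j, W k i j * u (k+1) j := by
          rw [Finset.mul_sum]; exact Finset.sum_congr rfl fun _ _ => by ring
      _ ≤ (K * ∏ l ∈ Finset.range n, r (k + 1 + l)) * (r k * u k i) :=
          mul_le_mul_of_nonneg_left h0 hp
      _ = K * (∏ l ∈ Finset.range (n+1), r (k + l)) * u k i := by
          rw [Finset.prod_range_succ']
          have e : ∏ l ∈ Finset.range n, r (k + (l + 1)) = ∏ l ∈ Finset.range n, r (k + 1 + l) :=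
            Finset.prod_congr rfl fun l _ => by rw [show k + (l + 1) = k + 1 + l by omega]
          rw [e, add_zero]
          ring

/-- Lower bound for iterated products. -/
lemma Vit_lower (W : ℕ → Fin m → Fin m → ℝ) (hW : ∀ k i j, 0 ≤ W k i j)
    (u : ℕ → Fin m → ℝ) (r : ℕ → ℝ) (hr : ∀ k, 0 ≤ r k) (K : ℝ) (hK : 0 ≤ K)
    (hu : ∀ k i, K * u k i ≤ 1)
    (n : ℕ) : ∀ k, (∀ l < n, ∀ i, r (k + l) * u (k + l) i ≤ ∑ j, W (k + l) i j * u (k + l + 1) j) →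
    ∀ i, K * (∏ l ∈ Finset.range n, r (k + l)) * u k i ≤ Vit W k n i := by
  induction n with
  | zero => intro k _ i; simpa [Vit] using hu k i
  | succ n ih =>
    intro k h i
    have h1 := ih (k+1) (fun l hl i => by
      have := h (l+1) (by omega) i
      rw [show k + 1 + l = k + (l + 1) by omega]; exact this)
    have h0 := h 0 (by omega) i
    simp only [add_zero] at h0
    simp only [Vit]
    have hp : 0 ≤ K * ∏ l ∈ Finset.range n, r (k + 1 + l) :=
      mul_nonneg hK (Finset.prod_nonneg fun _ _ => hr _)
    calc K * (∏ l ∈ Finset.range (n+1), r (k + l)) * u k i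
        = (K * ∏ l ∈ Finset.range n, r (k + 1 + l)) * (r k * u k i) := by
          rw [Finset.prod_range_succ']
          have e : ∏ l ∈ Finset.range n, r (k + (l + 1)) = ∏ l ∈ Finset.range n, r (k + 1 + l) :=
            Finset.prod_congr rfl fun l _ => by rw [show k + (l + 1) = k + 1 + l by omega]
          rw [e, add_zero]
          ring
      _ ≤ (K * ∏ l ∈ Finset.range n, r (k + 1 + l)) * ∑ j, W k i j * u (k+1) j :=
          mul_le_mul_of_nonneg_left h0 hp
      _ = ∑ j, W k i j * (K * (∏ l ∈ Finset.range n, r (k + 1 + l)) * u (k+1) j) := by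
          rw [Finset.mul_sum]; exact Finset.sum_congr rfl fun _ _ => by ring
      _ ≤ ∑ j, W k i j * Vit W (k+1) n j :=
          Finset.sum_le_sum fun j _ => mul_le_mul_of_nonneg_left (h1 j) (hW _ _ _)

end PartB


/-! ### Part C: asymptotics of products -/

section PartC

variable {m : ℕ}

lemma change_prod (q : ℝ) (C : Finset ℕ) (M : ℕ) :
    ∃ e ≤ C.card, ∏ k ∈ Finset.range M, (if k + 1 ∈ C then q else 1) = q ^ e := by
  classical
  refine ⟨((Finset.range M).filter (fun k => k + 1 ∈ C)).card, ?_, ?_⟩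
  · refine Finset.card_le_card_of_injOn (fun k => k + 1) ?_ ?_
    · intro k hk
      simp at hk
      exact hk.2
    · intro x _ y _ hxy
      simpa using hxy
  · rw [Finset.prod_ite]
    simp

lemma det_bound (w : ℕ → ℝ × Bool) (Wt : ℝ × Bool → Fin m → Fin m → ℝ)
    (hW : ∀ k i j, 0 ≤ Wt (w k) i j) (U : ℝ × Bool → Fin m → ℝ) (lam : ℝ × Bool → ℝ)
    (p θ : ℝ) (hθ0 : 0 < θ) (hθ1 : θ < 1)
    (hU : ∀ k i, |U (w k) i - 1| ≤ θ)
    (hup : ∀ k i, ∑ j, Wt (w k) i j * U (w k) j ≤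
      Real.exp (-(p * (lam (w k) - θ))) * U (w k) i)
    (hlo : ∀ k i, Real.exp (-(p * (lam (w k) + θ))) * U (w k) i ≤
      ∑ j, Wt (w k) i j * U (w k) j)
    (C : Finset ℕ) (hC : ∀ k, k + 1 ∉ C → w (k+1) = w k) (M : ℕ) (i : Fin m) :
    Vit (fun k => Wt (w k)) 0 M i ≤ ((1 + θ) / (1 - θ)) ^ (C.card + 1) *
      Real.exp (-(p * ∑ k ∈ Finset.range M, lam (w k)) + θ * (p * M)) ∧
    ((1 - θ) / (1 + θ)) ^ (C.card + 1) *
      Real.exp (-(p * ∑ k ∈ Finset.range M, lam (w k)) - θ * (p * M)) ≤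
    Vit (fun k => Wt (w k)) 0 M i := by
  have h1θ : 0 < 1 - θ := by linarith
  have hUl : ∀ k i, 1 - θ ≤ U (w k) i := fun k i => by have := (abs_le.1 (hU k i)).1; linarith
  have hUu : ∀ k i, U (w k) i ≤ 1 + θ := fun k i => by have := (abs_le.1 (hU k i)).2; linarith
  constructor
  · set q := (1 + θ) / (1 - θ) with hq
    have hq1 : 1 ≤ q := by rw [hq, le_div_iff₀ h1θ]; linarith
    have hV := Vit_upper (fun k => Wt (w k)) hW (fun k => U (w k))
      (fun k => Real.exp (-(p * (lam (w k) - θ))) * (if k + 1 ∈ C then q else 1))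
      (fun k => by split_ifs <;> positivity) ((1 - θ)⁻¹) (by positivity)
      (fun k i => by rw [inv_mul_eq_div, le_div_iff₀ h1θ]; linarith [hUl k i])
      M 0 (by
        intro l _ i
        simp only [zero_add]
        split_ifs with hc
        · calc ∑ j, Wt (w l) i j * U (w (l+1)) j ≤ ∑ j, Wt (w l) i j * (q * U (w l) j) := by
                refine Finset.sum_le_sum fun j _ => mul_le_mul_of_nonneg_left ?_ (hW _ _ _)
                calc U (w (l+1)) j ≤ 1 + θ := hUu _ _
                  _ = q * (1 - θ) := by rw [hq]; field_simp
                  _ ≤ q * U (w l) j := mul_le_mul_of_nonneg_left (hUl _ _) (by linarith)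
            _ = q * ∑ j, Wt (w l) i j * U (w l) j := by
                rw [Finset.mul_sum]; exact Finset.sum_congr rfl fun _ _ => by ring
            _ ≤ q * (Real.exp (-(p * (lam (w l) - θ))) * U (w l) i) :=
                mul_le_mul_of_nonneg_left (hup l i) (by linarith)
            _ = _ := by ring
        · rw [hC l hc, mul_one]; exact hup l i) i
    refine hV.trans ?_
    simp only [zero_add, Finset.prod_mul_distrib, ← Real.exp_sum]
    obtain ⟨e, he, hee⟩ := change_prod q C M
    rw [hee]
    have e1 : ∑ x ∈ Finset.range M, -(p * (lam (w x) - θ)) =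
        -(p * ∑ k ∈ Finset.range M, lam (w k)) + θ * (p * M) := by
      rw [Finset.sum_neg_distrib, ← Finset.mul_sum, Finset.sum_sub_distrib]
      simp; ring
    rw [e1]
    set E := Real.exp (-(p * ∑ k ∈ Finset.range M, lam (w k)) + θ * (p * M))
    have hE : 0 < E := Real.exp_pos _
    calc (1 - θ)⁻¹ * (E * q ^ e) * U (w 0) i ≤ (1 - θ)⁻¹ * (E * q ^ C.card) * (1 + θ) := by
          have : q ^ e ≤ q ^ C.card := pow_le_pow_right₀ hq1 he
          have h0 : 0 ≤ q := by linarith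
          have := hUu 0 i
          have h00 : 0 ≤ U (w 0) i := h1θ.le.trans (hUl 0 i)
          gcongr
      _ = q ^ (C.card + 1) * E := by rw [pow_succ, hq]; field_simp
  · set q := (1 - θ) / (1 + θ) with hq
    have hq1 : q ≤ 1 := by rw [hq, div_le_iff₀ (by linarith)]; linarith
    have hq0 : 0 < q := by positivity
    have hV := Vit_lower (fun k => Wt (w k)) hW (fun k => U (w k))
      (fun k => Real.exp (-(p * (lam (w k) + θ))) * (if k + 1 ∈ C then q else 1))
      (fun k => by split_ifs <;> positivity) ((1 + θ)⁻¹) (by positivity)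
      (fun k i => by rw [inv_mul_eq_div, div_le_iff₀ (by linarith)]; linarith [hUu k i])
      M 0 (by
        intro l _ i
        simp only [zero_add]
        split_ifs with hc
        · calc _ = q * (Real.exp (-(p * (lam (w l) + θ))) * U (w l) i) := by ring
            _ ≤ q * ∑ j, Wt (w l) i j * U (w l) j :=
                mul_le_mul_of_nonneg_left (hlo l i) (by linarith)
            _ = ∑ j, Wt (w l) i j * (q * U (w l) j) := by
                rw [Finset.mul_sum]; exact Finset.sum_congr rfl fun _ _ => by ring
            _ ≤ ∑ j, Wt (w l) i j * U (w (l+1)) j := by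
                refine Finset.sum_le_sum fun j _ => mul_le_mul_of_nonneg_left ?_ (hW _ _ _)
                calc q * U (w l) j ≤ q * (1 + θ) := mul_le_mul_of_nonneg_left (hUu _ _) (by linarith)
                  _ = 1 - θ := by rw [hq]; field_simp
                  _ ≤ U (w (l+1)) j := hUl _ _
        · rw [hC l hc, mul_one]; exact hlo l i) i
    refine le_trans ?_ hV
    simp only [zero_add, Finset.prod_mul_distrib, ← Real.exp_sum]
    obtain ⟨e, he, hee⟩ := change_prod q C M
    rw [hee]
    have e1 : ∑ x ∈ Finset.range M, -(p * (lam (w x) + θ)) =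
        -(p * ∑ k ∈ Finset.range M, lam (w k)) - θ * (p * M) := by
      rw [Finset.sum_neg_distrib, ← Finset.mul_sum, Finset.sum_add_distrib]
      simp; ring
    rw [e1]
    set E := Real.exp (-(p * ∑ k ∈ Finset.range M, lam (w k)) - θ * (p * M))
    have hE : 0 < E := Real.exp_pos _
    calc q ^ (C.card + 1) * E = (1 + θ)⁻¹ * (E * q ^ C.card) * (1 - θ) := by
          rw [pow_succ, hq]; field_simp
      _ ≤ (1 + θ)⁻¹ * (E * q ^ e) * U (w 0) i := by
          have : q ^ C.card ≤ q ^ e := pow_le_pow_of_le_one hq0.le hq1 he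
          have := hUl 0 i
          gcongr

/-- The weight of one step. -/
def gw (w : ℝ × Bool) (z : Bool) (x : ℝ) : ℝ := if w.2 && z then 0 else Real.exp (-(w.1 * x))

lemma gw_meas (w : ℝ × Bool) (z : Bool) : Measurable (gw w z) := by
  unfold gw
  split_ifs <;> fun_prop

lemma gw_nonneg (w : ℝ × Bool) (z : Bool) (x : ℝ) : 0 ≤ gw w z x := by
  unfold gw; split_ifs <;> positivity

lemma gw_le_one (w : ℝ × Bool) (hw : 0 ≤ w.1) (z : Bool) (x : ℝ) (hx : 0 ≤ x) : gw w z x ≤ 1 := by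
  unfold gw; split_ifs
  · norm_num
  · apply Real.exp_le_one_iff.2; have := mul_nonneg hw hx; linarith

variable {Ω : Type} [MeasurableSpace Ω]

/-- The one step matrix. -/
def Wm (η : ℕ → Ω → Fin m) (κ : ℕ → Ω → ℝ) (ζ : ℕ → Ω → Bool) (P : Fin m → Measure Ω)
    (w : ℝ × Bool) (i j : Fin m) : ℝ :=
  ∫ ω, (if η 1 ω = j then gw w (ζ 1 ω) (κ 1 ω) else 0) ∂(P i)

lemma toReal_eq_int {μ : Measure Ω} {p : Ω → Prop} [DecidablePred p]
    (hp : MeasurableSet {ω | p ω}) :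
    (μ {ω | p ω}).toReal = ∫ ω, (if p ω then (1:ℝ) else 0) ∂μ := by
  have := integral_indicator_one (μ := μ) hp
  rw [measureReal_def] at this
  rw [← this]
  congr 1
  ext ω
  simp [indicator_apply]

section fixedeps
variable {η : ℕ → Ω → Fin m} {κ : ℕ → Ω → ℝ} {ζ : ℕ → Ω → Bool} {P : Fin m → Measure Ω}
    {Q : Fin m → Fin m → ℝ → Bool → ℝ}

lemma gw_comp_meas (h : MRP η κ ζ P Q) (w : ℝ × Bool) (k : ℕ) :
    Measurable (fun ω => gw w (ζ k ω) (κ k ω)) := by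
  have : Measurable (fun x : Bool × ℝ => gw w x.1 x.2) :=
    measurable_from_prod_countable_right (fun z => gw_meas w z)
  exact this.comp ((h.mζ k).prodMk (h.mκ k))

lemma gw_comp_int (h : MRP η κ ζ P Q) (w : ℝ × Bool) (hw : 0 ≤ w.1) (k : ℕ) (i : Fin m) :
    Integrable (fun ω => gw w (ζ k ω) (κ k ω)) (P i) := by
  have := h.prob i
  refine Integrable.of_bound (C := 1) (gw_comp_meas h w k).aestronglyMeasurable ?_
  refine Filter.Eventually.of_forall fun ω => ?_
  rw [Real.norm_eq_abs, abs_of_nonneg (gw_nonneg _ _ _)]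
  exact gw_le_one w hw _ _ (h.nn k ω)

lemma ite_int (h : MRP η κ ζ P Q) (i j : Fin m) (f : Ω → ℝ) (hf : Integrable f (P i)) :
    Integrable (fun ω => if η 1 ω = j then f ω else 0) (P i) :=
  by
  have := hf.indicator (s := {ω | η 1 ω = j}) ((h.mη 1) (measurableSet_singleton j))
  refine this.congr (Filter.Eventually.of_forall fun ω => ?_)
  simp [indicator_apply]

lemma Wm_nonneg (w : ℝ × Bool) (i j : Fin m) : 0 ≤ Wm η κ ζ P w i j := by
  unfold Wm
  refine integral_nonneg fun ω => ?_
  simp only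
  split_ifs
  · exact gw_nonneg _ _ _
  · exact le_rfl

lemma Wm_le (h : MRP η κ ζ P Q) (w : ℝ × Bool) (hw : 0 ≤ w.1) (i j : Fin m) :
    Wm η κ ζ P w i j ≤ (P i {ω | η 1 ω = j}).toReal := by
  have := h.prob i
  have e : (P i {ω | η 1 ω = j}).toReal = ∫ ω, (if η 1 ω = j then (1:ℝ) else 0) ∂(P i) := by
    exact toReal_eq_int ((h.mη 1) (measurableSet_singleton j))
  rw [e]
  unfold Wm
  refine integral_mono (ite_int h i j _ (gw_comp_int h w hw 1 i))
    (ite_int h i j _ (integrable_const _)) fun ω => ?_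
  simp only
  split_ifs
  · exact gw_le_one w hw _ _ (h.nn 1 ω)
  · exact le_rfl

lemma Wm_row (h : MRP η κ ζ P Q) (w : ℝ × Bool) (hw : 0 ≤ w.1) (i : Fin m) :
    ∑ j, Wm η κ ζ P w i j = ∫ ω, gw w (ζ 1 ω) (κ 1 ω) ∂(P i) := by
  unfold Wm
  rw [← integral_finsetSum]
  · simp
  · intro j _
    exact ite_int h i j _ (gw_comp_int h w hw 1 i)

lemma row_p (h : MRP η κ ζ P Q) (i : Fin m) : ∑ j, (P i {ω | η 1 ω = j}).toReal = 1 := by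
  have := h.prob i
  have e : ∀ j, (P i {ω | η 1 ω = j}).toReal = ∫ ω, (if η 1 ω = j then (1:ℝ) else 0) ∂(P i) := by
    intro j
    exact toReal_eq_int ((h.mη 1) (measurableSet_singleton j))
  simp only [e]
  rw [← integral_finsetSum]
  · simp
  · intro j _
    exact ite_int h i j _ (integrable_const _)

end fixedeps


/-- All the standing hypotheses on the family, in eventual form. -/
structure Fam (η : ℝ → ℕ → Ω → Fin m) (κ : ℝ → ℕ → Ω → ℝ) (ζ : ℝ → ℕ → Ω → Bool)
    (Pstart : ℝ → Fin m → Measure Ω) (Q : ℝ → Fin m → Fin m → ℝ → Bool → ℝ)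
    (p : ℝ → Fin m → Fin m → ℝ) (π : ℝ → Fin m → ℝ) (A : ℝ → ℝ) : Prop where
  mrp : ∀ᶠ ε in 𝓝[>] (0:ℝ), MRP (η ε) (κ ε) (ζ ε) (Pstart ε) (Q ε)
  hp : ∀ᶠ ε in 𝓝[>] (0:ℝ), ∀ i j, p ε i j = (Pstart ε i {ω | η ε 1 ω = j}).toReal
  ring : ∃ c N a, ∀ᶠ ε in 𝓝[>] (0:ℝ), Ring1 (p ε) (π ε) c N a
  ppos : ∀ᶠ ε in 𝓝[>] (0:ℝ), 0 < avgRare Pstart ζ π ε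
  plim : Tendsto (fun ε => avgRare Pstart ζ π ε) (𝓝[>] (0:ℝ)) (𝓝 0)
  hC : ∀ i : Fin m, ∀ δ > 0, Tendsto
      (fun ε => (Pstart ε i {ω | δ < κ ε 1 ω ∧ ζ ε 1 ω = true}).toReal / rareP Pstart ζ ε i)
      (𝓝[>] (0:ℝ)) (𝓝 0)
  hD : ∀ s > 0, Tendsto
      (fun ε => (avgRare Pstart ζ π ε)⁻¹ * (1 - lapPhi Pstart κ π ε s))
      (𝓝[>] (0:ℝ)) (𝓝 (A s))
  hApos : ∀ s > 0, 0 < A s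

/-- The exponent, extended by zero at zero. -/
def A' (A : ℝ → ℝ) (s : ℝ) : ℝ := if s = 0 then 0 else A s

/-- The rate of a weight. -/
def lamW (A : ℝ → ℝ) (w : ℝ × Bool) : ℝ := A' A w.1 + (if w.2 then 1 else 0)

section fam
variable {η : ℝ → ℕ → Ω → Fin m} {κ : ℝ → ℕ → Ω → ℝ} {ζ : ℝ → ℕ → Ω → Bool}
    {Pstart : ℝ → Fin m → Measure Ω} {Q : ℝ → Fin m → Fin m → ℝ → Bool → ℝ}
    {p : ℝ → Fin m → Fin m → ℝ} {π : ℝ → Fin m → ℝ} {A : ℝ → ℝ}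

lemma A'_nonneg (h : Fam η κ ζ Pstart Q p π A) (s : ℝ) (hs : 0 ≤ s) : 0 ≤ A' A s := by
  unfold A'
  split_ifs with h0
  · exact le_rfl
  · exact (h.hApos s (lt_of_le_of_ne hs (Ne.symm h0))).le

lemma hD' (h : Fam η κ ζ Pstart Q p π A) (s : ℝ) (hs : 0 ≤ s) : Tendsto
      (fun ε => (avgRare Pstart ζ π ε)⁻¹ * (1 - lapPhi Pstart κ π ε s))
      (𝓝[>] (0:ℝ)) (𝓝 (A' A s)) := by
  rcases hs.eq_or_lt with h0 | h0
  · subst h0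
    obtain ⟨c, N, a, hr⟩ := h.ring
    refine tendsto_const_nhds.congr' ?_
    filter_upwards [h.mrp, hr] with ε hε hre
    have := hε.prob
    simp [A', lapPhi, hre.st.2.1]
  · unfold A'
    rw [if_neg h0.ne']
    exact h.hD s h0

/-- remainder: the contribution of the sojourn time at a rare event -/
def Rm (κ : ℝ → ℕ → Ω → ℝ) (ζ : ℝ → ℕ → Ω → Bool) (Pstart : ℝ → Fin m → Measure Ω)
    (s ε : ℝ) (i : Fin m) : ℝ :=
  ∫ ω, (if ζ ε 1 ω = true then 1 - Real.exp (-(s * κ ε 1 ω)) else 0) ∂(Pstart ε i)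

lemma gw_split {ε : ℝ} (hε : MRP (η ε) (κ ε) (ζ ε) (Pstart ε) (Q ε)) (s : ℝ) (hs : 0 ≤ s)
    (i : Fin m) :
    1 - ∫ ω, gw (s, true) (ζ ε 1 ω) (κ ε 1 ω) ∂(Pstart ε i) =
    (1 - ∫ ω, Real.exp (-(s * κ ε 1 ω)) ∂(Pstart ε i)) + rareP Pstart ζ ε i
      - Rm κ ζ Pstart s ε i := by
  have := hε.prob i
  have hz : MeasurableSet {ω | ζ ε 1 ω = true} := (hε.mζ 1) (measurableSet_singleton true)
  have i1 : Integrable (fun ω => Real.exp (-(s * κ ε 1 ω))) (Pstart ε i) := by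
    have := gw_comp_int hε (s, false) hs 1 i
    simpa [gw] using this
  have i2 : ∀ f : Ω → ℝ, Integrable f (Pstart ε i) →
      Integrable (fun ω => if ζ ε 1 ω = true then f ω else 0) (Pstart ε i) := by
    intro f hf
    refine (hf.indicator hz).congr (Filter.Eventually.of_forall fun ω => ?_)
    simp [indicator_apply]
  unfold Rm rareP
  rw [toReal_eq_int hz]
  have e : ∀ ω, gw (s, true) (ζ ε 1 ω) (κ ε 1 ω) =
      Real.exp (-(s * κ ε 1 ω)) - (if ζ ε 1 ω = true then (1:ℝ) else 0) +
      (if ζ ε 1 ω = true then 1 - Real.exp (-(s * κ ε 1 ω)) else 0) := by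
    intro ω
    unfold gw
    cases ζ ε 1 ω <;> simp
  simp only [e]
  rw [integral_add, integral_sub]
  · ring
  · exact i1
  · exact i2 _ (integrable_const _)
  · exact i1.sub (i2 _ (integrable_const _))
  · exact i2 _ ((integrable_const _).sub i1)

lemma Rm_bound {ε : ℝ} (hε : MRP (η ε) (κ ε) (ζ ε) (Pstart ε) (Q ε)) (s : ℝ) (hs : 0 ≤ s)
    (δ : ℝ) (hδ : 0 ≤ δ) (i : Fin m) :
    0 ≤ Rm κ ζ Pstart s ε i ∧ Rm κ ζ Pstart s ε i ≤
      ((Pstart ε i {ω | δ < κ ε 1 ω ∧ ζ ε 1 ω = true}).toReal / rareP Pstart ζ ε i + s * δ)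
        * rareP Pstart ζ ε i := by
  have := hε.prob i
  have hz : MeasurableSet {ω | ζ ε 1 ω = true} := (hε.mζ 1) (measurableSet_singleton true)
  have hzk : MeasurableSet {ω | δ < κ ε 1 ω ∧ ζ ε 1 ω = true} :=
    ((hε.mκ 1) measurableSet_Ioi).inter hz
  have i1 : Integrable (fun ω => Real.exp (-(s * κ ε 1 ω))) (Pstart ε i) := by
    have := gw_comp_int hε (s, false) hs 1 i
    simpa [gw] using this
  have i2 : ∀ f : Ω → ℝ, Integrable f (Pstart ε i) →
      Integrable (fun ω => if ζ ε 1 ω = true then f ω else 0) (Pstart ε i) := by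
    intro f hf
    refine (hf.indicator hz).congr (Filter.Eventually.of_forall fun ω => ?_)
    simp [indicator_apply]
  have i3 : Integrable (fun ω => if δ < κ ε 1 ω ∧ ζ ε 1 ω = true then (1:ℝ) else 0)
      (Pstart ε i) := by
    refine ((integrable_const (1:ℝ)).indicator hzk).congr (Filter.Eventually.of_forall fun ω => ?_)
    simp [indicator_apply]
  constructor
  · refine integral_nonneg fun ω => ?_
    simp only [Pi.zero_apply]
    split_ifs
    · have : Real.exp (-(s * κ ε 1 ω)) ≤ 1 := by
        apply Real.exp_le_one_iff.2; have := mul_nonneg hs (hε.nn 1 ω); linarith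
      linarith
    · exact le_rfl
  · have h1 : Rm κ ζ Pstart s ε i ≤
        (Pstart ε i {ω | δ < κ ε 1 ω ∧ ζ ε 1 ω = true}).toReal
          + s * δ * rareP Pstart ζ ε i := by
      unfold Rm rareP
      rw [toReal_eq_int hz, toReal_eq_int hzk, ← integral_const_mul, ← integral_add i3
        ((i2 _ (integrable_const _)).const_mul _)]
      refine integral_mono (i2 _ ((integrable_const _).sub i1))
        (i3.add ((i2 _ (integrable_const _)).const_mul _)) fun ω => ?_
      simp only
      by_cases hzz : ζ ε 1 ω = true
      · simp only [hzz, and_true, if_true]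
        by_cases hd : δ < κ ε 1 ω
        · simp only [hd, if_true]
          have h0 := Real.exp_pos (-(s * κ ε 1 ω))
          linarith [mul_nonneg hs hδ]
        · simp only [hd, if_false]
          have h5 := Real.one_sub_le_exp_neg (s * κ ε 1 ω)
          have h4 : s * κ ε 1 ω ≤ s * δ := mul_le_mul_of_nonneg_left (not_lt.1 hd) hs
          linarith
      · simp [hzz]
    rcases eq_or_ne (rareP Pstart ζ ε i) 0 with h0 | h0
    · have h2 : (Pstart ε i {ω | δ < κ ε 1 ω ∧ ζ ε 1 ω = true}).toReal ≤ rareP Pstart ζ ε i := by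
        unfold rareP
        exact ENNReal.toReal_mono (measure_ne_top _ _) (measure_mono fun ω hω => hω.2)
      rw [h0] at h1 h2 ⊢
      linarith
    · rw [add_mul, div_mul_cancel₀ _ h0]
      exact h1

lemma Rm_lim (h : Fam η κ ζ Pstart Q p π A) (s : ℝ) (hs : 0 ≤ s) : Tendsto
      (fun ε => (avgRare Pstart ζ π ε)⁻¹ * ∑ i, π ε i * Rm κ ζ Pstart s ε i)
      (𝓝[>] (0:ℝ)) (𝓝 0) := by
  obtain ⟨c, N, a, hr⟩ := h.ring
  have key : ∀ δ > 0, ∀ᶠ ε in 𝓝[>] (0:ℝ),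
      0 ≤ (avgRare Pstart ζ π ε)⁻¹ * ∑ i, π ε i * Rm κ ζ Pstart s ε i ∧
      (avgRare Pstart ζ π ε)⁻¹ * ∑ i, π ε i * Rm κ ζ Pstart s ε i ≤
      ∑ i, (Pstart ε i {ω | δ < κ ε 1 ω ∧ ζ ε 1 ω = true}).toReal / rareP Pstart ζ ε i
        + s * δ := by
    intro δ hδ
    filter_upwards [h.mrp, hr, h.ppos] with ε hε hre hpp
    have hR := fun i => Rm_bound hε s hs δ hδ.le i
    have hπ := hre.st.1
    have hrp : ∀ i, 0 ≤ rareP Pstart ζ ε i := fun i => ENNReal.toReal_nonneg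
    constructor
    · exact mul_nonneg (inv_nonneg.2 hpp.le)
        (Finset.sum_nonneg fun i _ => mul_nonneg (hπ i) (hR i).1)
    · rw [inv_mul_le_iff₀ hpp]
      unfold avgRare
      rw [Finset.sum_mul]
      refine Finset.sum_le_sum fun i _ => ?_
      rw [mul_assoc]
      refine mul_le_mul_of_nonneg_left ((hR i).2.trans ?_) (hπ i)
      rw [mul_comm]
      refine mul_le_mul_of_nonneg_left ?_ (hrp i)
      have := Finset.single_le_sum (s := Finset.univ) (f := fun i =>
        (Pstart ε i {ω | δ < κ ε 1 ω ∧ ζ ε 1 ω = true}).toReal / rareP Pstart ζ ε i)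
        (fun j _ => div_nonneg ENNReal.toReal_nonneg (hrp j)) (Finset.mem_univ i)
      linarith
  rw [Metric.tendsto_nhds]
  intro e he
  set δ := e / (2 * (s + 1)) with hδ
  have hδ0 : 0 < δ := by positivity
  have h1 : Tendsto (fun ε => ∑ i, (Pstart ε i {ω | δ < κ ε 1 ω ∧ ζ ε 1 ω = true}).toReal
      / rareP Pstart ζ ε i) (𝓝[>] (0:ℝ)) (𝓝 (∑ i : Fin m, 0)) :=
    tendsto_finsetSum _ fun i _ => h.hC i δ hδ0
  simp only [Finset.sum_const_zero] at h1
  have h2 := h1.eventually (gt_mem_nhds (show (0:ℝ) < e/2 by positivity))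
  filter_upwards [key δ hδ0, h2] with ε ⟨k1, k2⟩ k3
  rw [Real.dist_eq, sub_zero, abs_of_nonneg k1]
  have : s * δ ≤ e / 2 := by
    rw [hδ, mul_div_assoc', div_le_div_iff₀ (by positivity) (by norm_num)]
    nlinarith
  linarith

/-- The averaged defect of the one step matrix. -/
lemma defect_lim (h : Fam η κ ζ Pstart Q p π A) (w : ℝ × Bool) (hw : 0 ≤ w.1) : Tendsto
      (fun ε => (avgRare Pstart ζ π ε)⁻¹ *
        ∑ i, π ε i * (1 - ∑ j, Wm (η ε) (κ ε) (ζ ε) (Pstart ε) w i j))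
      (𝓝[>] (0:ℝ)) (𝓝 (lamW A w)) := by
  obtain ⟨c, N, a, hr⟩ := h.ring
  obtain ⟨s, b⟩ := w
  simp only at hw
  have hD := hD' h s hw
  cases b
  · refine (hD.congr' ?_).trans (by simp [lamW])
    filter_upwards [h.mrp, hr] with ε hε hre
    have hsum := hre.st.2.1
    simp only [Wm_row hε (s, false) hw]
    congr 1
    simp only [mul_sub, Finset.sum_sub_distrib, mul_one, hsum]
    simp [lapPhi, gw]
  · have h2 : Tendsto (fun ε => (avgRare Pstart ζ π ε)⁻¹ * (1 - lapPhi Pstart κ π ε s) + 1 -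
        (avgRare Pstart ζ π ε)⁻¹ * ∑ i, π ε i * Rm κ ζ Pstart s ε i)
        (𝓝[>] (0:ℝ)) (𝓝 (A' A s + 1 - 0)) := (hD.add_const 1).sub (Rm_lim h s hw)
    refine (h2.congr' ?_).trans (by simp [lamW])
    filter_upwards [h.mrp, hr, h.ppos] with ε hε hre hpp
    have hsum := hre.st.2.1
    simp only [Wm_row hε (s, true) hw, gw_split hε s hw]
    have e : ∑ i, π ε i * ((1 - ∫ ω, Real.exp (-(s * κ ε 1 ω)) ∂(Pstart ε i)) +
        rareP Pstart ζ ε i - Rm κ ζ Pstart s ε i) =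
        (1 - lapPhi Pstart κ π ε s) + avgRare Pstart ζ π ε -
          ∑ i, π ε i * Rm κ ζ Pstart s ε i := by
      simp only [mul_sub, mul_add, Finset.sum_sub_distrib, Finset.sum_add_distrib, mul_one, hsum]
      rfl
    rw [e]
    have h3 := inv_mul_cancel₀ hpp.ne'
    linear_combination -h3

/-- Uniform near eigenvectors. -/
lemma near_eig_lim (h : Fam η κ ζ Pstart Q p π A) (w : ℝ × Bool) (hw : 0 ≤ w.1)
    (θ : ℝ) (hθ0 : 0 < θ) :
    ∀ᶠ ε in 𝓝[>] (0:ℝ), ∃ u : Fin m → ℝ, (∀ i, |u i - 1| ≤ θ) ∧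
      (∀ i, ∑ j, Wm (η ε) (κ ε) (ζ ε) (Pstart ε) w i j * u j ≤
        Real.exp (-(avgRare Pstart ζ π ε * (lamW A w - θ))) * u i) ∧
      (∀ i, Real.exp (-(avgRare Pstart ζ π ε * (lamW A w + θ))) * u i ≤
        ∑ j, Wm (η ε) (κ ε) (ζ ε) (Pstart ε) w i j * u j) := by
  obtain ⟨c, N, a, hr⟩ := h.ring
  rcases isEmpty_or_nonempty (Fin m) with hE | hNE
  · exact Filter.Eventually.of_forall fun ε => ⟨fun _ => 1, fun i => hE.elim i,
      fun i => hE.elim i, fun i => hE.elim i⟩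
  obtain ⟨i0⟩ := hNE
  have hm : (0:ℝ) < m := by
    have : 0 < m := i0.pos
    exact_mod_cast this
  have hapos : 0 < a := by
    obtain ⟨ε, hε⟩ := hr.exists
    exact hε.apos
  set L := lamW A w with hL
  have hL0 : 0 ≤ L := by
    rw [hL, lamW]
    have := A'_nonneg h w.1 hw
    split_ifs <;> linarith
  set B : ℝ := (L + 1) / (a ^ N / m) with hB
  have hB0 : 0 < B := by positivity
  have hK : 0 ≤ KR N a := KR_nonneg hapos
  have hlim := defect_lim h w hw
  have hlim1 := hlim.eventually (gt_mem_nhds (show L < L + 1 by linarith))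
  have hlim2 := hlim.eventually (gt_mem_nhds (show L < L + θ/4 by linarith))
  have hlim3 := hlim.eventually (lt_mem_nhds (show L - θ/4 < L by linarith))
  -- smallness of p
  have small : ∀ x : ℝ, 0 < x → ∀ᶠ ε in 𝓝[>] (0:ℝ), avgRare Pstart ζ π ε < x := fun x hx =>
    h.plim.eventually (gt_mem_nhds hx)
  set X1 : ℝ := min θ (1/2) / (B * KR N a + 1) with hX1
  set X2 : ℝ := (θ / 4) / (4 * B ^ 2 * KR N a + 1) with hX2
  set X3 : ℝ := (1 / (L + θ)) with hX3
  set X4 : ℝ := (θ / 4) / ((L + θ) ^ 2) with hX4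
  have hX1p : 0 < X1 := by
    have : 0 < min θ (1/2) := lt_min hθ0 (by norm_num)
    positivity
  filter_upwards [h.mrp, h.hp, hr, h.ppos, hlim1, hlim2, hlim3, small X1 hX1p,
    small X2 (by positivity), small X3 (by positivity), small X4 (by positivity)]
    with ε hε hpε hre hpp l1 l2 l3 s1 s2 s3 s4
  set pe := avgRare Pstart ζ π ε with hpe
  set W := Wm (η ε) (κ ε) (ζ ε) (Pstart ε) w with hW
  set lam := ∑ i, π ε i * (1 - ∑ j, W i j) with hlam
  rw [inv_mul_eq_div, div_lt_iff₀ hpp] at l1 l2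
  rw [inv_mul_eq_div, lt_div_iff₀ hpp] at l3
  have hWp : ∀ i j, W i j ≤ p ε i j := fun i j => by rw [hpε]; exact Wm_le hε w hw i j
  have hd0 : ∀ i, 0 ≤ 1 - ∑ j, W i j := by
    intro i
    rw [← hre.row i, sub_nonneg]
    exact Finset.sum_le_sum fun j _ => hWp i j
  have hD : ∀ i, 1 - ∑ j, W i j ≤ B * pe := by
    intro i
    have h1 : π ε i * (1 - ∑ j, W i j) ≤ lam :=
      Finset.single_le_sum (f := fun i => π ε i * (1 - ∑ j, W i j))
        (fun j _ => mul_nonneg (hre.st.1 j) (hd0 j)) (Finset.mem_univ i)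
    have h2 : a ^ N / m * (1 - ∑ j, W i j) ≤ π ε i * (1 - ∑ j, W i j) :=
      mul_le_mul_of_nonneg_right (pi_lower hre i) (hd0 i)
    have h3 : (1 - ∑ j, W i j) ≤ (L + 1) * pe / (a ^ N / m) := by
      rw [le_div_iff₀ (by positivity)]; linarith
    calc _ ≤ _ := h3
      _ = B * pe := by rw [hB]; ring
  obtain ⟨u, hu1, hu2⟩ := near_eig hre W hWp (B * pe) hD
  rw [← hlam] at hu2
  have t1 : B * pe * KR N a ≤ min θ (1/2) := by
    rw [hX1, lt_div_iff₀ (by positivity)] at s1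
    nlinarith
  have t2 : 4 * (B * pe) ^ 2 * KR N a ≤ pe * (θ / 4) := by
    rw [hX2, lt_div_iff₀ (by positivity)] at s2
    have : pe * (4 * B ^ 2 * KR N a) ≤ θ / 4 := by linarith
    calc 4 * (B * pe) ^ 2 * KR N a = pe * (pe * (4 * B ^ 2 * KR N a)) := by ring
      _ ≤ pe * (θ / 4) := mul_le_mul_of_nonneg_left this hpp.le
  have t3 : pe * (L + θ) ≤ 1 := by
    rw [hX3, lt_div_iff₀ (by positivity)] at s3
    exact s3.le
  have t4 : (pe * (L + θ)) ^ 2 ≤ pe * (θ / 4) := by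
    rw [hX4, lt_div_iff₀ (by positivity)] at s4
    calc (pe * (L + θ)) ^ 2 = pe * (pe * (L + θ) ^ 2) := by ring
      _ ≤ pe * (θ / 4) := mul_le_mul_of_nonneg_left s4.le hpp.le
  have hu3 : ∀ i, 1/2 ≤ u i := fun i => by
    have h1 := (abs_le.1 (hu1 i)).1
    have h2 := t1.trans (min_le_right _ _)
    linarith
  have ex1 : 1 - pe * (L - θ) ≤ Real.exp (-(pe * (L - θ))) := Real.one_sub_le_exp_neg _
  have ex2 : Real.exp (-(pe * (L + θ))) ≤ 1 - pe * (L + θ) + (pe * (L + θ)) ^ 2 := by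
    have h1 := Real.abs_exp_sub_one_sub_id_le (x := -(pe * (L + θ)))
      (by rw [abs_neg, abs_of_nonneg (by positivity)]; exact t3)
    have h2 := (abs_le.1 h1).2
    linarith [neg_sq (pe * (L + θ))]
  refine ⟨u, fun i => (hu1 i).trans (t1.trans (min_le_left _ _)), fun i => ?_, fun i => ?_⟩
  · have h1 := (abs_le.1 (hu2 i)).2
    have h2 : 2 * (B * pe) ^ 2 * KR N a ≤ pe * (θ / 4) * u i := by
      have : pe * (θ/4) * (1/2) ≤ pe * (θ/4) * u i :=
        mul_le_mul_of_nonneg_left (hu3 i) (by positivity)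
      linarith
    have h3 : ((1 - lam) + pe * (θ/4)) * u i ≤ Real.exp (-(pe * (L - θ))) * u i := by
      refine mul_le_mul_of_nonneg_right ?_ (by linarith [hu3 i])
      nlinarith
    linarith
  · have h1 := (abs_le.1 (hu2 i)).1
    have h2 : 2 * (B * pe) ^ 2 * KR N a ≤ pe * (θ / 4) * u i := by
      have : pe * (θ/4) * (1/2) ≤ pe * (θ/4) * u i :=
        mul_le_mul_of_nonneg_left (hu3 i) (by positivity)
      linarith
    have h3 : Real.exp (-(pe * (L + θ))) * u i ≤ ((1 - lam) - pe * (θ/4)) * u i := by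
      refine mul_le_mul_of_nonneg_right ?_ (by linarith [hu3 i])
      nlinarith
    linarith


/-- Partial sums of sojourn times. -/
def SS (κ : ℕ → Ω → ℝ) (k : ℕ) (ω : Ω) : ℝ := ∑ n ∈ Finset.Icc 1 k, κ n ω

lemma SS_eq (κ : ℕ → Ω → ℝ) (k : ℕ) (ω : Ω) : SS κ k ω = ∑ j ∈ Finset.range k, κ (j+1) ω := by
  unfold SS
  induction k with
  | zero => simp
  | succ k ih => rw [Finset.sum_range_succ, ← ih, Finset.sum_Icc_succ_top (by omega)]

/-- The weight exponent at a step. -/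
def ak (n : ℕ) (s : ℕ → ℝ) (T : ℕ → ℕ) (k : ℕ) : ℝ :=
  ∑ r ∈ Finset.Icc 1 n, if T (r - 1) ≤ k ∧ k < T r then s r else 0

lemma T_mono {n : ℕ} {T : ℕ → ℕ} (hT : ∀ r < n, T r ≤ T (r+1)) {r r' : ℕ} (h : r ≤ r')
    (hr : r' ≤ n) : T r ≤ T r' := by
  induction r', h using Nat.le_induction with
  | base => exact le_rfl
  | succ r' h ih => exact (ih (by omega)).trans (hT r' (by omega))

lemma ak_cases (n : ℕ) (s : ℕ → ℝ) (T : ℕ → ℕ) (hT : ∀ r < n, T r ≤ T (r+1)) (k : ℕ) :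
    ak n s T k ∈ insert 0 ((Finset.Icc 1 n).image s) ∧
    ∀ F : ℝ → ℝ, F 0 = 0 → F (ak n s T k) =
      ∑ r ∈ Finset.Icc 1 n, if T (r - 1) ≤ k ∧ k < T r then F (s r) else 0 := by
  by_cases hex : ∃ r ∈ Finset.Icc 1 n, T (r - 1) ≤ k ∧ k < T r
  · obtain ⟨r, hr, hc⟩ := hex
    have huniq : ∀ r' ∈ Finset.Icc 1 n, r' ≠ r → ¬ (T (r' - 1) ≤ k ∧ k < T r') := by
      intro r' hr' hne hc'
      simp only [Finset.mem_Icc] at hr hr'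
      rcases lt_or_gt_of_ne hne with hlt | hlt
      · have := T_mono hT (show r' ≤ r - 1 by omega) (by omega)
        omega
      · have := T_mono hT (show r ≤ r' - 1 by omega) (by omega)
        omega
    have e : ∀ F : ℝ → ℝ, (∑ r ∈ Finset.Icc 1 n, if T (r - 1) ≤ k ∧ k < T r then F (s r) else 0)
        = F (s r) := by
      intro F
      rw [Finset.sum_eq_single r]
      · rw [if_pos hc]
      · intro r' hr' hne
        rw [if_neg (huniq r' hr' hne)]
      · intro hn; exact absurd hr hn
    have e0 : ak n s T k = s r := e id
    constructor
    · rw [e0]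
      exact Finset.mem_insert_of_mem (Finset.mem_image_of_mem _ hr)
    · intro F _
      rw [e, e0]
  · push Not at hex
    have e : ∀ F : ℝ → ℝ, (∑ r ∈ Finset.Icc 1 n, if T (r - 1) ≤ k ∧ k < T r then F (s r) else 0)
        = 0 := by
      intro F
      refine Finset.sum_eq_zero fun r hr => ?_
      rw [if_neg]
      intro hc
      have := hex r hr hc.1
      omega
    have e0 : ak n s T k = 0 := e id
    constructor
    · rw [e0]; exact Finset.mem_insert_self _ _
    · intro F hF
      rw [e, e0, hF]

lemma sum_window (M a b : ℕ) (hb : b ≤ M) (x : ℕ → ℝ) :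
    (∑ k ∈ Finset.range M, if a ≤ k ∧ k < b then x k else 0) = ∑ k ∈ Finset.Ico a b, x k := by
  rw [← Finset.sum_filter]
  congr 1
  ext k
  simp only [Finset.mem_filter, Finset.mem_range, Finset.mem_Ico]
  omega

lemma ak_sum (n : ℕ) (s : ℕ → ℝ) (T : ℕ → ℕ) (hT : ∀ r < n, T r ≤ T (r+1)) (M : ℕ)
    (hM : T n ≤ M) (κ : ℕ → Ω → ℝ) (ω : Ω) :
    ∑ k ∈ Finset.range M, ak n s T k * κ (k+1) ω =
      ∑ r ∈ Finset.Icc 1 n, s r * (SS κ (T r) ω - SS κ (T (r-1)) ω) := by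
  unfold ak
  simp only [Finset.sum_mul]
  rw [Finset.sum_comm]
  refine Finset.sum_congr rfl fun r hr => ?_
  simp only [Finset.mem_Icc] at hr
  simp only [ite_mul, zero_mul]
  have h1 := T_mono hT hr.2 le_rfl
  have h2 := T_mono hT (show r - 1 ≤ r by omega) hr.2
  rw [sum_window M _ _ (h1.trans hM) (fun k => s r * κ (k+1) ω), ← Finset.mul_sum,
    Finset.sum_Ico_eq_sub _ h2, SS_eq, SS_eq]

lemma ak_sumF (n : ℕ) (s : ℕ → ℝ) (T : ℕ → ℕ) (hT : ∀ r < n, T r ≤ T (r+1)) (M : ℕ)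
    (hM : T n ≤ M) (F : ℝ → ℝ) (hF : F 0 = 0) :
    ∑ k ∈ Finset.range M, F (ak n s T k) =
      ∑ r ∈ Finset.Icc 1 n, F (s r) * ((T r : ℝ) - T (r-1)) := by
  simp only [(ak_cases n s T hT _).2 F hF]
  rw [Finset.sum_comm]
  refine Finset.sum_congr rfl fun r hr => ?_
  simp only [Finset.mem_Icc] at hr
  have h1 := T_mono hT hr.2 le_rfl
  have h2 := T_mono hT (show r - 1 ≤ r by omega) hr.2
  rw [sum_window M _ _ (h1.trans hM) (fun k => F (s r))]
  simp [Nat.cast_sub h2]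
  ring

lemma ak_nonneg (n : ℕ) (s : ℕ → ℝ) (hs : ∀ r, 1 ≤ r → r ≤ n → 0 ≤ s r) (T : ℕ → ℕ) (k : ℕ) :
    0 ≤ ak n s T k := by
  unfold ak
  refine Finset.sum_nonneg fun r hr => ?_
  simp only [Finset.mem_Icc] at hr
  split_ifs
  · exact hs r hr.1 hr.2
  · exact le_rfl

/-- The functional with given cut points and no rare event up to step `L`. -/
def Phi (κ : ℕ → Ω → ℝ) (ζ : ℕ → Ω → Bool) (n : ℕ) (s : ℕ → ℝ) (T : ℕ → ℕ) (L : ℕ) (ω : Ω) : ℝ :=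
  if ∀ k ∈ Finset.Icc 1 L, ζ k ω = false then
    Real.exp (-(∑ r ∈ Finset.Icc 1 n, s r * (SS κ (T r) ω - SS κ (T (r-1)) ω))) else 0

lemma Phi_eq_prod (κ : ℕ → Ω → ℝ) (ζ : ℕ → Ω → Bool) (n : ℕ) (s : ℕ → ℝ) (T : ℕ → ℕ) (L : ℕ)
    (hT : ∀ r < n, T r ≤ T (r+1)) (ω : Ω) :
    Phi κ ζ n s T L ω = ∏ k ∈ Finset.range (T n + L),
      gw (ak n s T k, decide (k < L)) (ζ (k+1) ω) (κ (k+1) ω) := by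
  unfold Phi
  split_ifs with hc
  · rw [← ak_sum n s T hT (T n + L) (by omega), ← Finset.sum_neg_distrib, Real.exp_sum]
    refine Finset.prod_congr rfl fun k _ => ?_
    unfold gw
    rw [if_neg]
    intro hh
    simp at hh
    have := hc (k+1) (by simp; omega)
    rw [hh.2] at this
    exact absurd this (by simp)
  · push Not at hc
    obtain ⟨k, hk, hz⟩ := hc
    simp only [Finset.mem_Icc] at hk
    symm
    refine Finset.prod_eq_zero (i := k - 1) (by simp; omega) ?_
    unfold gw
    rw [if_pos]
    have e : k - 1 + 1 = k := by omega
    rw [e]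
    simp at hz
    simp [hz]
    omega

lemma main_lim (h : Fam η κ ζ Pstart Q p π A) (n : ℕ) (s : ℕ → ℝ)
    (hs : ∀ r, 1 ≤ r → r ≤ n → 0 ≤ s r) (T : ℝ → ℕ → ℕ) (hT : ∀ ε, ∀ r < n, T ε r ≤ T ε (r+1))
    (τ : ℕ → ℝ)
    (hτ : ∀ r ≤ n, Tendsto (fun ε => avgRare Pstart ζ π ε * T ε r) (𝓝[>] (0:ℝ)) (𝓝 (τ r)))
    (L : ℝ → ℕ) (ℓ : ℝ)
    (hℓ : Tendsto (fun ε => avgRare Pstart ζ π ε * L ε) (𝓝[>] (0:ℝ)) (𝓝 ℓ)) (i : Fin m) :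
    Tendsto (fun ε => ∫ ω, Phi (κ ε) (ζ ε) n s (T ε) (L ε) ω ∂(Pstart ε i)) (𝓝[>] (0:ℝ))
      (𝓝 (Real.exp (-(ℓ + ∑ r ∈ Finset.Icc 1 n, A' A (s r) * (τ r - τ (r-1)))))) := by
  classical
  set X : ℝ := ℓ + ∑ r ∈ Finset.Icc 1 n, A' A (s r) * (τ r - τ (r-1)) with hX
  set Y : ℝ := τ n + ℓ with hY
  set SW : Finset (ℝ × Bool) := (insert 0 ((Finset.Icc 1 n).image s)) ×ˢ Finset.univ with hSW
  set px : ℝ → ℝ := fun ε => avgRare Pstart ζ π ε with hpx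
  set xx : ℝ → ℝ := fun ε => px ε * L ε +
    ∑ r ∈ Finset.Icc 1 n, A' A (s r) * (px ε * T ε r - px ε * T ε (r-1)) with hxx
  set yy : ℝ → ℝ := fun ε => px ε * T ε n + px ε * L ε with hyy
  have hxl : Tendsto xx (𝓝[>] (0:ℝ)) (𝓝 X) := by
    refine hℓ.add (tendsto_finsetSum _ fun r hr => ?_)
    simp only [Finset.mem_Icc] at hr
    exact ((hτ r hr.2).sub (hτ (r-1) (by omega))).const_mul _
  have hyl : Tendsto yy (𝓝[>] (0:ℝ)) (𝓝 Y) := (hτ n le_rfl).add hℓ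
  have hSW0 : ∀ w ∈ SW, 0 ≤ w.1 := by
    intro w hw
    rw [hSW, Finset.mem_product, Finset.mem_insert, Finset.mem_image] at hw
    rcases hw.1 with h0 | ⟨r, hr, h0⟩
    · exact h0.ge
    · simp only [Finset.mem_Icc] at hr
      rw [← h0]; exact hs r hr.1 hr.2
  have key : ∀ θ : ℝ, 0 < θ → θ < 1 → ∀ᶠ ε in 𝓝[>] (0:ℝ),
      ∫ ω, Phi (κ ε) (ζ ε) n s (T ε) (L ε) ω ∂(Pstart ε i) ≤
        ((1 + θ) / (1 - θ)) ^ (n + 3) * Real.exp (-(xx ε) + θ * yy ε) ∧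
      ((1 - θ) / (1 + θ)) ^ (n + 3) * Real.exp (-(xx ε) - θ * yy ε) ≤
        ∫ ω, Phi (κ ε) (ζ ε) n s (T ε) (L ε) ω ∂(Pstart ε i) := by
    intro θ hθ0 hθ1
    have hev : ∀ᶠ ε in 𝓝[>] (0:ℝ), ∀ w ∈ SW, ∃ u : Fin m → ℝ, (∀ i, |u i - 1| ≤ θ) ∧
      (∀ i, ∑ j, Wm (η ε) (κ ε) (ζ ε) (Pstart ε) w i j * u j ≤
        Real.exp (-(avgRare Pstart ζ π ε * (lamW A w - θ))) * u i) ∧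
      (∀ i, Real.exp (-(avgRare Pstart ζ π ε * (lamW A w + θ))) * u i ≤
        ∑ j, Wm (η ε) (κ ε) (ζ ε) (Pstart ε) w i j * u j) :=
      (Finset.eventually_all SW).2 fun w hw => near_eig_lim h w (hSW0 w hw) θ hθ0
    filter_upwards [hev, h.mrp] with ε hu hε
    choose! U hU1 hU2 hU3 using hu
    set w : ℕ → ℝ × Bool := fun k => (ak n s (T ε) k, decide (k < L ε)) with hw
    have hwm : ∀ k, w k ∈ SW := by
      intro k
      rw [hSW, Finset.mem_product]
      exact ⟨(ak_cases n s (T ε) (hT ε) k).1, Finset.mem_univ _⟩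
    set C : Finset ℕ := insert (L ε) ((Finset.range (n+1)).image (T ε)) with hC
    have hCc : C.card + 1 ≤ n + 3 := by
      have h1 : C.card ≤ _ := Finset.card_insert_le (L ε) ((Finset.range (n+1)).image (T ε))
      have h2 := Finset.card_image_le (s := Finset.range (n+1)) (f := T ε)
      rw [Finset.card_range] at h2
      omega
    have hCh : ∀ k, k + 1 ∉ C → w (k+1) = w k := by
      intro k hk
      rw [hC, Finset.mem_insert, Finset.mem_image] at hk
      push Not at hk
      obtain ⟨hk1, hk2⟩ := hk
      rw [hw]
      refine Prod.ext ?_ ?_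
      · simp only [ak]
        refine Finset.sum_congr rfl fun r hr => ?_
        simp only [Finset.mem_Icc] at hr
        have a1 := hk2 r (by simp; omega)
        have a2 := hk2 (r-1) (by simp; omega)
        refine if_congr ?_ rfl rfl
        omega
      · simp only [decide_eq_decide]
        omega
    have hdb := det_bound w (Wm (η ε) (κ ε) (ζ ε) (Pstart ε)) (fun k i j => Wm_nonneg _ _ _) U
      (lamW A) (px ε) θ hθ0 hθ1 (fun k => hU1 _ (hwm k)) (fun k => hU2 _ (hwm k))
      (fun k => hU3 _ (hwm k)) C hCh (T ε n + L ε) i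
    have hIntg : ∫ ω, Phi (κ ε) (ζ ε) n s (T ε) (L ε) ω ∂(Pstart ε i) =
        Vit (fun k => Wm (η ε) (κ ε) (ζ ε) (Pstart ε) (w k)) 0 (T ε n + L ε) i := by
      simp only [Phi_eq_prod (κ ε) (ζ ε) n s (T ε) (L ε) (hT ε)]
      exact markov_integral hε (fun k => gw (w k)) (fun k z => gw_meas _ _)
        (fun k z x hx => by
          rw [abs_of_nonneg (gw_nonneg _ _ _)]
          exact gw_le_one _ (hSW0 _ (hwm k)) _ _ hx) _ i
    have hsum : px ε * ∑ k ∈ Finset.range (T ε n + L ε), lamW A (w k) = xx ε := by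
      have e1 : ∑ k ∈ Finset.range (T ε n + L ε), lamW A (w k) =
          ∑ k ∈ Finset.range (T ε n + L ε), A' A (ak n s (T ε) k) +
          ∑ k ∈ Finset.range (T ε n + L ε), (if 0 ≤ k ∧ k < L ε then (1:ℝ) else 0) := by
        rw [← Finset.sum_add_distrib]
        refine Finset.sum_congr rfl fun k _ => ?_
        simp [lamW, hw]
      rw [e1, ak_sumF n s (T ε) (hT ε) _ (by omega) (A' A) (by simp [A']),
        sum_window _ 0 (L ε) (by omega) (fun _ => (1:ℝ)), hxx]
      simp only [mul_add, Finset.mul_sum]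
      rw [add_comm]
      congr 1
      · simp; ring
      · exact Finset.sum_congr rfl fun r _ => by ring
    have hM : px ε * ((T ε n + L ε : ℕ) : ℝ) = yy ε := by rw [hyy]; push_cast; ring
    rw [← hIntg, hsum, hM] at hdb
    have q1 : 1 ≤ (1 + θ) / (1 - θ) := by rw [le_div_iff₀ (by linarith)]; linarith
    have q2 : (1 - θ) / (1 + θ) ≤ 1 := by rw [div_le_iff₀ (by linarith)]; linarith
    have q3 : 0 ≤ (1 - θ) / (1 + θ) := div_nonneg (by linarith) (by linarith)
    constructor
    · refine hdb.1.trans ?_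
      exact mul_le_mul_of_nonneg_right (pow_le_pow_right₀ q1 hCc) (Real.exp_pos _).le
    · refine le_trans ?_ hdb.2
      exact mul_le_mul_of_nonneg_right (pow_le_pow_of_le_one q3 q2 hCc) (Real.exp_pos _).le
  have θev : ∀ᶠ θ in 𝓝[>] (0:ℝ), 0 < θ ∧ θ < 1 := by
    have h1 : ∀ᶠ θ in 𝓝[>] (0:ℝ), 0 < θ := self_mem_nhdsWithin
    have h2 : ∀ᶠ θ in 𝓝[>] (0:ℝ), θ < 1 := nhdsWithin_le_nhds (gt_mem_nhds (by norm_num))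
    exact h1.and h2
  rw [tendsto_order]
  constructor
  · intro b hb
    have hc : Tendsto (fun θ : ℝ => ((1 - θ) / (1 + θ)) ^ (n + 3) * Real.exp (-X - θ * Y))
        (𝓝[>] 0) (𝓝 (Real.exp (-X))) := by
      have : ContinuousAt (fun θ : ℝ => ((1 - θ) / (1 + θ)) ^ (n + 3) * Real.exp (-X - θ * Y)) 0 := by
        refine ContinuousAt.mul (ContinuousAt.pow (ContinuousAt.div (by fun_prop) (by fun_prop)
          (by norm_num)) _) (by fun_prop)
      have h2 := this.tendsto
      simp at h2
      exact h2.mono_left nhdsWithin_le_nhds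
    obtain ⟨θ, ⟨hθ0, hθ1⟩, hθb⟩ := (θev.and (hc.eventually (lt_mem_nhds hb))).exists
    have h3 : Tendsto (fun ε => ((1 - θ) / (1 + θ)) ^ (n + 3) * Real.exp (-(xx ε) - θ * yy ε))
        (𝓝[>] 0) (𝓝 (((1 - θ) / (1 + θ)) ^ (n + 3) * Real.exp (-X - θ * Y))) :=
      ((Real.continuous_exp.tendsto _).comp (hxl.neg.sub (hyl.const_mul θ))).const_mul _
    filter_upwards [key θ hθ0 hθ1, h3.eventually (lt_mem_nhds hθb)] with ε h4 h5
    exact h5.trans_le h4.2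
  · intro b hb
    have hc : Tendsto (fun θ : ℝ => ((1 + θ) / (1 - θ)) ^ (n + 3) * Real.exp (-X + θ * Y))
        (𝓝[>] 0) (𝓝 (Real.exp (-X))) := by
      have : ContinuousAt (fun θ : ℝ => ((1 + θ) / (1 - θ)) ^ (n + 3) * Real.exp (-X + θ * Y)) 0 := by
        refine ContinuousAt.mul (ContinuousAt.pow (ContinuousAt.div (by fun_prop) (by fun_prop)
          (by norm_num)) _) (by fun_prop)
      have h2 := this.tendsto
      simp at h2
      exact h2.mono_left nhdsWithin_le_nhds
    obtain ⟨θ, ⟨hθ0, hθ1⟩, hθb⟩ := (θev.and (hc.eventually (gt_mem_nhds hb))).exists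
    have h3 : Tendsto (fun ε => ((1 + θ) / (1 - θ)) ^ (n + 3) * Real.exp (-(xx ε) + θ * yy ε))
        (𝓝[>] 0) (𝓝 (((1 + θ) / (1 - θ)) ^ (n + 3) * Real.exp (-X + θ * Y))) :=
      ((Real.continuous_exp.tendsto _).comp (hxl.neg.add (hyl.const_mul θ))).const_mul _
    filter_upwards [key θ hθ0 hθ1, h3.eventually (gt_mem_nhds hθb)] with ε h4 h5
    exact h4.1.trans_lt h5

end fam

end PartC


section PartD

lemma build_ring {m : ℕ} {p : ℝ → Fin m → Fin m → ℝ} {π : ℝ → Fin m → ℝ}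
    (hB : CondB p)
    (h0 : ∀ᶠ ε in 𝓝[>] (0:ℝ), (∀ i j, 0 ≤ p ε i j) ∧ ∀ i, ∑ j, p ε i j = 1)
    (hπ : ∀ᶠ ε in 𝓝[>] (0:ℝ), IsStationaryDist (fun i j => p ε i j) (π ε)) :
    ∃ c N a, ∀ᶠ ε in 𝓝[>] (0:ℝ), Ring1 (p ε) (π ε) c N a := by
  obtain ⟨N, hN, c, hc0, hall, hlim⟩ := hB
  have hle : ∀ᶠ ε in 𝓝[>] (0:ℝ), ∀ i j, p ε i j ≤ 1 := by
    filter_upwards [h0] with ε hε i j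
    rw [← hε.2 i]
    exact Finset.single_le_sum (fun j _ => hε.1 i j) (Finset.mem_univ j)
  set b : ℕ → ℝ := fun k => Filter.liminf (fun ε => p ε (c k) (c (k + 1))) (𝓝[>] (0 : ℝ)) with hb
  have hbe : ∀ᶠ ε in 𝓝[>] (0:ℝ), ∀ k ∈ Finset.range N, b k / 2 < p ε (c k) (c (k+1)) := by
    rw [Finset.eventually_all]
    intro k hk
    rw [Finset.mem_range] at hk
    have h1 := hlim k hk
    refine Filter.eventually_lt_of_lt_liminf (b := b k / 2) (by simp only [hb]; linarith) ?_
    refine Filter.isBoundedUnder_of_eventually_ge (a := 0) ?_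
    filter_upwards [h0] with ε hε
    exact hε.1 _ _
  have hne : (Finset.range N).Nonempty := ⟨0, by simpa using hN⟩
  set a : ℝ := min 1 ((Finset.range N).inf' hne (fun k => b k / 2)) with ha
  have hamod : ∀ k, c (k % N + 1) = c ((k + 1) % N) := by
    intro k
    have h1 := Nat.mod_lt k hN
    rcases Nat.lt_or_ge (k % N + 1) N with h2 | h2
    · congr 1
      rw [Nat.add_mod, Nat.mod_eq_of_lt (a := 1) (by omega), Nat.mod_eq_of_lt h2]
    · have h3 : k % N + 1 = N := by omega
      rw [h3, hc0]
      congr 1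
      rw [← Nat.mod_add_mod, h3, Nat.mod_self]
  have hall' : ∀ i, ∃ k < N, c k = i := by
    intro i
    obtain ⟨k, hk, e⟩ := hall i
    rcases hk.lt_or_eq with h1 | h1
    · exact ⟨k, h1, e⟩
    · exact ⟨0, hN, by rw [← hc0, ← h1, e]⟩
  refine ⟨fun k => c (k % N), 2 * N, a, ?_⟩
  filter_upwards [h0, hπ, hbe] with ε hε1 hε2 hε3
  refine ⟨hε1.1, hε1.2, hε2, ?_, min_le_left _ _, ?_, ?_⟩
  · rw [ha, lt_min_iff]
    refine ⟨one_pos, ?_⟩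
    rw [Finset.lt_inf'_iff]
    intro k hk
    have := hlim k (Finset.mem_range.1 hk)
    simp only [hb]; linarith
  · intro k
    have h1 : k % N ∈ Finset.range N := Finset.mem_range.2 (Nat.mod_lt k hN)
    have h2 := hε3 _ h1
    rw [hamod] at h2
    refine le_trans (min_le_right _ _) (le_trans (Finset.inf'_le _ h1) h2.le)
  · intro i j
    obtain ⟨k, hk, rfl⟩ := hall' i
    obtain ⟨l, hl, rfl⟩ := hall' j
    refine ⟨k, l + N - k, by omega, ?_, ?_⟩
    · simp only [Nat.mod_eq_of_lt hk]
    · have : k + (l + N - k) = l + N := by omega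
      simp only [this, Nat.add_mod_right, Nat.mod_eq_of_lt hl]

lemma build_fam {m : ℕ} (hm : 0 < m) (ε₀ : ℝ) (hε₀ : 0 < ε₀)
    {Ω : Type} [MeasurableSpace Ω]
    (η : ℝ → ℕ → Ω → Fin m) (κ : ℝ → ℕ → Ω → ℝ) (ζ : ℝ → ℕ → Ω → Bool)
    (Pstart : ℝ → Fin m → Measure Ω)
    (hprob : ∀ ε i, IsProbabilityMeasure (Pstart ε i))
    (hmeas : ∀ ε n, Measurable (η ε n) ∧ Measurable (κ ε n) ∧ Measurable (ζ ε n))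
    (hκnn : ∀ ε n ω, 0 ≤ κ ε n ω)
    (Q : ℝ → Fin m → Fin m → ℝ → Bool → ℝ)
    (hMRP : ∀ ε ∈ Ioc (0:ℝ) ε₀, ∀ n : ℕ, ∀ I : ℕ → Fin m, ∀ T : ℕ → ℝ, ∀ Z : ℕ → Bool,
      Pstart ε (I 0)
          {ω | ∀ k ≤ n, (η ε k ω = I k ∧ (1 ≤ k → (κ ε k ω ≤ T k ∧ ζ ε k ω = Z k)))}
        = ENNReal.ofReal (∏ k ∈ Finset.Icc 1 n, Q ε (I (k - 1)) (I k) (T k) (Z k)))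
    (p : ℝ → Fin m → Fin m → ℝ)
    (hp : ∀ ε ∈ Ioc (0:ℝ) ε₀, ∀ i j, p ε i j = (Pstart ε i {ω | η ε 1 ω = j}).toReal)
    (hB : CondB p)
    (π : ℝ → Fin m → ℝ)
    (hπ : ∀ᶠ ε in 𝓝[>] (0:ℝ), IsStationaryDist (fun i j => p ε i j) (π ε))
    (hA1 : ∀ ε ∈ Ioc (0:ℝ) ε₀, ∃ i, 0 < rareP Pstart ζ ε i)
    (hA2 : ∀ i, Tendsto (fun ε => rareP Pstart ζ ε i) (𝓝[>] (0:ℝ)) (𝓝 0))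
    (hC : ∀ i : Fin m, ∀ δ > 0, Tendsto
      (fun ε => (Pstart ε i {ω | δ < κ ε 1 ω ∧ ζ ε 1 ω = true}).toReal / rareP Pstart ζ ε i)
      (𝓝[>] (0:ℝ)) (𝓝 0))
    (A : ℝ → ℝ)
    (hD : ∀ s > 0, Tendsto
      (fun ε => (avgRare Pstart ζ π ε)⁻¹ * (1 - lapPhi Pstart κ π ε s))
      (𝓝[>] (0:ℝ)) (𝓝 (A s)))
    (hApos : ∀ s > 0, 0 < A s) : Fam η κ ζ Pstart Q p π A := by
  have hev : ∀ᶠ ε in 𝓝[>] (0:ℝ), ε ∈ Ioc (0:ℝ) ε₀ := Ioc_mem_nhdsGT hε₀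
  have hmrp : ∀ᶠ ε in 𝓝[>] (0:ℝ), MRP (η ε) (κ ε) (ζ ε) (Pstart ε) (Q ε) := by
    filter_upwards [hev] with ε hε
    exact ⟨hprob ε, fun n => (hmeas ε n).1, fun n => (hmeas ε n).2.1, fun n => (hmeas ε n).2.2,
      hκnn ε, hMRP ε hε⟩
  have hp' : ∀ᶠ ε in 𝓝[>] (0:ℝ), ∀ i j, p ε i j = (Pstart ε i {ω | η ε 1 ω = j}).toReal := by
    filter_upwards [hev] with ε hε using hp ε hε
  have hring : ∃ c N a, ∀ᶠ ε in 𝓝[>] (0:ℝ), Ring1 (p ε) (π ε) c N a := by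
    refine build_ring hB ?_ hπ
    filter_upwards [hmrp, hp'] with ε h1 h2
    refine ⟨fun i j => ?_, fun i => ?_⟩
    · rw [h2]; exact ENNReal.toReal_nonneg
    · simp only [h2]; exact row_p h1 i
  have hrn : ∀ ε i, 0 ≤ rareP Pstart ζ ε i := fun ε i => ENNReal.toReal_nonneg
  refine ⟨hmrp, hp', hring, ?_, ?_, hC, hD, hApos⟩
  · obtain ⟨c, N, a, hr⟩ := hring
    filter_upwards [hr, hev] with ε h1 h2
    obtain ⟨i, hi⟩ := hA1 ε h2
    have hpi : 0 < π ε i := by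
      refine lt_of_lt_of_le ?_ (pi_lower h1 i)
      have := h1.apos
      have : (0:ℝ) < m := by exact_mod_cast hm
      positivity
    exact Finset.sum_pos' (fun i _ => mul_nonneg (h1.st.1 i) (hrn ε i))
      ⟨i, Finset.mem_univ _, mul_pos hpi hi⟩
  · have hs : Tendsto (fun ε => ∑ i, rareP Pstart ζ ε i) (𝓝[>] (0:ℝ)) (𝓝 0) := by
      simpa using tendsto_finsetSum Finset.univ (fun i _ => hA2 i)
    refine tendsto_of_tendsto_of_tendsto_of_le_of_le' tendsto_const_nhds hs ?_ ?_
    · filter_upwards [hπ] with ε h1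
      exact Finset.sum_nonneg fun i _ => mul_nonneg (h1.1 i) (hrn ε i)
    · filter_upwards [hπ] with ε h1
      refine Finset.sum_le_sum fun i _ => ?_
      have : π ε i ≤ 1 := by
        rw [← h1.2.1]
        exact Finset.single_le_sum (fun j _ => h1.1 j) (Finset.mem_univ i)
      exact mul_le_of_le_one_left (hrn ε i) this


open Classical in
/-- Indicator of no rare event up to step `L`. -/
def EE {Ω : Type} (ζ : ℕ → Ω → Bool) (L : ℕ) (ω : Ω) : ℝ :=
  if ∀ k ∈ Finset.Icc 1 L, ζ k ω = false then 1 else 0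

/-- The functional when the first rare event happens at step `N`. -/
def Psi {Ω : Type} (κ : ℕ → Ω → ℝ) (n : ℕ) (s t : ℕ → ℝ) (N : ℕ) (ω : Ω) : ℝ :=
  Real.exp (-(∑ r ∈ Finset.Icc 1 n, s r *
    (SS κ (Nat.floor (t r * (N : ℝ))) ω - SS κ (Nat.floor (t (r-1) * (N : ℝ))) ω)))

lemma EE_cases {Ω : Type} (ζ : ℕ → Ω → Bool) (L : ℕ) (ω : Ω) : EE ζ L ω = 0 ∨ EE ζ L ω = 1 := by
  unfold EE; split_ifs <;> simp

lemma EE_nonneg {Ω : Type} (ζ : ℕ → Ω → Bool) (L : ℕ) (ω : Ω) : 0 ≤ EE ζ L ω := by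
  rcases EE_cases ζ L ω with h | h <;> rw [h]; norm_num

lemma EE_le {Ω : Type} (ζ : ℕ → Ω → Bool) (L : ℕ) (ω : Ω) : EE ζ L ω ≤ 1 := by
  rcases EE_cases ζ L ω with h | h <;> rw [h]; norm_num

lemma EE_zero {Ω : Type} (ζ : ℕ → Ω → Bool) (ω : Ω) : EE ζ 0 ω = 1 := by
  simp [EE]

lemma EE_meas {Ω : Type} [MeasurableSpace Ω] {ζ : ℕ → Ω → Bool} (h : ∀ n, Measurable (ζ n))
    (L : ℕ) : Measurable (EE ζ L) := by
  set f : Bool → ℝ := fun z => if z then (0:ℝ) else 1 with hf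
  have e : EE ζ L = fun ω => ∏ k ∈ Finset.Icc 1 L, f (ζ k ω) := by
    funext ω
    unfold EE
    split_ifs with hc
    · symm
      refine Finset.prod_eq_one fun k hk => ?_
      simp [hf, hc k hk]
    · push Not at hc
      obtain ⟨k, hk, hz⟩ := hc
      symm
      refine Finset.prod_eq_zero hk ?_
      simp at hz
      simp [hf, hz]
  rw [e]
  exact Finset.measurable_fun_prod _ fun k _ => (measurable_of_countable f).comp (h k)

lemma SS_meas {Ω : Type} [MeasurableSpace Ω] {κ : ℕ → Ω → ℝ} (h : ∀ n, Measurable (κ n))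
    (k : ℕ) : Measurable (SS κ k) :=
  Finset.measurable_fun_sum _ fun n _ => h n

lemma SS_mono {Ω : Type} {κ : ℕ → Ω → ℝ} (h : ∀ n ω, 0 ≤ κ n ω) {a b : ℕ} (hab : a ≤ b) (ω : Ω) :
    SS κ a ω ≤ SS κ b ω :=
  Finset.sum_le_sum_of_subset_of_nonneg (Finset.Icc_subset_Icc le_rfl hab) fun n _ _ => h n ω

lemma Psi_meas {Ω : Type} [MeasurableSpace Ω] {κ : ℕ → Ω → ℝ} (h : ∀ n, Measurable (κ n))
    (n : ℕ) (s t : ℕ → ℝ) (N : ℕ) : Measurable (Psi κ n s t N) := by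
  unfold Psi
  refine Real.measurable_exp.comp (Measurable.neg (Finset.measurable_fun_sum _ fun r _ => ?_))
  exact ((SS_meas h _).sub (SS_meas h _)).const_mul _

lemma nu_meas {Ω : Type} [MeasurableSpace Ω] {ζ : ℝ → ℕ → Ω → Bool} (ε : ℝ)
    (h : ∀ n, Measurable (ζ ε n)) : Measurable (nuRE ζ ε) := by
  have hm : ∀ n, MeasurableSet {ω | 1 ≤ n ∧ ζ ε n ω = true} := by
    intro n
    by_cases hn : 1 ≤ n
    · simp only [hn, true_and]
      exact h n (measurableSet_singleton true)
    · simp [hn]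
  have key : ∀ k, MeasurableSet {ω | nuRE ζ ε ω ≤ k} := by
    intro k
    have e : {ω | nuRE ζ ε ω ≤ k} = (⋃ n ∈ Finset.range (k+1), {ω | 1 ≤ n ∧ ζ ε n ω = true}) ∪
        ⋂ n, {ω | 1 ≤ n ∧ ζ ε n ω = true}ᶜ := by
      ext ω
      simp only [Set.mem_ofPred_eq, Set.mem_union, Set.mem_iUnion, Set.mem_iInter, Set.mem_compl_iff,
        Finset.mem_range]
      constructor
      · intro hk
        by_cases hne : {n : ℕ | 1 ≤ n ∧ ζ ε n ω = true}.Nonempty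
        · left
          exact ⟨nuRE ζ ε ω, by omega, Nat.sInf_mem hne⟩
        · right
          intro n hn
          exact hne ⟨n, hn⟩
      · rintro (⟨n, hn, hz⟩ | hz)
        · have : nuRE ζ ε ω ≤ n := Nat.sInf_le hz
          omega
        · have : {n : ℕ | 1 ≤ n ∧ ζ ε n ω = true} = ∅ := by
            ext n
            simp only [Set.mem_ofPred_eq, Set.mem_empty_iff_false, iff_false]
            exact hz n
          unfold nuRE
          rw [this, Nat.sInf_empty]
          exact Nat.zero_le _
    rw [e]
    exact (Finset.measurableSet_biUnion _ fun n _ => hm n).union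
      (MeasurableSet.iInter fun n => (hm n).compl)
  exact measurable_of_Iic key


lemma comp_nu_meas {Ω : Type} [MeasurableSpace Ω] {F : ℕ → Ω → ℝ} (h : ∀ n, Measurable (F n))
    {ν : Ω → ℕ} (hν : Measurable ν) : Measurable (fun ω => F (ν ω) ω) := by
  have hm : Measurable (fun x : ℕ × Ω => F x.1 x.2) := measurable_from_prod_countable_right h
  exact hm.comp (hν.prodMk measurable_id)

lemma PsiNu_meas {Ω : Type} [MeasurableSpace Ω] {κ : ℕ → Ω → ℝ} (h : ∀ n, Measurable (κ n))
    (n : ℕ) (s t : ℕ → ℝ) {ν : Ω → ℕ} (hν : Measurable ν) :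
    Measurable (fun ω => Psi κ n s t (ν ω) ω) :=
  comp_nu_meas (F := Psi κ n s t) (fun N => Psi_meas h n s t N) hν

lemma t_nonneg {n : ℕ} {t : ℕ → ℝ} (h0 : t 0 = 0) (ht : ∀ r < n, t r ≤ t (r+1)) (r : ℕ)
    (hr : r ≤ n) : 0 ≤ t r := by
  induction r with
  | zero => exact h0.ge
  | succ r ih => exact (ih (by omega)).trans (ht r (by omega))

lemma Psi_exp_nonneg {Ω : Type} {κ : ℕ → Ω → ℝ} (h : ∀ n ω, 0 ≤ κ n ω) {n : ℕ} {s t : ℕ → ℝ}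
    (ht : ∀ r < n, t r ≤ t (r+1)) (hs : ∀ r, 1 ≤ r → r ≤ n → 0 ≤ s r) (N : ℕ) (ω : Ω) :
    0 ≤ ∑ r ∈ Finset.Icc 1 n, s r *
    (SS κ (Nat.floor (t r * (N : ℝ))) ω - SS κ (Nat.floor (t (r-1) * (N : ℝ))) ω) := by
  refine Finset.sum_nonneg fun r hr => ?_
  simp only [Finset.mem_Icc] at hr
  refine mul_nonneg (hs r hr.1 hr.2) (sub_nonneg.2 (SS_mono h ?_ ω))
  refine Nat.floor_le_floor (mul_le_mul_of_nonneg_right ?_ (Nat.cast_nonneg _))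
  have := ht (r-1) (by omega)
  rwa [show r - 1 + 1 = r by omega] at this

lemma Psi_bd {Ω : Type} {κ : ℕ → Ω → ℝ} (h : ∀ n ω, 0 ≤ κ n ω) {n : ℕ} {s t : ℕ → ℝ}
    (ht : ∀ r < n, t r ≤ t (r+1)) (hs : ∀ r, 1 ≤ r → r ≤ n → 0 ≤ s r) (N : ℕ) (ω : Ω) :
    0 ≤ Psi κ n s t N ω ∧ Psi κ n s t N ω ≤ 1 := by
  refine ⟨(Real.exp_pos _).le, ?_⟩
  unfold Psi
  rw [Real.exp_le_one_iff]
  linarith [Psi_exp_nonneg h ht hs N ω]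

lemma one_sub_exp_add {x y : ℝ} (hx : 0 ≤ x) (hy : 0 ≤ y) :
    1 - Real.exp (-(x+y)) ≤ (1 - Real.exp (-x)) + (1 - Real.exp (-y)) := by
  rw [neg_add, Real.exp_add]
  have h1 : Real.exp (-x) ≤ 1 := by simpa using hx
  have h2 : Real.exp (-y) ≤ 1 := by simpa using hy
  nlinarith

lemma one_sub_exp_sum {ι : Type} (S : Finset ι) (x : ι → ℝ) (hx : ∀ r ∈ S, 0 ≤ x r) :
    1 - Real.exp (-(∑ r ∈ S, x r)) ≤ ∑ r ∈ S, (1 - Real.exp (-(x r))) := by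
  classical
  induction S using Finset.induction_on with
  | empty => simp
  | insert a S ha ih =>
    rw [Finset.sum_insert ha, Finset.sum_insert ha]
    have h1 := ih fun r hr => hx r (Finset.mem_insert_of_mem hr)
    have h2 := one_sub_exp_add (hx a (Finset.mem_insert_self _ _))
      (Finset.sum_nonneg fun r hr => hx r (Finset.mem_insert_of_mem hr))
    linarith

lemma exp_diff_le {a b z : ℝ} (ha : 0 ≤ a) (hb : 0 ≤ b) (hz : |a - b| ≤ z) :
    |Real.exp (-a) - Real.exp (-b)| ≤ 1 - Real.exp (-z) := by
  wlog hab : a ≤ b generalizing a b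
  · rw [abs_sub_comm]
    exact this hb ha (by rwa [abs_sub_comm]) (le_of_not_ge hab)
  have h1 : b ≤ a + z := by rw [abs_le] at hz; linarith
  have h2 : Real.exp (-b) ≤ Real.exp (-a) := by gcongr
  rw [abs_of_nonneg (by linarith)]
  have h3 : Real.exp (-a) * Real.exp (-z) ≤ Real.exp (-b) := by
    rw [← Real.exp_add]; gcongr; linarith
  have h4 : Real.exp (-a) ≤ 1 := by simpa using ha
  have h5 : Real.exp (-z) ≤ 1 := by
    have := (abs_nonneg (a-b)).trans hz
    simpa using this
  nlinarith [Real.exp_pos (-a)]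

/-- The modulus error term. -/
def GG {Ω : Type} (κ : ℕ → Ω → ℝ) (u x : ℝ) (N N' : ℕ) (ω : Ω) : ℝ :=
  Real.exp (-(u * (SS κ (Nat.floor (x * (N' : ℝ))) ω - SS κ (Nat.floor (x * (N : ℝ))) ω)))

lemma Psi_diff {Ω : Type} {κ : ℕ → Ω → ℝ} (h : ∀ n ω, 0 ≤ κ n ω) {n : ℕ} {s t : ℕ → ℝ}
    (h0 : t 0 = 0)
    (ht : ∀ r < n, t r ≤ t (r+1)) (hs : ∀ r, 1 ≤ r → r ≤ n → 0 ≤ s r) (N M N' : ℕ) (ω : Ω)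
    (h1 : N ≤ M) (h2 : M ≤ N') :
    |Psi κ n s t M ω - Psi κ n s t N ω| ≤ ∑ r ∈ Finset.Icc 1 n,
      ((1 - GG κ (s r) (t r) N N' ω) + (1 - GG κ (s r) (t (r-1)) N N' ω)) := by
  have fm : ∀ x : ℝ, 0 ≤ x → ∀ a b : ℕ, a ≤ b →
      SS κ (Nat.floor (x * (a:ℝ))) ω ≤ SS κ (Nat.floor (x * (b:ℝ))) ω := by
    intro x hx a b hab
    refine SS_mono h (Nat.floor_le_floor (mul_le_mul_of_nonneg_left ?_ hx)) ω
    exact_mod_cast hab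
  set Y : ℝ → ℝ := fun x => SS κ (Nat.floor (x * (N' : ℝ))) ω - SS κ (Nat.floor (x * (N : ℝ))) ω
    with hY
  have hY0 : ∀ x, 0 ≤ x → 0 ≤ Y x := fun x hx => sub_nonneg.2 (fm x hx _ _ (h1.trans h2))
  have hpos : ∀ r ∈ Finset.Icc 1 n, 0 ≤ s r ∧ 0 ≤ t r ∧ 0 ≤ t (r-1) := by
    intro r hr
    simp only [Finset.mem_Icc] at hr
    exact ⟨hs r hr.1 hr.2, t_nonneg h0 ht r hr.2, t_nonneg h0 ht (r-1) (by omega)⟩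
  have hz : |(∑ r ∈ Finset.Icc 1 n, s r *
      (SS κ (Nat.floor (t r * (M : ℝ))) ω - SS κ (Nat.floor (t (r-1) * (M : ℝ))) ω)) -
      (∑ r ∈ Finset.Icc 1 n, s r *
      (SS κ (Nat.floor (t r * (N : ℝ))) ω - SS κ (Nat.floor (t (r-1) * (N : ℝ))) ω))| ≤
      ∑ r ∈ Finset.Icc 1 n, (s r * Y (t r) + s r * Y (t (r-1))) := by
    rw [← Finset.sum_sub_distrib]
    refine (Finset.abs_sum_le_sum_abs _ _).trans (Finset.sum_le_sum fun r hr => ?_)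
    obtain ⟨p1, p2, p3⟩ := hpos r hr
    rw [← mul_sub, abs_mul, abs_of_nonneg p1, ← mul_add]
    refine mul_le_mul_of_nonneg_left ?_ p1
    have a1 := fm _ p2 _ _ h1
    have a2 := fm _ p2 _ _ h2
    have a3 := fm _ p3 _ _ h1
    have a4 := fm _ p3 _ _ h2
    simp only [hY]
    rw [abs_le]; constructor <;> linarith
  refine (exp_diff_le (Psi_exp_nonneg h ht hs M ω) (Psi_exp_nonneg h ht hs N ω) hz).trans ?_
  refine (one_sub_exp_sum _ _ ?_).trans (Finset.sum_le_sum fun r hr => ?_)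
  · intro r hr
    obtain ⟨p1, p2, p3⟩ := hpos r hr
    exact add_nonneg (mul_nonneg p1 (hY0 _ p2)) (mul_nonneg p1 (hY0 _ p3))
  · obtain ⟨p1, p2, p3⟩ := hpos r hr
    exact one_sub_exp_add (mul_nonneg p1 (hY0 _ p2)) (mul_nonneg p1 (hY0 _ p3))

lemma EE_window {Ω : Type} {ζ : ℝ → ℕ → Ω → Bool} {ε : ℝ} {a b : ℕ} {ω : Ω}
    (h : EE (ζ ε) a ω - EE (ζ ε) b ω ≠ 0) (hab : a ≤ b) :
    a ≤ nuRE ζ ε ω ∧ nuRE ζ ε ω ≤ b ∧ EE (ζ ε) a ω - EE (ζ ε) b ω = 1 := by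
  unfold EE at h ⊢
  by_cases hb : ∀ k ∈ Finset.Icc 1 b, ζ ε k ω = false
  · have ha : ∀ k ∈ Finset.Icc 1 a, ζ ε k ω = false := fun k hk =>
      hb k (Finset.Icc_subset_Icc le_rfl hab hk)
    rw [if_pos ha, if_pos hb] at h
    simp at h
  · by_cases ha : ∀ k ∈ Finset.Icc 1 a, ζ ε k ω = false
    · rw [if_pos ha, if_neg hb]
      push Not at hb
      obtain ⟨k, hk, hz⟩ := hb
      simp at hz
      simp only [Finset.mem_Icc] at hk
      have hkm : k ∈ {n : ℕ | 1 ≤ n ∧ ζ ε n ω = true} := ⟨hk.1, hz⟩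
      have h1 : nuRE ζ ε ω ≤ k := Nat.sInf_le hkm
      have h2 : nuRE ζ ε ω ∈ {n : ℕ | 1 ≤ n ∧ ζ ε n ω = true} := Nat.sInf_mem ⟨k, hkm⟩
      refine ⟨?_, by omega, by norm_num⟩
      by_contra hlt
      have := ha (nuRE ζ ε ω) (by rw [Finset.mem_Icc]; exact ⟨h2.1, by omega⟩)
      rw [h2.2] at this
      exact absurd this (by simp)
    · rw [if_neg ha, if_neg hb] at h
      simp at h

lemma pointwise {Ω : Type} {κ : ℕ → Ω → ℝ} (h : ∀ n ω, 0 ≤ κ n ω) {n : ℕ} {s t : ℕ → ℝ}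
    (h0 : t 0 = 0)
    (ht : ∀ r < n, t r ≤ t (r+1)) (hs : ∀ r, 1 ≤ r → r ≤ n → 0 ≤ s r)
    (ζ : ℝ → ℕ → Ω → Bool) (ε : ℝ) (N : ℕ → ℕ) (hN0 : N 0 = 0) (hN : ∀ j, N j ≤ N (j+1))
    (J : ℕ) (ω : Ω) :
    |Psi κ n s t (nuRE ζ ε ω) ω -
      ∑ j ∈ Finset.range J, (EE (ζ ε) (N j) ω * Psi κ n s t (N j) ω -
        EE (ζ ε) (N (j+1)) ω * Psi κ n s t (N j) ω)| ≤
    EE (ζ ε) (N J) ω + ∑ j ∈ Finset.range J, ∑ r ∈ Finset.Icc 1 n,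
      ((EE (ζ ε) (N j) ω - EE (ζ ε) (N (j+1)) ω) * (1 - GG κ (s r) (t r) (N j) (N (j+1)) ω) +
       (EE (ζ ε) (N j) ω - EE (ζ ε) (N (j+1)) ω) *
        (1 - GG κ (s r) (t (r-1)) (N j) (N (j+1)) ω)) := by
  set X := Psi κ n s t (nuRE ζ ε ω) ω with hX
  set E : ℕ → ℝ := fun j => EE (ζ ε) (N j) ω with hE
  have tel : ∑ j ∈ Finset.range J, (E j - E (j+1)) = 1 - E J := by
    rw [Finset.sum_range_sub']
    simp only [hE, hN0, EE_zero]
  have e1 : X - ∑ j ∈ Finset.range J, (E j * Psi κ n s t (N j) ω - E (j+1) * Psi κ n s t (N j) ω)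
      = E J * X + ∑ j ∈ Finset.range J, (E j - E (j+1)) * (X - Psi κ n s t (N j) ω) := by
    have : ∑ j ∈ Finset.range J, (E j - E (j+1)) * (X - Psi κ n s t (N j) ω) =
        (∑ j ∈ Finset.range J, (E j - E (j+1))) * X -
        ∑ j ∈ Finset.range J, (E j * Psi κ n s t (N j) ω - E (j+1) * Psi κ n s t (N j) ω) := by
      rw [Finset.sum_mul, ← Finset.sum_sub_distrib]
      exact Finset.sum_congr rfl fun j _ => by ring
    rw [this, tel]; ring
  have hXb := Psi_bd h ht hs (nuRE ζ ε ω) ω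
  have hEJ : 0 ≤ E J := EE_nonneg _ _ _
  show |X - ∑ j ∈ Finset.range J, (E j * Psi κ n s t (N j) ω - E (j+1) * Psi κ n s t (N j) ω)| ≤ _
  rw [e1]
  refine (abs_add_le _ _).trans (add_le_add ?_ ?_)
  · rw [abs_of_nonneg (mul_nonneg hEJ hXb.1)]
    exact mul_le_of_le_one_right hEJ hXb.2
  · refine (Finset.abs_sum_le_sum_abs _ _).trans (Finset.sum_le_sum fun j _ => ?_)
    simp only [← mul_add]
    rw [← Finset.mul_sum]
    by_cases hd : E j - E (j+1) = 0
    · rw [show EE (ζ ε) (N j) ω - EE (ζ ε) (N (j+1)) ω = 0 from hd]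
      simp
    · obtain ⟨w1, w2, w3⟩ := EE_window hd (hN j)
      rw [w3, one_mul, one_mul]
      exact Psi_diff h h0 ht hs _ _ _ ω w1 w2


lemma floor_lim {p u : ℝ → ℝ} {y : ℝ} (hp : Tendsto p (𝓝[>] (0:ℝ)) (𝓝 0))
    (hp0 : ∀ᶠ ε in 𝓝[>] (0:ℝ), 0 < p ε) (hu0 : ∀ᶠ ε in 𝓝[>] (0:ℝ), 0 ≤ u ε)
    (hu : Tendsto (fun ε => p ε * u ε) (𝓝[>] (0:ℝ)) (𝓝 y)) :
    Tendsto (fun ε => p ε * (Nat.floor (u ε) : ℝ)) (𝓝[>] (0:ℝ)) (𝓝 y) := by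
  have h1 : Tendsto (fun ε => p ε * u ε - p ε) (𝓝[>] (0:ℝ)) (𝓝 y) := by
    simpa using hu.sub hp
  refine tendsto_of_tendsto_of_tendsto_of_le_of_le' h1 hu ?_ ?_
  · filter_upwards [hp0] with ε a1
    have := Nat.lt_floor_add_one (u ε)
    nlinarith
  · filter_upwards [hp0, hu0] with ε a1 a2
    exact mul_le_mul_of_nonneg_left (Nat.floor_le a2) a1.le

section fam2
variable {m : ℕ} {Ω : Type} [MeasurableSpace Ω]
    {η : ℝ → ℕ → Ω → Fin m} {κ : ℝ → ℕ → Ω → ℝ} {ζ : ℝ → ℕ → Ω → Bool}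
    {Pstart : ℝ → Fin m → Measure Ω} {Q : ℝ → Fin m → Fin m → ℝ → Bool → ℝ}
    {p : ℝ → Fin m → Fin m → ℝ} {π : ℝ → Fin m → ℝ} {A : ℝ → ℝ}

lemma floor_mul_lim (h : Fam η κ ζ Pstart Q p π A) {N : ℝ → ℕ} {y : ℝ} {x : ℝ} (hx : 0 ≤ x)
    (hN : Tendsto (fun ε => avgRare Pstart ζ π ε * N ε) (𝓝[>] (0:ℝ)) (𝓝 y)) :
    Tendsto (fun ε => avgRare Pstart ζ π ε * (Nat.floor (x * (N ε : ℝ)) : ℝ)) (𝓝[>] (0:ℝ))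
      (𝓝 (x * y)) := by
  refine floor_lim (u := fun ε => x * (N ε : ℝ)) h.plim h.ppos
    (Eventually.of_forall fun ε => by positivity) ?_
  refine (hN.const_mul x).congr fun ε => by ring

lemma EPsi_lim (h : Fam η κ ζ Pstart Q p π A) {n : ℕ} {s t : ℕ → ℝ} (h0 : t 0 = 0)
    (ht : ∀ r < n, t r ≤ t (r+1)) (hs : ∀ r, 1 ≤ r → r ≤ n → 0 ≤ s r) (N L : ℝ → ℕ) (y ℓ : ℝ)
    (hN : Tendsto (fun ε => avgRare Pstart ζ π ε * N ε) (𝓝[>] (0:ℝ)) (𝓝 y))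
    (hL : Tendsto (fun ε => avgRare Pstart ζ π ε * L ε) (𝓝[>] (0:ℝ)) (𝓝 ℓ)) (i : Fin m) :
    Tendsto (fun ε => ∫ ω, EE (ζ ε) (L ε) ω * Psi (κ ε) n s t (N ε) ω ∂(Pstart ε i))
      (𝓝[>] (0:ℝ))
      (𝓝 (Real.exp (-(ℓ + y * ∑ r ∈ Finset.Icc 1 n, A' A (s r) * (t r - t (r-1)))))) := by
  have h1 := main_lim h n s hs (fun ε r => Nat.floor (t r * (N ε : ℝ)))
    (fun ε r hr => Nat.floor_le_floor (mul_le_mul_of_nonneg_right (ht r hr) (Nat.cast_nonneg _)))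
    (fun r => t r * y) (fun r hr => floor_mul_lim h (t_nonneg h0 ht r hr) hN) L ℓ hL i
  have e : ∑ r ∈ Finset.Icc 1 n, A' A (s r) * (t r * y - t (r-1) * y) =
      y * ∑ r ∈ Finset.Icc 1 n, A' A (s r) * (t r - t (r-1)) := by
    rw [Finset.mul_sum]
    exact Finset.sum_congr rfl fun r _ => by ring
  rw [e] at h1
  refine h1.congr fun ε => ?_
  congr 1
  funext ω
  unfold Phi EE Psi
  split_ifs <;> simp

lemma EG_lim (h : Fam η κ ζ Pstart Q p π A) {u x : ℝ} (hu : 0 ≤ u) (hx : 0 ≤ x)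
    (N N' L : ℝ → ℕ) (hNN : ∀ ε, N ε ≤ N' ε) (y y' ℓ : ℝ)
    (hN : Tendsto (fun ε => avgRare Pstart ζ π ε * N ε) (𝓝[>] (0:ℝ)) (𝓝 y))
    (hN' : Tendsto (fun ε => avgRare Pstart ζ π ε * N' ε) (𝓝[>] (0:ℝ)) (𝓝 y'))
    (hL : Tendsto (fun ε => avgRare Pstart ζ π ε * L ε) (𝓝[>] (0:ℝ)) (𝓝 ℓ)) (i : Fin m) :
    Tendsto (fun ε => ∫ ω, EE (ζ ε) (L ε) ω * GG (κ ε) u x (N ε) (N' ε) ω ∂(Pstart ε i))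
      (𝓝[>] (0:ℝ)) (𝓝 (Real.exp (-(ℓ + A' A u * (x * (y' - y)))))) := by
  have h1 := main_lim h 1 (fun _ => u) (fun _ _ _ => hu)
    (fun ε r => if r = 0 then Nat.floor (x * (N ε : ℝ)) else Nat.floor (x * (N' ε : ℝ)))
    (fun ε r hr => by
      have : r = 0 := by omega
      subst this
      simp only [if_true, zero_add, one_ne_zero, if_false]
      refine Nat.floor_le_floor (mul_le_mul_of_nonneg_left ?_ hx)
      exact_mod_cast hNN ε)
    (fun r => if r = 0 then x * y else x * y') (fun r hr => by
      by_cases h0 : r = 0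
      · simp only [h0, if_true]; exact floor_mul_lim h hx hN
      · simp only [h0, if_false]; exact floor_mul_lim h hx hN') L ℓ hL i
  simp only [Finset.Icc_self, Finset.sum_singleton, one_ne_zero, if_false, Nat.sub_self,
    if_true] at h1
  rw [← mul_sub] at h1
  refine h1.congr fun ε => ?_
  congr 1
  funext ω
  unfold Phi EE GG
  simp

lemma E_lim (h : Fam η κ ζ Pstart Q p π A) (L : ℝ → ℕ) (ℓ : ℝ)
    (hL : Tendsto (fun ε => avgRare Pstart ζ π ε * L ε) (𝓝[>] (0:ℝ)) (𝓝 ℓ)) (i : Fin m) :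
    Tendsto (fun ε => ∫ ω, EE (ζ ε) (L ε) ω ∂(Pstart ε i))
      (𝓝[>] (0:ℝ)) (𝓝 (Real.exp (-ℓ))) := by
  have h1 := EPsi_lim h (n := 0) (s := fun _ => 0) (t := fun _ => 0) rfl (by simp) (by simp)
    L L ℓ ℓ hL hL i
  simpa [Psi] using h1

lemma bdd_int {P : Measure Ω} [IsFiniteMeasure P] {f : Ω → ℝ} (hf : Measurable f)
    (h0 : ∀ ω, 0 ≤ f ω) (h1 : ∀ ω, f ω ≤ 1) : Integrable f P :=
  Integrable.of_bound hf.aestronglyMeasurable 1 (Eventually.of_forall fun ω => by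
    rw [Real.norm_eq_abs, abs_of_nonneg (h0 ω)]; exact h1 ω)

lemma GG_meas {κ : ℕ → Ω → ℝ} (h : ∀ n, Measurable (κ n))
    (u x : ℝ) (N N' : ℕ) : Measurable (GG κ u x N N') := by
  unfold GG
  exact Real.measurable_exp.comp (((SS_meas h _).sub (SS_meas h _)).const_mul _).neg

lemma GG_bd {Ω : Type} {κ : ℕ → Ω → ℝ} (h : ∀ n ω, 0 ≤ κ n ω) {u x : ℝ} (hu : 0 ≤ u) (hx : 0 ≤ x)
    {N N' : ℕ} (hN : N ≤ N') (ω : Ω) : 0 ≤ GG κ u x N N' ω ∧ GG κ u x N N' ω ≤ 1 := by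
  refine ⟨(Real.exp_pos _).le, ?_⟩
  unfold GG
  rw [Real.exp_le_one_iff, neg_nonpos]
  refine mul_nonneg hu (sub_nonneg.2 (SS_mono h (Nat.floor_le_floor ?_) ω))
  refine mul_le_mul_of_nonneg_left ?_ hx
  exact_mod_cast hN

lemma grid_bound {η : ℕ → Ω → Fin m} {κ : ℕ → Ω → ℝ} {ζ : ℝ → ℕ → Ω → Bool} {ε : ℝ}
    {P : Fin m → Measure Ω} {Q : Fin m → Fin m → ℝ → Bool → ℝ}
    (h : MRP η κ (ζ ε) P Q) {n : ℕ} {s t : ℕ → ℝ} (h0 : t 0 = 0)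
    (ht : ∀ r < n, t r ≤ t (r+1)) (hs : ∀ r, 1 ≤ r → r ≤ n → 0 ≤ s r)
    (N : ℕ → ℕ) (hN0 : N 0 = 0) (hN : ∀ j, N j ≤ N (j+1)) (J : ℕ) (i : Fin m) :
    |∫ ω, Psi κ n s t (nuRE ζ ε ω) ω ∂(P i) -
      ∑ j ∈ Finset.range J, ((∫ ω, EE (ζ ε) (N j) ω * Psi κ n s t (N j) ω ∂(P i)) -
        ∫ ω, EE (ζ ε) (N (j+1)) ω * Psi κ n s t (N j) ω ∂(P i))| ≤
    (∫ ω, EE (ζ ε) (N J) ω ∂(P i)) + ∑ j ∈ Finset.range J, ∑ r ∈ Finset.Icc 1 n,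
      (((∫ ω, EE (ζ ε) (N j) ω ∂(P i)) - (∫ ω, EE (ζ ε) (N (j+1)) ω ∂(P i))
        - (∫ ω, EE (ζ ε) (N j) ω * GG κ (s r) (t r) (N j) (N (j+1)) ω ∂(P i))
        + (∫ ω, EE (ζ ε) (N (j+1)) ω * GG κ (s r) (t r) (N j) (N (j+1)) ω ∂(P i))) +
       ((∫ ω, EE (ζ ε) (N j) ω ∂(P i)) - (∫ ω, EE (ζ ε) (N (j+1)) ω ∂(P i))
        - (∫ ω, EE (ζ ε) (N j) ω * GG κ (s r) (t (r-1)) (N j) (N (j+1)) ω ∂(P i))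
        + (∫ ω, EE (ζ ε) (N (j+1)) ω * GG κ (s r) (t (r-1)) (N j) (N (j+1)) ω ∂(P i)))) := by
  have := h.prob i
  have iE : ∀ L, Integrable (EE (ζ ε) L) (P i) := fun L =>
    bdd_int (EE_meas h.mζ L) (EE_nonneg _ _) (EE_le _ _)
  have iEP : ∀ L M, Integrable (fun ω => EE (ζ ε) L ω * Psi κ n s t M ω) (P i) := fun L M =>
    bdd_int ((EE_meas h.mζ L).mul (Psi_meas h.mκ n s t M))
      (fun ω => mul_nonneg (EE_nonneg _ _ _) (Psi_bd h.nn ht hs M ω).1)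
      (fun ω => mul_le_one₀ (EE_le _ _ _) (Psi_bd h.nn ht hs M ω).1 (Psi_bd h.nn ht hs M ω).2)
  have iEG : ∀ L j u x, 0 ≤ u → 0 ≤ x →
      Integrable (fun ω => EE (ζ ε) L ω * GG κ u x (N j) (N (j+1)) ω) (P i) := fun L j u x hu hx =>
    bdd_int ((EE_meas h.mζ L).mul (GG_meas h.mκ u x _ _))
      (fun ω => mul_nonneg (EE_nonneg _ _ _) (GG_bd h.nn hu hx (hN j) ω).1)
      (fun ω => mul_le_one₀ (EE_le _ _ _) (GG_bd h.nn hu hx (hN j) ω).1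
        (GG_bd h.nn hu hx (hN j) ω).2)
  have iX : Integrable (fun ω => Psi κ n s t (nuRE ζ ε ω) ω) (P i) :=
    bdd_int (PsiNu_meas h.mκ n s t (nu_meas ε h.mζ)) (fun ω => (Psi_bd h.nn ht hs _ ω).1)
      (fun ω => (Psi_bd h.nn ht hs _ ω).2)
  have hpos : ∀ r ∈ Finset.Icc 1 n, 0 ≤ s r ∧ 0 ≤ t r ∧ 0 ≤ t (r-1) := by
    intro r hr
    simp only [Finset.mem_Icc] at hr
    exact ⟨hs r hr.1 hr.2, t_nonneg h0 ht r hr.2, t_nonneg h0 ht (r-1) (by omega)⟩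
  have iD : ∀ j u x, 0 ≤ u → 0 ≤ x → Integrable (fun ω =>
      (EE (ζ ε) (N j) ω - EE (ζ ε) (N (j+1)) ω) * (1 - GG κ u x (N j) (N (j+1)) ω)) (P i) ∧
      ∫ ω, (EE (ζ ε) (N j) ω - EE (ζ ε) (N (j+1)) ω) * (1 - GG κ u x (N j) (N (j+1)) ω) ∂(P i) =
      (∫ ω, EE (ζ ε) (N j) ω ∂(P i)) - (∫ ω, EE (ζ ε) (N (j+1)) ω ∂(P i))
        - (∫ ω, EE (ζ ε) (N j) ω * GG κ u x (N j) (N (j+1)) ω ∂(P i))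
        + (∫ ω, EE (ζ ε) (N (j+1)) ω * GG κ u x (N j) (N (j+1)) ω ∂(P i)) := by
    intro j u x hu hx
    have e : (fun ω => (EE (ζ ε) (N j) ω - EE (ζ ε) (N (j+1)) ω) *
        (1 - GG κ u x (N j) (N (j+1)) ω)) = fun ω =>
        EE (ζ ε) (N j) ω - EE (ζ ε) (N (j+1)) ω
        - EE (ζ ε) (N j) ω * GG κ u x (N j) (N (j+1)) ω
        + EE (ζ ε) (N (j+1)) ω * GG κ u x (N j) (N (j+1)) ω := by
      funext ω; ring
    have i1 : Integrable (fun ω => EE (ζ ε) (N j) ω - EE (ζ ε) (N (j+1)) ω) (P i) := (iE (N j)).sub (iE (N (j+1)))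
    have i2 : Integrable (fun ω => EE (ζ ε) (N j) ω - EE (ζ ε) (N (j+1)) ω
        - EE (ζ ε) (N j) ω * GG κ u x (N j) (N (j+1)) ω) (P i) := i1.sub (iEG (N j) j u x hu hx)
    have i3 := i2.add (iEG (N (j+1)) j u x hu hx)
    rw [e]
    refine ⟨i3, ?_⟩
    rw [integral_add i2 (iEG (N (j+1)) j u x hu hx), integral_sub i1 (iEG (N j) j u x hu hx),
      integral_sub (iE (N j)) (iE (N (j+1)))]
  have iS : ∀ j, Integrable (fun ω => EE (ζ ε) (N j) ω * Psi κ n s t (N j) ω -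
        EE (ζ ε) (N (j+1)) ω * Psi κ n s t (N j) ω) (P i) := fun j => (iEP _ _).sub (iEP _ _)
  have l1 : ∫ ω, Psi κ n s t (nuRE ζ ε ω) ω ∂(P i) -
      ∑ j ∈ Finset.range J, ((∫ ω, EE (ζ ε) (N j) ω * Psi κ n s t (N j) ω ∂(P i)) -
        ∫ ω, EE (ζ ε) (N (j+1)) ω * Psi κ n s t (N j) ω ∂(P i)) =
      ∫ ω, (Psi κ n s t (nuRE ζ ε ω) ω -
      ∑ j ∈ Finset.range J, (EE (ζ ε) (N j) ω * Psi κ n s t (N j) ω -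
        EE (ζ ε) (N (j+1)) ω * Psi κ n s t (N j) ω)) ∂(P i) := by
    rw [integral_sub iX (integrable_finsetSum _ fun j _ => iS j),
      integral_finsetSum _ fun j _ => iS j]
    congr 1
    exact Finset.sum_congr rfl fun j _ => (integral_sub (iEP _ _) (iEP _ _)).symm
  rw [l1]
  have iR : ∀ j, ∀ r ∈ Finset.Icc 1 n, Integrable (fun ω =>
      ((EE (ζ ε) (N j) ω - EE (ζ ε) (N (j+1)) ω) * (1 - GG κ (s r) (t r) (N j) (N (j+1)) ω) +
       (EE (ζ ε) (N j) ω - EE (ζ ε) (N (j+1)) ω) *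
        (1 - GG κ (s r) (t (r-1)) (N j) (N (j+1)) ω))) (P i) := fun j r hr =>
    (iD j _ _ (hpos r hr).1 (hpos r hr).2.1).1.add (iD j _ _ (hpos r hr).1 (hpos r hr).2.2).1
  have iRR : ∀ j, Integrable (fun ω => ∑ r ∈ Finset.Icc 1 n,
      ((EE (ζ ε) (N j) ω - EE (ζ ε) (N (j+1)) ω) * (1 - GG κ (s r) (t r) (N j) (N (j+1)) ω) +
       (EE (ζ ε) (N j) ω - EE (ζ ε) (N (j+1)) ω) *
        (1 - GG κ (s r) (t (r-1)) (N j) (N (j+1)) ω))) (P i) := fun j =>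
    integrable_finsetSum _ fun r hr => iR j r hr
  have iRRR := integrable_finsetSum (Finset.range J) fun j _ => iRR j
  rw [← Real.norm_eq_abs]
  refine (norm_integral_le_of_norm_le ((iE (N J)).add iRRR)
    (Eventually.of_forall fun ω => ?_)).trans (le_of_eq ?_)
  · exact pointwise h.nn h0 ht hs ζ ε N hN0 hN J ω
  simp only [Pi.add_apply]
  rw [integral_add (iE (N J)) iRRR, integral_finsetSum _ fun j _ => iRR j]
  congr 1
  refine Finset.sum_congr rfl fun j _ => ?_
  rw [integral_finsetSum _ fun r hr => iR j r hr]
  refine Finset.sum_congr rfl fun r hr => ?_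
  rw [integral_add (iD j _ _ (hpos r hr).1 (hpos r hr).2.1).1
    (iD j _ _ (hpos r hr).1 (hpos r hr).2.2).1, (iD j _ _ (hpos r hr).1 (hpos r hr).2.1).2,
    (iD j _ _ (hpos r hr).1 (hpos r hr).2.2).2]


/-- The Riemann sum of the limit. -/
def RR (Λ δ : ℝ) (J : ℕ) : ℝ := ∑ j ∈ Finset.range J,
  (Real.exp (-(j * δ + j * δ * Λ)) - Real.exp (-((j + 1 : ℕ) * δ + j * δ * Λ)))

lemma grid_lim (h : Fam η κ ζ Pstart Q p π A) {n : ℕ} {s t : ℕ → ℝ} (h0 : t 0 = 0)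
    (ht : ∀ r < n, t r ≤ t (r+1)) (hs : ∀ r, 1 ≤ r → r ≤ n → 0 ≤ s r) (i : Fin m)
    (δ : ℝ) (hδ : 0 < δ) (J : ℕ) (x : ℝ) (hx : 0 < x) :
    ∀ᶠ ε in 𝓝[>] (0:ℝ), |∫ ω, Psi (κ ε) n s t (nuRE ζ ε ω) ω ∂(Pstart ε i) -
      RR (∑ r ∈ Finset.Icc 1 n, A' A (s r) * (t r - t (r-1))) δ J| ≤
      Real.exp (-(J * δ)) +
        (∑ r ∈ Finset.Icc 1 n, (A' A (s r) * t r + A' A (s r) * t (r-1))) * δ + x := by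
  set Λ := ∑ r ∈ Finset.Icc 1 n, A' A (s r) * (t r - t (r-1)) with hΛ
  set K := ∑ r ∈ Finset.Icc 1 n, (A' A (s r) * t r + A' A (s r) * t (r-1)) with hK
  set N : ℝ → ℕ → ℕ := fun ε j => j * Nat.floor (δ / avgRare Pstart ζ π ε) with hN
  have hNl : ∀ j : ℕ, Tendsto (fun ε => avgRare Pstart ζ π ε * (N ε j : ℝ)) (𝓝[>] (0:ℝ))
      (𝓝 (j * δ)) := by
    intro j
    have h1 : Tendsto (fun ε => avgRare Pstart ζ π ε *
        (Nat.floor (δ / avgRare Pstart ζ π ε) : ℝ)) (𝓝[>] (0:ℝ)) (𝓝 δ) := by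
      refine floor_lim (u := fun ε => δ / avgRare Pstart ζ π ε) h.plim h.ppos ?_ ?_
      · filter_upwards [h.ppos] with ε hε
        positivity
      · refine tendsto_const_nhds.congr' ?_
        filter_upwards [h.ppos] with ε hε
        field_simp
    refine (h1.const_mul (j:ℝ)).congr fun ε => ?_
    simp only [hN]
    push_cast
    ring
  have hNm : ∀ ε j, N ε j ≤ N ε (j+1) := fun ε j => Nat.mul_le_mul_right _ (Nat.le_succ j)
  have hN0 : ∀ ε, N ε 0 = 0 := fun ε => by simp [hN]
  have hpos : ∀ r ∈ Finset.Icc 1 n, 0 ≤ s r ∧ 0 ≤ t r ∧ 0 ≤ t (r-1) := by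
    intro r hr
    simp only [Finset.mem_Icc] at hr
    exact ⟨hs r hr.1 hr.2, t_nonneg h0 ht r hr.2, t_nonneg h0 ht (r-1) (by omega)⟩
  have hR : Tendsto (fun ε => ∑ j ∈ Finset.range J,
      ((∫ ω, EE (ζ ε) (N ε j) ω * Psi (κ ε) n s t (N ε j) ω ∂(Pstart ε i)) -
        ∫ ω, EE (ζ ε) (N ε (j+1)) ω * Psi (κ ε) n s t (N ε j) ω ∂(Pstart ε i))) (𝓝[>] (0:ℝ))
      (𝓝 (RR Λ δ J)) := by
    refine tendsto_finsetSum _ fun j _ => ?_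
    exact (EPsi_lim h h0 ht hs (fun ε => N ε j) (fun ε => N ε j) _ _ (hNl j) (hNl j) i).sub
      (EPsi_lim h h0 ht hs (fun ε => N ε j) (fun ε => N ε (j+1)) _ _ (hNl j) (hNl (j+1)) i)
  have hD : ∀ j : ℕ, ∀ u y : ℝ, 0 ≤ u → 0 ≤ y → Tendsto (fun ε =>
      (∫ ω, EE (ζ ε) (N ε j) ω ∂(Pstart ε i)) - (∫ ω, EE (ζ ε) (N ε (j+1)) ω ∂(Pstart ε i))
        - (∫ ω, EE (ζ ε) (N ε j) ω * GG (κ ε) u y (N ε j) (N ε (j+1)) ω ∂(Pstart ε i))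
        + (∫ ω, EE (ζ ε) (N ε (j+1)) ω * GG (κ ε) u y (N ε j) (N ε (j+1)) ω ∂(Pstart ε i)))
      (𝓝[>] (0:ℝ))
      (𝓝 ((Real.exp (-(j * δ)) - Real.exp (-((j + 1 : ℕ) * δ))) *
        (1 - Real.exp (-(A' A u * y * δ))))) := by
    intro j u y hu hy
    have l := (((E_lim h (fun ε => N ε j) _ (hNl j) i).sub
      (E_lim h (fun ε => N ε (j+1)) _ (hNl (j+1)) i)).sub
      (EG_lim h hu hy (fun ε => N ε j) (fun ε => N ε (j+1)) (fun ε => N ε j) (fun ε => hNm ε j)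
        _ _ _ (hNl j) (hNl (j+1)) (hNl j) i)).add
      (EG_lim h hu hy (fun ε => N ε j) (fun ε => N ε (j+1)) (fun ε => N ε (j+1))
        (fun ε => hNm ε j) _ _ _ (hNl j) (hNl (j+1)) (hNl (j+1)) i)
    convert l using 2
    have e : A' A u * (y * ((j + 1 : ℕ) * δ - j * δ)) = A' A u * y * δ := by push_cast; ring
    rw [e, neg_add, neg_add, Real.exp_add, Real.exp_add]
    ring
  set D : ℕ → ℝ := fun j => Real.exp (-(j * δ)) - Real.exp (-((j + 1 : ℕ) * δ)) with hDd
  set err := Real.exp (-(J * δ)) + ∑ j ∈ Finset.range J, ∑ r ∈ Finset.Icc 1 n,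
      (D j * (1 - Real.exp (-(A' A (s r) * t r * δ))) +
        D j * (1 - Real.exp (-(A' A (s r) * t (r-1) * δ)))) with herr
  have hErr := (E_lim h (fun ε => N ε J) _ (hNl J) i).add
    (tendsto_finsetSum (Finset.range J) fun j _ => tendsto_finsetSum (Finset.Icc 1 n) fun r hr =>
      (hD j (s r) (t r) (hpos r hr).1 (hpos r hr).2.1).add
      (hD j (s r) (t (r-1)) (hpos r hr).1 (hpos r hr).2.2))
  have herrle : err ≤ Real.exp (-(J * δ)) + K * δ := by
    rw [herr]
    refine add_le_add le_rfl ?_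
    have hD0 : ∀ j, 0 ≤ D j := by
      intro j
      simp only [hDd, sub_nonneg, Real.exp_le_exp]
      push_cast
      nlinarith
    have hA0 : ∀ r ∈ Finset.Icc 1 n, 0 ≤ A' A (s r) := fun r hr => A'_nonneg h _ (hpos r hr).1
    have le1 : ∀ j ∈ Finset.range J, (∑ r ∈ Finset.Icc 1 n,
        (D j * (1 - Real.exp (-(A' A (s r) * t r * δ))) +
        D j * (1 - Real.exp (-(A' A (s r) * t (r-1) * δ))))) ≤ D j * (K * δ) := by
      intro j _
      rw [hK, Finset.sum_mul, Finset.mul_sum]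
      refine Finset.sum_le_sum fun r _ => ?_
      rw [← mul_add]
      refine mul_le_mul_of_nonneg_left ?_ (hD0 j)
      have a1 := Real.add_one_le_exp (-(A' A (s r) * t r * δ))
      have a2 := Real.add_one_le_exp (-(A' A (s r) * t (r-1) * δ))
      linarith
    refine (Finset.sum_le_sum le1).trans ?_
    rw [← Finset.sum_mul]
    have tel : ∑ j ∈ Finset.range J, D j = 1 - Real.exp (-(J * δ)) := by
      have := Finset.sum_range_sub' (fun j : ℕ => Real.exp (-(j * δ))) J
      rw [hDd, this]
      simp
    rw [tel]
    have hK0 : 0 ≤ K * δ := by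
      refine mul_nonneg (Finset.sum_nonneg fun r hr => ?_) hδ.le
      exact add_nonneg (mul_nonneg (hA0 r hr) (hpos r hr).2.1)
        (mul_nonneg (hA0 r hr) (hpos r hr).2.2)
    refine mul_le_of_le_one_left hK0 ?_
    linarith [Real.exp_pos (-(J * δ))]
  have hx2 : 0 < x / 2 := by linarith
  have ev1 := hR.eventually (Metric.ball_mem_nhds _ hx2)
  have ev2 := hErr.eventually (gt_mem_nhds (show err < err + x / 2 by linarith))
  filter_upwards [ev1, ev2, h.mrp] with ε a1 a2 a3
  have b := grid_bound a3 h0 ht hs (N ε) (hN0 ε) (hNm ε) J i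
  have b2 := b.trans a2.le
  rw [Real.dist_eq] at a1
  have c := abs_sub_le (∫ ω, Psi (κ ε) n s t (nuRE ζ ε ω) ω ∂(Pstart ε i))
    (∑ j ∈ Finset.range J,
      ((∫ ω, EE (ζ ε) (N ε j) ω * Psi (κ ε) n s t (N ε j) ω ∂(Pstart ε i)) -
        ∫ ω, EE (ζ ε) (N ε (j+1)) ω * Psi (κ ε) n s t (N ε j) ω ∂(Pstart ε i))) (RR Λ δ J)
  linarith

lemma one_sub_exp_lim (c : ℝ) :
    Tendsto (fun k : ℕ => (k:ℝ) * (1 - Real.exp (-(c * (1 / (k:ℝ)))))) atTop (𝓝 c) := by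
  have hd : HasDerivAt (fun y : ℝ => 1 - Real.exp (-(c * y))) c 0 := by
    have := (((hasDerivAt_id (0:ℝ)).const_mul c).neg.exp).const_sub 1
    simpa using this
  have h1 := hd.tendsto_slope_zero_right
  have h2 : Tendsto (fun k : ℕ => 1 / (k:ℝ)) atTop (𝓝[>] 0) := by
    rw [tendsto_nhdsWithin_iff]
    refine ⟨tendsto_one_div_atTop_nhds_zero_nat, ?_⟩
    filter_upwards [eventually_gt_atTop 0] with k hk
    simp [hk]
  refine (h1.comp h2).congr fun k => ?_
  simp

lemma RR_lim (Λ : ℝ) (hΛ : 0 ≤ Λ) :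
    Tendsto (fun k : ℕ => RR Λ (1 / (k:ℝ)) (k * k)) atTop (𝓝 (1 + Λ)⁻¹) := by
  have c0 : 0 < 1 + Λ := by linarith
  have hexp : Tendsto (fun k : ℕ => Real.exp (-((1 + Λ) * (k:ℝ)))) atTop (𝓝 0) :=
    Real.tendsto_exp_neg_atTop_nhds_zero.comp
      (tendsto_natCast_atTop_atTop.const_mul_atTop c0)
  have l := ((one_sub_exp_lim 1).div (one_sub_exp_lim (1+Λ)) c0.ne').mul
    ((tendsto_const_nhds (x := (1:ℝ))).sub hexp)
  have e0 : (1 : ℝ) / (1 + Λ) * (1 - 0) = (1 + Λ)⁻¹ := by rw [sub_zero, mul_one, one_div]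
  rw [e0] at l
  refine l.congr' ?_
  filter_upwards [eventually_gt_atTop 0] with k hk
  have hk' : (0:ℝ) < k := by exact_mod_cast hk
  set q : ℝ := Real.exp (-((1 + Λ) * (1 / (k:ℝ)))) with hq
  have hq1 : q < 1 := by
    rw [hq, Real.exp_lt_one_iff]
    have : 0 < (1 + Λ) * (1 / (k:ℝ)) := by positivity
    linarith
  have hterm : ∀ j : ℕ, Real.exp (-(j * (1 / (k:ℝ)) + j * (1 / (k:ℝ)) * Λ)) -
      Real.exp (-((j + 1 : ℕ) * (1 / (k:ℝ)) + j * (1 / (k:ℝ)) * Λ)) =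
      q ^ j * (1 - Real.exp (-(1 * (1 / (k:ℝ))))) := by
    intro j
    rw [hq, ← Real.exp_nat_mul, mul_sub, mul_one, ← Real.exp_add]
    congr 2
    · ring
    · push_cast; ring
  have hpow : q ^ (k * k) = Real.exp (-((1 + Λ) * (k:ℝ))) := by
    rw [hq, ← Real.exp_nat_mul]
    congr 1
    push_cast
    field_simp
  unfold RR
  simp only [hterm, Pi.div_apply]
  rw [← Finset.sum_mul, geom_sum_eq hq1.ne, hpow, ← hq]
  have h2 : (1 : ℝ) - q ≠ 0 := by linarith
  have h3 : q - 1 ≠ 0 := by linarith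
  rw [mul_div_mul_left _ _ hk'.ne', div_mul_eq_mul_div, div_mul_eq_mul_div, div_eq_div_iff h2 h3]
  ring

lemma start_lim (h : Fam η κ ζ Pstart Q p π A) {n : ℕ} {s t : ℕ → ℝ} (h0 : t 0 = 0)
    (ht : ∀ r < n, t r ≤ t (r+1)) (hs : ∀ r, 1 ≤ r → r ≤ n → 0 ≤ s r) (i : Fin m) :
    Tendsto (fun ε => ∫ ω, Psi (κ ε) n s t (nuRE ζ ε ω) ω ∂(Pstart ε i)) (𝓝[>] (0:ℝ))
      (𝓝 (1 + ∑ r ∈ Finset.Icc 1 n, A' A (s r) * (t r - t (r-1)))⁻¹) := by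
  set Λ := ∑ r ∈ Finset.Icc 1 n, A' A (s r) * (t r - t (r-1)) with hΛ
  set K := ∑ r ∈ Finset.Icc 1 n, (A' A (s r) * t r + A' A (s r) * t (r-1)) with hK
  have hΛ0 : 0 ≤ Λ := by
    refine Finset.sum_nonneg fun r hr => ?_
    simp only [Finset.mem_Icc] at hr
    refine mul_nonneg (A'_nonneg h _ (hs r hr.1 hr.2)) ?_
    have := ht (r-1) (by omega)
    rw [show r - 1 + 1 = r by omega] at this
    linarith
  rw [Metric.tendsto_nhds]
  intro x hx
  have hexp : Tendsto (fun k : ℕ => Real.exp (-((k * k : ℕ) * (1 / (k:ℝ))))) atTop (𝓝 0) := by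
    refine (Real.tendsto_exp_neg_atTop_nhds_zero.comp tendsto_natCast_atTop_atTop).congr' ?_
    filter_upwards [eventually_gt_atTop 0] with k hk
    have hk' : (0:ℝ) < k := by exact_mod_cast hk
    simp only [Function.comp]
    congr 1
    push_cast
    field_simp
  have hKl : Tendsto (fun k : ℕ => K * (1 / (k:ℝ))) atTop (𝓝 0) := by
    simpa using (tendsto_one_div_atTop_nhds_zero_nat (𝕜 := ℝ)).const_mul K
  have hx4 : 0 < x / 4 := by linarith
  have e1 := (RR_lim Λ hΛ0).eventually (Metric.ball_mem_nhds _ hx4)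
  have e2 := hexp.eventually (gt_mem_nhds hx4)
  have e3 := hKl.eventually (gt_mem_nhds hx4)
  obtain ⟨k, ⟨⟨a1, a2⟩, a3⟩, hk⟩ := (((e1.and e2).and e3).and (eventually_gt_atTop 0)).exists
  have hk' : (0:ℝ) < 1 / (k:ℝ) := by
    have : (0:ℝ) < k := by exact_mod_cast hk
    positivity
  filter_upwards [grid_lim h h0 ht hs i (1 / (k:ℝ)) hk' (k * k) (x / 4) hx4] with ε b
  rw [Real.dist_eq] at a1
  rw [Real.dist_eq]
  have c := abs_sub_le (∫ ω, Psi (κ ε) n s t (nuRE ζ ε ω) ω ∂(Pstart ε i))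
    (RR Λ (1 / (k:ℝ)) (k * k)) (1 + Λ)⁻¹
  linarith

end fam2

end PartD


/-- Theorem 1 (iii): under conditions A, B, C and D₁ the
first-rare-event-time processes `ξ_ε(·)` converge in finite-dimensional distributions to
`ξ₀(t) = θ₀(tν₀)`, where `θ₀` is a nonnegative Lévy process with
`E e^{−s θ₀(t)} = e^{−tA(s)}` and `ν₀` is an independent exponential random variable
with parameter 1. -/
theorem stmt8 {m : ℕ} (hm : 0 < m) (ε₀ : ℝ) (hε₀ : 0 < ε₀)
    {Ω : Type} [MeasurableSpace Ω]
    (η : ℝ → ℕ → Ω → Fin m) (κ : ℝ → ℕ → Ω → ℝ) (ζ : ℝ → ℕ → Ω → Bool)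
    (Pstart : ℝ → Fin m → Measure Ω)
    (hprob : ∀ ε i, IsProbabilityMeasure (Pstart ε i))
    (hmeas : ∀ ε n, Measurable (η ε n) ∧ Measurable (κ ε n) ∧ Measurable (ζ ε n))
    (hκnn : ∀ ε n ω, 0 ≤ κ ε n ω)
    (Q : ℝ → Fin m → Fin m → ℝ → Bool → ℝ)
    (hMRP : ∀ ε ∈ Ioc (0:ℝ) ε₀, ∀ n : ℕ, ∀ I : ℕ → Fin m, ∀ T : ℕ → ℝ, ∀ Z : ℕ → Bool,
      Pstart ε (I 0)
          {ω | ∀ k ≤ n, (η ε k ω = I k ∧ (1 ≤ k → (κ ε k ω ≤ T k ∧ ζ ε k ω = Z k)))}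
        = ENNReal.ofReal (∏ k ∈ Finset.Icc 1 n, Q ε (I (k - 1)) (I k) (T k) (Z k)))
    (p : ℝ → Fin m → Fin m → ℝ)
    (hp : ∀ ε ∈ Ioc (0:ℝ) ε₀, ∀ i j, p ε i j = (Pstart ε i {ω | η ε 1 ω = j}).toReal)
    (hB : CondB p)
    (π : ℝ → Fin m → ℝ)
    (hπ : ∀ᶠ ε in 𝓝[>] (0:ℝ), IsStationaryDist (fun i j => p ε i j) (π ε))
    -- condition A
    (hA1 : ∀ ε ∈ Ioc (0:ℝ) ε₀, ∃ i, 0 < rareP Pstart ζ ε i)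
    (hA2 : ∀ i, Tendsto (fun ε => rareP Pstart ζ ε i) (𝓝[>] (0:ℝ)) (𝓝 0))
    -- condition C
    (hC : ∀ i : Fin m, ∀ δ > 0, Tendsto
      (fun ε => (Pstart ε i {ω | δ < κ ε 1 ω ∧ ζ ε 1 ω = true}).toReal / rareP Pstart ζ ε i)
      (𝓝[>] (0:ℝ)) (𝓝 0))
    -- condition D₁, with v_ε = p_ε⁻¹
    (A : ℝ → ℝ)
    (hD : ∀ s > 0, Tendsto
      (fun ε => (avgRare Pstart ζ π ε)⁻¹ * (1 - lapPhi Pstart κ π ε s))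
      (𝓝[>] (0:ℝ)) (𝓝 (A s)))
    (hApos : ∀ s > 0, 0 < A s)
    (hA0 : Tendsto A (𝓝[>] (0:ℝ)) (𝓝 0))
    -- arbitrary family of initial distributions
    (q : ℝ → Fin m → ℝ) (Pq : ℝ → Measure Ω)
    (hq : ∀ ε ∈ Ioc (0:ℝ) ε₀, (∀ i, 0 ≤ q ε i) ∧ ∑ i, q ε i = 1)
    (hmix : ∀ ε ∈ Ioc (0:ℝ) ε₀, Pq ε = ∑ i, ENNReal.ofReal (q ε i) • Pstart ε i) :
    ∀ n : ℕ, ∀ t : ℕ → ℝ, t 0 = 0 → (∀ r < n, t r ≤ t (r + 1)) →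
    ∀ s : ℕ → ℝ, (∀ r, 1 ≤ r → r ≤ n → 0 < s r) →
    Tendsto
      (fun ε => ∫ ω, Real.exp (-(∑ r ∈ Finset.Icc 1 n,
        s r * (xiProc κ ζ ε (t r) ω - xiProc κ ζ ε (t (r - 1)) ω))) ∂(Pq ε))
      (𝓝[>] (0:ℝ))
      (𝓝 ((1 + ∑ r ∈ Finset.Icc 1 n, A (s r) * (t r - t (r - 1)))⁻¹)) := by
  intro n t h0 ht s hs
  have hF := build_fam hm ε₀ hε₀ η κ ζ Pstart hprob hmeas hκnn Q hMRP p hp hB π hπ hA1 hA2 hC A hD hApos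
  have hs' : ∀ r, 1 ≤ r → r ≤ n → 0 ≤ s r := fun r h1 h2 => (hs r h1 h2).le
  have hlim : ∑ r ∈ Finset.Icc 1 n, A' A (s r) * (t r - t (r - 1)) =
      ∑ r ∈ Finset.Icc 1 n, A (s r) * (t r - t (r - 1)) := by
    refine Finset.sum_congr rfl fun r hr => ?_
    rw [Finset.mem_Icc] at hr
    rw [A', if_neg (hs r hr.1 hr.2).ne']
  have hst := fun i => start_lim hF h0 ht hs' i
  rw [hlim] at hst
  set Lm := (1 + ∑ r ∈ Finset.Icc 1 n, A (s r) * (t r - t (r - 1)))⁻¹ with hLm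
  have hsum : Tendsto (fun ε => ∑ i, |(∫ ω, Psi (κ ε) n s t (nuRE ζ ε ω) ω ∂(Pstart ε i)) - Lm|)
      (𝓝[>] (0:ℝ)) (𝓝 0) := by
    have h1 : ∀ i ∈ (Finset.univ : Finset (Fin m)), Tendsto
        (fun ε => |(∫ ω, Psi (κ ε) n s t (nuRE ζ ε ω) ω ∂(Pstart ε i)) - Lm|)
        (𝓝[>] (0:ℝ)) (𝓝 0) := by
      intro i _
      have h2 := ((hst i).sub_const Lm).abs
      simpa using h2
    have h3 := tendsto_finsetSum _ h1
    simpa using h3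
  rw [tendsto_iff_norm_sub_tendsto_zero]
  refine squeeze_zero' (Eventually.of_forall fun ε => norm_nonneg _) ?_ hsum
  filter_upwards [Ioc_mem_nhdsGT hε₀] with ε hε
  obtain ⟨q0, q1⟩ := hq ε hε
  have hIntg : ∀ i, Integrable (fun ω => Psi (κ ε) n s t (nuRE ζ ε ω) ω) (Pstart ε i) := by
    intro i
    have := hprob ε i
    exact bdd_int (PsiNu_meas (fun k => (hmeas ε k).2.1) n s t (nu_meas ε fun k => (hmeas ε k).2.2))
      (fun ω => (Psi_bd (hκnn ε) ht hs' _ ω).1) (fun ω => (Psi_bd (hκnn ε) ht hs' _ ω).2)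
  change ‖(∫ ω, Psi (κ ε) n s t (nuRE ζ ε ω) ω ∂(Pq ε)) - Lm‖ ≤ _
  have hPq : (∫ ω, Psi (κ ε) n s t (nuRE ζ ε ω) ω ∂(Pq ε)) =
      ∑ i, q ε i * ∫ ω, Psi (κ ε) n s t (nuRE ζ ε ω) ω ∂(Pstart ε i) := by
    rw [hmix ε hε, integral_finsetSum_measure fun i _ => (hIntg i).smul_measure ENNReal.ofReal_ne_top]
    refine Finset.sum_congr rfl fun i _ => ?_
    rw [integral_smul_measure, ENNReal.toReal_ofReal (q0 i), smul_eq_mul]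
  have hL : Lm = ∑ i, q ε i * Lm := by rw [← Finset.sum_mul, q1, one_mul]
  rw [hPq]
  conv_lhs => rw [hL]
  rw [← Finset.sum_sub_distrib, Real.norm_eq_abs]
  refine (Finset.abs_sum_le_sum_abs _ _).trans (Finset.sum_le_sum fun i _ => ?_)
  rw [← mul_sub, abs_mul, abs_of_nonneg (q0 i)]
  have hqi : q ε i ≤ 1 := by
    rw [← q1]
    exact Finset.single_le_sum (fun j _ => q0 j) (Finset.mem_univ i)
  exact mul_le_of_le_one_left (abs_nonneg _) hqi
end
end

section
/- Let condition B hold and let v_ε, ε ∈ (0, ε₀], be positive numbers with v_ε → ∞ as ε → 0. Then for every i ∈ X the normalized occupation-time processes converge to the identity function uniformly on compact intervals in probability: for every T > 0 and δ > 0, P(sup_{0≤t≤T} |μ_{ε,i}([tv_ε])/(π_{ε,i}v_ε) − t| > δ) → 0 as ε → 0, for any family of initial distributions q̄_ε. -/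
open MeasureTheory Filter Set
open scoped Topology ENNReal

noncomputable section

/-- The occupation time `μ_{ε,i}(n) = Σ_{k=1}^n 1(η_{ε,k−1} = i)` of state `i`. -/
def occup {m : ℕ} {Ω : Type} (η : ℕ → Ω → Fin m) (i : Fin m) (n : ℕ) (ω : Ω) : ℕ :=
  ∑ k ∈ Finset.range n, if η k ω = i then 1 else 0

/-- every state reaches every state along edges of weight at least `a` in at most `L` steps -/
def Reach {m : ℕ} (p : Fin m → Fin m → ℝ) (a : ℝ) (L : ℕ) : Prop :=
  ∀ x y, ∃ r ≤ L, ∃ w : ℕ → Fin m, w 0 = x ∧ w r = y ∧ ∀ k, a ≤ p (w k) (w (k+1))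

lemma reach_of_ring {m : ℕ} (p : Fin m → Fin m → ℝ) (a : ℝ) (N : ℕ) (hN : 0 < N)
    (c : ℕ → Fin m) (hc : c N = c 0) (hall : ∀ i, ∃ k ≤ N, c k = i)
    (hp : ∀ k < N, a ≤ p (c k) (c (k+1))) : Reach p a (2*N) := by
  have key : ∀ k, c ((k+1) % N) = c (k % N + 1) := by
    intro k
    have hlt := Nat.mod_lt k hN
    rcases Nat.lt_or_ge (k % N + 1) N with h | h
    · congr 1
      rw [← Nat.mod_add_mod, Nat.mod_eq_of_lt h]
    · have h2 : k % N + 1 = N := by omega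
      rw [← Nat.mod_add_mod, h2, Nat.mod_self, hc]
  have hall' : ∀ i, ∃ k < N, c k = i := by
    intro i
    obtain ⟨k, hk, rfl⟩ := hall i
    rcases hk.lt_or_eq with h | h
    · exact ⟨k, h, rfl⟩
    · exact ⟨0, hN, by rw [h, hc]⟩
  intro x y
  obtain ⟨s, hs, rfl⟩ := hall' x
  obtain ⟨s', hs', rfl⟩ := hall' y
  refine ⟨s' + N - s, by omega, fun k => c ((s + k) % N), ?_, ?_, ?_⟩
  · simp [Nat.mod_eq_of_lt hs]
  · have : s + (s' + N - s) = s' + N := by omega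
    simp only [this, Nat.add_mod_right, Nat.mod_eq_of_lt hs']
  · intro k
    simp only [← add_assoc, key]
    exact hp _ (Nat.mod_lt _ hN)

lemma ev_bound {m : ℕ} (p : ℝ → Fin m → Fin m → ℝ) (N : ℕ) (c : ℕ → Fin m)
    (h : ∀ k < N, 0 < Filter.liminf (fun ε => p ε (c k) (c (k + 1))) (𝓝[>] (0 : ℝ))) :
    ∃ a : ℝ, 0 < a ∧ ∀ᶠ ε in 𝓝[>] (0:ℝ), ∀ k < N, a ≤ p ε (c k) (c (k+1)) := by
  have one : ∀ k < N, ∃ a : ℝ, 0 < a ∧ ∀ᶠ ε in 𝓝[>] (0:ℝ), a ≤ p ε (c k) (c (k+1)) := by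
    intro k hk
    have := h k hk
    rw [Filter.liminf_eq] at this
    have hne : {a : ℝ | ∀ᶠ ε in 𝓝[>] (0:ℝ), a ≤ p ε (c k) (c (k+1))}.Nonempty := by
      by_contra hn
      rw [Set.not_nonempty_iff_eq_empty] at hn
      rw [hn, Real.sSup_empty] at this
      exact lt_irrefl _ this
    obtain ⟨a, ha, h0⟩ := exists_lt_of_lt_csSup hne this
    exact ⟨a, h0, ha⟩
  clear h
  induction N with
  | zero => exact ⟨1, one_pos, by simp⟩
  | succ n ih =>
    obtain ⟨a, ha, h1⟩ := ih (fun k hk => one k (by omega))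
    obtain ⟨b, hb, h2⟩ := one n (by omega)
    refine ⟨min a b, lt_min ha hb, ?_⟩
    filter_upwards [h1, h2] with ε h1 h2 k hk
    rcases Nat.lt_succ_iff_lt_or_eq.mp hk with h | h
    · exact (min_le_left _ _).trans (h1 k h)
    · subst h; exact (min_le_right _ _).trans h2

structure StochMat {m : ℕ} (p : Fin m → Fin m → ℝ) : Prop where
  nonneg : ∀ x y, 0 ≤ p x y
  sum : ∀ x, ∑ y, p x y = 1

lemma StochMat.le_one {m : ℕ} {p : Fin m → Fin m → ℝ} (hp : StochMat p) (x y) : p x y ≤ 1 := by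
  rw [← hp.sum x]
  exact Finset.single_le_sum (f := fun y => p x y) (fun i _ => hp.nonneg x i) (Finset.mem_univ y)

lemma pi_lower_s10 {m : ℕ} {p : Fin m → Fin m → ℝ} (hp : StochMat p) {a : ℝ} (ha : 0 < a)
    {L : ℕ} (hr : Reach p a L) (π : Fin m → ℝ) (hπ : IsStationaryDist p π) (y : Fin m) :
    a ^ L ≤ m * π y := by
  obtain ⟨h0, h1, h2⟩ := hπ
  have step : ∀ x, a ^ L * π x ≤ π y := by
    intro x
    obtain ⟨r, hrL, w, w0, wr, hw⟩ := hr x y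
    have ha1 : a ≤ 1 := (hw 0).trans (hp.le_one _ _)
    have : ∀ k, a ^ k * π x ≤ π (w k) := by
      intro k
      induction k with
      | zero => simp [w0]
      | succ k ih =>
        calc a ^ (k+1) * π x = (a ^ k * π x) * a := by ring
          _ ≤ π (w k) * p (w k) (w (k+1)) := mul_le_mul ih (hw k) ha.le (h0 _)
          _ ≤ ∑ i, π i * p i (w (k+1)) :=
            Finset.single_le_sum (f := fun i => π i * p i (w (k+1)))
              (fun i _ => mul_nonneg (h0 i) (hp.nonneg _ _)) (Finset.mem_univ _)
          _ = _ := (h2 _).symm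
    have h3 := this r
    rw [wr] at h3
    exact (mul_le_mul_of_nonneg_right (pow_le_pow_of_le_one ha.le ha1 hrL) (h0 x)).trans h3
  have := Finset.sum_le_sum (s := Finset.univ) (fun x _ => step x)
  rw [← Finset.mul_sum, h1] at this
  simpa using this

/-- oscillation bound for the Poisson equation -/
lemma osc_bound {m : ℕ} {p : Fin m → Fin m → ℝ} (hp : StochMat p) {a : ℝ} (ha : 0 < a)
    {L : ℕ} (hr : Reach p a L) (g : Fin m → ℝ) (B : ℝ) (hB : 0 ≤ B)
    (hg : ∀ x, g x - ∑ y, p x y * g y ≤ B) (x y : Fin m) :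
    g x - g y ≤ B * (L / a ^ L) := by
  obtain ⟨z, -, hz⟩ := Finset.exists_max_image Finset.univ g ⟨x, Finset.mem_univ x⟩
  have hz' : ∀ t, g t ≤ g z := fun t => hz t (Finset.mem_univ t)
  obtain ⟨r, hrL, w, w0, wr, hw⟩ := hr z y
  have ha1 : a ≤ 1 := (hw 0).trans (hp.le_one _ _)
  have main : ∀ k : ℕ, a ^ k * (g z - g (w k)) ≤ B * k := by
    intro k
    induction k with
    | zero => simp [w0]
    | succ k ih =>
      have e : ∑ t, p (w k) t * (g z - g t) = g z - ∑ t, p (w k) t * g t := by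
        simp only [mul_sub, Finset.sum_sub_distrib, ← Finset.sum_mul, hp.sum, one_mul]
      have h1 : p (w k) (w (k+1)) * (g z - g (w (k+1))) ≤ ∑ t, p (w k) t * (g z - g t) :=
        Finset.single_le_sum (f := fun t => p (w k) t * (g z - g t))
          (fun i _ => mul_nonneg (hp.nonneg _ _) (sub_nonneg.2 (hz' i))) (Finset.mem_univ _)
      have h2 : a * (g z - g (w (k+1))) ≤ p (w k) (w (k+1)) * (g z - g (w (k+1))) :=
        mul_le_mul_of_nonneg_right (hw k) (sub_nonneg.2 (hz' _))
      have h3 := hg (w k)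
      have h4 : a * (g z - g (w (k+1))) ≤ (g z - g (w k)) + B := by linarith
      have h5 : a ^ k ≤ 1 := pow_le_one₀ ha.le ha1
      have h6 := mul_le_mul_of_nonneg_left h4 (pow_nonneg ha.le k)
      push_cast
      have h7 : a ^ k * B ≤ B := mul_le_of_le_one_left hB h5
      calc a ^ (k+1) * (g z - g (w (k+1))) = a ^ k * (a * (g z - g (w (k+1)))) := by ring
        _ ≤ a ^ k * (g z - g (w k)) + a ^ k * B := by linarith
        _ ≤ _ := by linarith
  have h := main r
  rw [wr] at h
  have hL : a ^ L * (g z - g y) ≤ B * L :=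
    (mul_le_mul_of_nonneg_right (pow_le_pow_of_le_one ha.le ha1 hrL)
      (sub_nonneg.2 (hz' _))).trans (h.trans (mul_le_mul_of_nonneg_left (by exact_mod_cast hrL) hB))
  have haL : 0 < a ^ L := pow_pos ha L
  have : g z - g y ≤ B * L / a ^ L := by
    rw [le_div_iff₀ haL]; linarith
  rw [mul_div_assoc] at this
  linarith [hz' x]

lemma poisson_s10 {m : ℕ} {p : Fin m → Fin m → ℝ} (hp : StochMat p) {a : ℝ} (ha : 0 < a)
    {L : ℕ} (hr : Reach p a L) (π : Fin m → ℝ) (hπ : IsStationaryDist p π) (i : Fin m) :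
    ∃ g : Fin m → ℝ, (∀ x, g x - ∑ y, p x y * g y = (if x = i then 1 else 0) - π i) ∧
      ∀ x y, |g x - g y| ≤ L / a ^ L := by
  obtain ⟨h0, h1, h2⟩ := hπ
  have inv : ∀ g : Fin m → ℝ, ∑ x, π x * ∑ y, p x y * g y = ∑ x, π x * g x := by
    intro g
    simp only [Finset.mul_sum]
    rw [Finset.sum_comm]
    refine Finset.sum_congr rfl fun y _ => ?_
    conv_rhs => rw [h2 y, Finset.sum_mul]
    exact Finset.sum_congr rfl fun x _ => by ring
  let T : (Fin m → ℝ) →ₗ[ℝ] (Fin m → ℝ) :=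
    { toFun := fun g x => g x - ∑ y, p x y * g y + ∑ y, π y * g y
      map_add' := by
        intro f g; ext x
        simp only [Pi.add_apply, mul_add, Finset.sum_add_distrib]; ring
      map_smul' := by
        intro c g; ext x
        simp only [Pi.smul_apply, smul_eq_mul, RingHom.id_apply, mul_add, mul_sub, Finset.mul_sum]
        congr 1
        · congr 1; exact Finset.sum_congr rfl fun y _ => by ring
        · exact Finset.sum_congr rfl fun y _ => by ring }
  have hT : ∀ g x, T g x = g x - ∑ y, p x y * g y + ∑ y, π y * g y := fun g x => rfl
  have piT : ∀ g, ∑ x, π x * T g x = ∑ x, π x * g x := by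
    intro g
    simp only [hT, mul_add, mul_sub, Finset.sum_add_distrib, Finset.sum_sub_distrib, inv,
      ← Finset.sum_mul, h1]
    ring
  have inj : Function.Injective T := by
    rw [← LinearMap.ker_eq_bot, LinearMap.ker_eq_bot']
    intro g hg
    have hpg : ∑ x, π x * g x = 0 := by rw [← piT, hg]; simp
    have hz : ∀ x, g x - ∑ y, p x y * g y = 0 := by
      intro x
      have := congrFun hg x
      rw [hT, hpg] at this
      simpa using this
    have hc : ∀ x y, g x = g y := by
      intro x y
      have e1 := osc_bound hp ha hr g 0 le_rfl (fun x => (hz x).le) x y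
      have e2 := osc_bound hp ha hr g 0 le_rfl (fun x => (hz x).le) y x
      linarith
    ext x
    have : ∑ y, π y * g y = g x := by
      rw [Finset.sum_congr rfl (fun y _ => by rw [hc y x]), ← Finset.sum_mul, h1, one_mul]
    rw [← this, hpg]; rfl
  obtain ⟨g, hg⟩ := (LinearMap.injective_iff_surjective.1 inj)
    (fun x => (if x = i then 1 else 0) - π i)
  have hpg : ∑ x, π x * g x = 0 := by
    rw [← piT, hg]
    simp [mul_sub, Finset.sum_sub_distrib, ← Finset.sum_mul, h1]
  have he : ∀ x, g x - ∑ y, p x y * g y = (if x = i then 1 else 0) - π i := by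
    intro x
    have := congrFun hg x
    rw [hT, hpg] at this
    simpa using this
  have hb : ∀ x, g x - ∑ y, p x y * g y ≤ 1 := by
    intro x; rw [he]; have := h0 i; split_ifs <;> linarith
  refine ⟨g, he, fun x y => ?_⟩
  have e1 := osc_bound hp ha hr g 1 zero_le_one hb x y
  have e2 := osc_bound hp ha hr g 1 zero_le_one hb y x
  rw [abs_le]; constructor <;> linarith

lemma stoch_of_chain {m : ℕ} {Ω : Type} [MeasurableSpace Ω] (η : ℕ → Ω → Fin m)
    (P : Fin m → Measure Ω)
    (hmeas : ∀ n, Measurable (η n)) (p : Fin m → Fin m → ℝ)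
    (hMC : ∀ n : ℕ, ∀ I : ℕ → Fin m, P (I 0) {ω | ∀ k ≤ n, η k ω = I k}
        = ENNReal.ofReal (∏ k ∈ Finset.Icc 1 n, p (I (k - 1)) (I k)))
    {a : ℝ} (ha : 0 < a) {L : ℕ} (hr : Reach p a L) : StochMat p := by
  have h1 : ∀ x y, P x {ω | η 0 ω = x ∧ η 1 ω = y} = ENNReal.ofReal (p x y) := by
    intro x y
    have := hMC 1 (fun k => if k = 0 then x else y)
    simp only [Finset.Icc_self, Finset.prod_singleton] at this
    simp only [if_true, one_ne_zero, if_false] at this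
    rw [← this]
    congr 1
    ext ω
    constructor
    · rintro ⟨h0, h1⟩ k hk
      interval_cases k <;> simp [h0, h1]
    · intro h
      exact ⟨by simpa using h 0 (by norm_num), by simpa using h 1 le_rfl⟩
  have hnn : ∀ x y, 0 ≤ p x y := by
    intro x y
    by_contra hneg
    push Not at hneg
    obtain ⟨r, -, w, w0, wr, hw⟩ := hr y x
    have := hMC (r + 2) (fun k => if k = 0 then x else if k = r + 2 then y else w (k - 1))
    simp only [if_true] at this
    have hz : P x {ω | η 0 ω = x ∧ η 1 ω = y} = 0 := by
      rw [h1, ENNReal.ofReal_eq_zero]; exact hneg.le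
    have hsub : P x {ω | ∀ k ≤ r + 2,
        η k ω = if k = 0 then x else if k = r + 2 then y else w (k - 1)} = 0 := by
      refine measure_mono_null ?_ hz
      intro ω h
      refine ⟨by simpa using h 0 (by omega), ?_⟩
      have := h 1 (by omega)
      simpa [w0] using this
    rw [hsub] at this
    have hle := ENNReal.ofReal_eq_zero.1 this.symm
    have hIcc : Finset.Icc 1 (r+2) = insert 1 (insert (r+2) (Finset.Icc 2 (r+1))) := by
      ext k; simp only [Finset.mem_Icc, Finset.mem_insert]; omega
    rw [hIcc, Finset.prod_insert (by simp), Finset.prod_insert (by simp)] at hle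
    have hpos : 0 < ∏ k ∈ Finset.Icc 2 (r+1),
        p (if k - 1 = 0 then x else if k - 1 = r + 2 then y else w (k - 1 - 1))
          (if k = 0 then x else if k = r + 2 then y else w (k - 1)) := by
      refine Finset.prod_pos fun k hk => ?_
      rw [Finset.mem_Icc] at hk
      rw [if_neg (by omega), if_neg (by omega), if_neg (by omega), if_neg (by omega)]
      have := hw (k - 1 - 1)
      rw [show k - 1 - 1 + 1 = k - 1 by omega] at this
      exact ha.trans_le this
    have e1 : r + 2 - 1 - 1 = r := by omega
    have e2 : r + 2 - 1 ≠ r + 2 := by omega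
    have e3 : r + 2 - 1 ≠ 0 := by omega
    simp only [e2, e3, e1, if_false, if_true, wr, w0, Nat.sub_self, one_ne_zero,
      show r + 2 ≠ 0 by omega, show (1:ℕ) ≠ r + 2 by omega] at hle
    have : 0 < p x y * (p x y * ∏ k ∈ Finset.Icc 2 (r+1),
        p (if k - 1 = 0 then x else if k - 1 = r + 2 then y else w (k - 1 - 1))
          (if k = 0 then x else if k = r + 2 then y else w (k - 1))) :=
      mul_pos_of_neg_of_neg hneg (mul_neg_of_neg_of_pos hneg hpos)
    linarith
  refine ⟨hnn, fun x => ?_⟩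
  have h0 : P x {ω | η 0 ω = x} = 1 := by
    have := hMC 0 (fun _ => x)
    simpa using this
  have hU : {ω | η 0 ω = x} = ⋃ y ∈ (Finset.univ : Finset (Fin m)), {ω | η 0 ω = x ∧ η 1 ω = y} := by
    ext ω; simp
  have hs : P x {ω | η 0 ω = x} = ∑ y, P x {ω | η 0 ω = x ∧ η 1 ω = y} := by
    rw [hU, measure_biUnion_finset]
    · intro y _ z _ hyz
      rw [Function.onFun, Set.disjoint_left]
      rintro ω ⟨-, h⟩ ⟨-, h'⟩
      exact hyz (h.symm.trans h')
    · intro y _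
      exact ((hmeas 0) (measurableSet_singleton x)).inter ((hmeas 1) (measurableSet_singleton y))
  rw [h0] at hs
  simp only [h1] at hs
  rw [← ENNReal.ofReal_sum_of_nonneg (fun y _ => hnn x y)] at hs
  exact (ENNReal.ofReal_eq_one.1 hs.symm)

/-- the Markov property for a fixed law -/
def IsMk {m : ℕ} {Ω : Type} [MeasurableSpace Ω] (η : ℕ → Ω → Fin m)
    (P : Measure Ω) (p : Fin m → Fin m → ℝ) : Prop :=
  ∀ n (I : ℕ → Fin m), P {ω | ∀ k ≤ n + 1, η k ω = I k}
    = P {ω | ∀ k ≤ n, η k ω = I k} * ENNReal.ofReal (p (I n) (I (n+1)))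

lemma isMk_mix {m : ℕ} {Ω : Type} [MeasurableSpace Ω] (η : ℕ → Ω → Fin m)
    (P : Fin m → Measure Ω) (hprob : ∀ i, IsProbabilityMeasure (P i))
    (hmeas : ∀ n, Measurable (η n)) (p : Fin m → Fin m → ℝ)
    (hMC : ∀ n : ℕ, ∀ I : ℕ → Fin m, P (I 0) {ω | ∀ k ≤ n, η k ω = I k}
        = ENNReal.ofReal (∏ k ∈ Finset.Icc 1 n, p (I (k - 1)) (I k)))
    (hp : StochMat p) (q : Fin m → ℝ≥0∞) : IsMk η (∑ i, q i • P i) p := by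
  intro n I
  simp only [Measure.finsetSum_apply, Measure.smul_apply, smul_eq_mul, Finset.sum_mul]
  refine Finset.sum_congr rfl fun x _ => ?_
  rw [mul_assoc]
  congr 1
  by_cases hx : x = I 0
  · subst hx
    rw [hMC, hMC, Finset.prod_Icc_succ_top (by omega), ENNReal.ofReal_mul]
    · simp
    · exact Finset.prod_nonneg fun _ _ => hp.nonneg _ _
  · have h0 : P x {ω | η 0 ω = x} = 1 := by
      have := hMC 0 (fun _ => x)
      simpa using this
    have hz : P x {ω | η 0 ω = x}ᶜ = 0 := by
      have hms : MeasurableSet {ω | η 0 ω = x} := (hmeas 0) (measurableSet_singleton x)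
      exact (prob_compl_eq_zero_iff hms).2 h0
    have hz' : ∀ n, P x {ω | ∀ k ≤ n, η k ω = I k} = 0 := by
      intro n
      refine measure_mono_null ?_ hz
      intro ω h h'
      exact hx (h'.symm.trans (h 0 (by omega)))
    rw [hz', hz', zero_mul]

lemma onestep {m : ℕ} {Ω : Type} [MeasurableSpace Ω] (η : ℕ → Ω → Fin m)
    (P : Measure Ω) [IsProbabilityMeasure P]
    (hmeas : ∀ n, Measurable (η n)) {p : Fin m → Fin m → ℝ} (hp : StochMat p)
    (hM : IsMk η P p) (g : Fin m → ℝ) (n : ℕ) (φ : (Fin (n+1) → Fin m) → ℝ) :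
    ∫ ω, φ (fun k => η k ω) * (g (η (n+1) ω) - ∑ y, p (η n ω) y * g y) ∂P = 0 := by
  let W : Ω → (Fin (n+1) → Fin m) × Fin m := fun ω => (fun k => η k ω, η (n+1) ω)
  have hW : Measurable W :=
    Measurable.prodMk (measurable_pi_lambda (fun ω (k : Fin (n+1)) => η k ω) fun k => hmeas k)
      (hmeas (n+1))
  let G : (Fin (n+1) → Fin m) × Fin m → ℝ :=
    fun w => φ w.1 * (g w.2 - ∑ y, p (w.1 (Fin.last n)) y * g y)
  have h1 : ∫ ω, φ (fun k => η k ω) * (g (η (n+1) ω) - ∑ y, p (η n ω) y * g y) ∂P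
      = ∫ w, G w ∂(P.map W) := by
    rw [integral_map hW.aemeasurable (measurable_of_finite G).aestronglyMeasurable]
    rfl
  have : IsProbabilityMeasure (P.map W) := Measure.isProbabilityMeasure_map hW.aemeasurable
  rw [h1, integral_fintype Integrable.of_finite, Fintype.sum_prod_type]
  refine Finset.sum_eq_zero fun z _ => ?_
  have key : ∀ b, (P.map W).real {(z, b)}
      = P.real {ω | ∀ k ≤ n, η k ω = z (Fin.ofNat (n+1) k)} * p (z (Fin.last n)) b := by
    intro b
    have := hM n (fun k => if k = n + 1 then b else z (Fin.ofNat (n+1) k))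
    have e1 : {ω | ∀ k ≤ n, η k ω = if k = n + 1 then b else z (Fin.ofNat (n+1) k)}
        = {ω | ∀ k ≤ n, η k ω = z (Fin.ofNat (n+1) k)} := by
      ext ω
      refine forall₂_congr fun k hk => ?_
      rw [if_neg (by omega)]
    have e2 : {ω | ∀ k ≤ n + 1, η k ω = if k = n + 1 then b else z (Fin.ofNat (n+1) k)}
        = W ⁻¹' {(z, b)} := by
      ext ω
      simp only [W, mem_ofPred_eq, mem_preimage, mem_singleton_iff, Prod.mk.injEq]
      constructor
      · intro h
        refine ⟨?_, by simpa using h (n+1) le_rfl⟩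
        ext1 k
        have hk := h k (by omega)
        rw [if_neg (by omega)] at hk
        rw [hk]
        congr 1
        ext
        simp [Fin.ofNat, Nat.mod_eq_of_lt k.2]
      · rintro ⟨h, hb⟩ k hk
        split_ifs with hk'
        · rw [hk', hb]
        · rw [← h]
          simp [Fin.ofNat, Nat.mod_eq_of_lt (show k < n + 1 by omega)]
    have e3 : Fin.ofNat (n+1) n = Fin.last n := by
      ext; simp [Fin.ofNat]
    rw [e1, e2] at this
    simp only [if_neg (show n ≠ n + 1 by omega), if_true, e3] at this
    rw [map_measureReal_apply hW (measurableSet_singleton _), measureReal_def, this,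
      ENNReal.toReal_mul, ENNReal.toReal_ofReal (hp.nonneg _ _), measureReal_def]
  simp only [key, G, smul_eq_mul]
  have : ∀ b, P.real {ω | ∀ k ≤ n, η k ω = z (Fin.ofNat (n+1) k)} * p (z (Fin.last n)) b *
      (φ z * (g b - ∑ y, p (z (Fin.last n)) y * g y))
      = (P.real {ω | ∀ k ≤ n, η k ω = z (Fin.ofNat (n+1) k)} * φ z) *
        (p (z (Fin.last n)) b * g b - p (z (Fin.last n)) b * ∑ y, p (z (Fin.last n)) y * g y) := by
    intro b; ring
  simp only [this, ← Finset.mul_sum, Finset.sum_sub_distrib, ← Finset.sum_mul]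
  simp [hp.sum]

/-- the martingale part -/
def Mart {m : ℕ} (p : Fin m → Fin m → ℝ) (g : Fin m → ℝ) (n : ℕ) (I : ℕ → Fin m) : ℝ :=
  ∑ k ∈ Finset.range n, (g (I (k+1)) - ∑ y, p (I k) y * g y)

lemma mart_sq {m : ℕ} {Ω : Type} [MeasurableSpace Ω] (η : ℕ → Ω → Fin m)
    (P : Measure Ω) [IsProbabilityMeasure P]
    (hmeas : ∀ n, Measurable (η n)) {p : Fin m → Fin m → ℝ} (hp : StochMat p)
    (hM : IsMk η P p) (g : Fin m → ℝ) (D : ℝ) (hD : ∀ x y, |g x - g y| ≤ D) (n : ℕ) :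
    Integrable (fun ω => Mart p g n (fun k => η k ω) ^ 2) P ∧
    ∫ ω, Mart p g n (fun k => η k ω) ^ 2 ∂P ≤ n * D ^ 2 := by
  have hd : ∀ x y, |g y - ∑ z, p x z * g z| ≤ D := by
    intro x y
    have : g y - ∑ z, p x z * g z = ∑ z, p x z * (g y - g z) := by
      simp only [mul_sub, Finset.sum_sub_distrib, ← Finset.sum_mul, hp.sum, one_mul]
    rw [this]
    calc |∑ z, p x z * (g y - g z)| ≤ ∑ z, |p x z * (g y - g z)| := Finset.abs_sum_le_sum_abs _ _
      _ ≤ ∑ z, p x z * D := by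
        refine Finset.sum_le_sum fun z _ => ?_
        rw [abs_mul, abs_of_nonneg (hp.nonneg x z)]
        exact mul_le_mul_of_nonneg_left (hD _ _) (hp.nonneg _ _)
      _ = D := by rw [← Finset.sum_mul, hp.sum, one_mul]
  -- any function of finitely many coordinates is integrable
  have hInteg : ∀ (N : ℕ) (F : (Fin (N+1) → Fin m) → ℝ),
      Integrable (fun ω => F (fun k => η k ω)) P := by
    intro N F
    have hW : Measurable (fun ω => (fun k : Fin (N+1) => η k ω)) :=
      measurable_pi_lambda _ fun k => hmeas k
    exact (Integrable.of_finite (f := F) (μ := P.map _)).comp_measurable hW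
  let cut : (N : ℕ) → (Fin (N+1) → Fin m) → ℕ → Fin m := fun N z k => z (Fin.ofNat (N+1) k)
  have hcut : ∀ N ω k, k ≤ N → cut N (fun k => η k ω) k = η k ω := by
    intro N ω k hk
    simp [cut, Fin.ofNat, Nat.mod_eq_of_lt (show k < N + 1 by omega)]
  have hMc : ∀ n N ω, n ≤ N → Mart p g n (cut N (fun k => η k ω)) = Mart p g n (fun k => η k ω) := by
    intro n N ω hn
    refine Finset.sum_congr rfl fun k hk => ?_
    rw [Finset.mem_range] at hk
    rw [hcut N ω k (by omega), hcut N ω (k+1) (by omega)]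
  have hI2 : ∀ n, Integrable (fun ω => Mart p g n (fun k => η k ω) ^ 2) P := by
    intro n
    have := hInteg n (fun z => Mart p g n (cut n z) ^ 2)
    simpa only [hMc n n _ le_rfl] using this
  refine ⟨hI2 n, ?_⟩
  induction n with
  | zero => simp [Mart]
  | succ n ih =>
    have hcross := onestep η P hmeas hp hM g n (fun z => Mart p g n (cut n z))
    simp only [hMc n n _ le_rfl] at hcross
    have hIc : Integrable (fun ω => Mart p g n (fun k => η k ω) *
        (g (η (n+1) ω) - ∑ y, p (η n ω) y * g y)) P := by
      have := hInteg (n+1) (fun z => Mart p g n (cut (n+1) z) *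
        (g (cut (n+1) z (n+1)) - ∑ y, p (cut (n+1) z n) y * g y))
      simpa only [hMc n (n+1) _ (Nat.le_succ n), hcut (n+1) _ (n+1) le_rfl,
        hcut (n+1) _ n (Nat.le_succ n)] using this
    have hId : Integrable (fun ω => (g (η (n+1) ω) - ∑ y, p (η n ω) y * g y) ^ 2) P := by
      have := hInteg (n+1) (fun z =>
        (g (cut (n+1) z (n+1)) - ∑ y, p (cut (n+1) z n) y * g y) ^ 2)
      simpa only [hcut (n+1) _ (n+1) le_rfl, hcut (n+1) _ n (Nat.le_succ n)] using this
    have hexp : ∀ ω, Mart p g (n+1) (fun k => η k ω) ^ 2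
        = Mart p g n (fun k => η k ω) ^ 2 + 2 * (Mart p g n (fun k => η k ω) *
        (g (η (n+1) ω) - ∑ y, p (η n ω) y * g y))
        + (g (η (n+1) ω) - ∑ y, p (η n ω) y * g y) ^ 2 := by
      intro ω
      have : Mart p g (n+1) (fun k => η k ω) = Mart p g n (fun k => η k ω) +
        (g (η (n+1) ω) - ∑ y, p (η n ω) y * g y) := Finset.sum_range_succ _ _
      rw [this]; ring
    have hd2 : ∫ ω, (g (η (n+1) ω) - ∑ y, p (η n ω) y * g y) ^ 2 ∂P ≤ D ^ 2 := by
      calc _ ≤ ∫ ω, D ^ 2 ∂P := integral_mono hId (integrable_const _)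
            (fun ω => sq_le_sq' (abs_le.1 (hd _ _)).1 (abs_le.1 (hd _ _)).2)
        _ = D ^ 2 := by simp
    simp only [hexp]
    have hsum : Integrable (fun ω => Mart p g n (fun k => η k ω) ^ 2 +
        2 * (Mart p g n (fun k => η k ω) * (g (η (n+1) ω) - ∑ y, p (η n ω) y * g y))) P :=
      (hI2 n).add (hIc.const_mul 2)
    rw [integral_add hsum hId, integral_add (hI2 n) (hIc.const_mul 2),
      integral_const_mul, hcross]
    push_cast
    linarith

lemma occup_dev {m : ℕ} {Ω : Type} [MeasurableSpace Ω] (η : ℕ → Ω → Fin m)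
    (P : Measure Ω) [IsProbabilityMeasure P]
    (hmeas : ∀ n, Measurable (η n)) {p : Fin m → Fin m → ℝ} (hp : StochMat p)
    (hM : IsMk η P p) {a : ℝ} (ha : 0 < a) {L : ℕ} (hr : Reach p a L) (π : Fin m → ℝ)
    (hπ : IsStationaryDist p π) (i : Fin m) (n : ℕ) (s : ℝ) (hs : L / a ^ L < s) :
    P.real {ω | s ≤ |(occup η i n ω : ℝ) - n * π i|} ≤ n * (L / a ^ L) ^ 2 / (s - L / a ^ L) ^ 2 := by
  obtain ⟨g, hg, hD⟩ := poisson_s10 hp ha hr π hπ i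
  set D : ℝ := L / a ^ L with hDdef
  obtain ⟨hI, hE⟩ := mart_sq η P hmeas hp hM g D hD n
  have hdec : ∀ ω, (occup η i n ω : ℝ) - n * π i
      = Mart p g n (fun k => η k ω) + (g (η 0 ω) - g (η n ω)) := by
    intro ω
    induction n with
    | zero => simp [occup, Mart]
    | succ n ih =>
      have e1 : Mart p g (n+1) (fun k => η k ω) = Mart p g n (fun k => η k ω) +
        (g (η (n+1) ω) - ∑ y, p (η n ω) y * g y) := Finset.sum_range_succ _ _
      have e2 : (occup η i (n+1) ω : ℝ) = occup η i n ω + if η n ω = i then 1 else 0 := by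
        simp only [occup, Finset.sum_range_succ]; push_cast; rfl
      have e3 := hg (η n ω)
      obtain ⟨hI', hE'⟩ := mart_sq η P hmeas hp hM g D hD n
      have := ih hI' hE'
      rw [e1, e2]; push_cast; linarith
  rw [le_div_iff₀ (pow_pos (sub_pos.2 hs) 2), mul_comm]
  refine le_trans ?_ ((mul_meas_ge_le_integral_of_nonneg (ae_of_all _ fun ω => sq_nonneg _) hI
    ((s - D) ^ 2)).trans hE)
  refine mul_le_mul_of_nonneg_left (measureReal_mono ?_) (sq_nonneg _)
  intro ω h
  simp only [mem_ofPred_eq] at h ⊢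
  rw [hdec] at h
  have h1 := abs_add_le (Mart p g n (fun k => η k ω)) (g (η 0 ω) - g (η n ω))
  have h2 := hD (η 0 ω) (η n ω)
  rw [← sq_abs (Mart p g n _)]
  exact pow_le_pow_left₀ (sub_pos.2 hs).le (by linarith) 2

lemma occup_mono {m : ℕ} {Ω : Type} (η : ℕ → Ω → Fin m) (i : Fin m) (ω : Ω) {n n' : ℕ}
    (h : n ≤ n') : occup η i n ω ≤ occup η i n' ω :=
  Finset.sum_le_sum_of_subset (Finset.range_mono h)

/-- grid reduction for monotone functions -/
lemma grid {X : ℝ → ℝ} (hX : ∀ s t, 0 ≤ s → s ≤ t → X s ≤ X t) {T δ : ℝ} (hδ : 0 < δ)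
    {t : ℝ} (h0 : 0 ≤ t) (hT : t ≤ T) (h : δ < |X t - t|) :
    ∃ j ∈ Finset.range (⌊T / (δ/2)⌋₊ + 2), δ / 2 ≤ |X (j * (δ/2)) - j * (δ/2)| := by
  have hh : 0 < δ / 2 := by linarith
  set h' := δ / 2 with hh'
  set j := ⌊t / h'⌋₊ with hj
  have hjT : j ≤ ⌊T / h'⌋₊ := Nat.floor_le_floor (div_le_div_of_nonneg_right hT hh.le)
  have h1 : (j:ℝ) * h' ≤ t := by
    rw [← le_div_iff₀ hh]; exact Nat.floor_le (div_nonneg h0 hh.le)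
  have h2 : t < ((j + 1 : ℕ) : ℝ) * h' := by
    rw [← div_lt_iff₀ hh]; push_cast; exact Nat.lt_floor_add_one _
  by_contra hcon
  push Not at hcon
  have c1 := abs_lt.1 (hcon j (Finset.mem_range.2 (by omega)))
  have c2 := abs_lt.1 (hcon (j+1) (Finset.mem_range.2 (by omega)))
  have m1 := hX _ _ (by positivity) h1
  have m2 := hX _ _ h0 h2.le
  push_cast at c2 m2 h2
  rcases lt_abs.1 h with h | h <;> linarith [c1.1, c1.2, c2.1, c2.2]

/-- Lemma 3: under condition B the normalized occupation-time processes
`μ_{ε,i}([t v_ε]) / (π_{ε,i} v_ε)` converge to the identity function `t`, uniformly on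
compact intervals in probability. -/
theorem stmt10 {m : ℕ} (hm : 0 < m) (ε₀ : ℝ) (hε₀ : 0 < ε₀)
    {Ω : Type} [MeasurableSpace Ω]
    (η : ℝ → ℕ → Ω → Fin m)
    (Pstart : ℝ → Fin m → Measure Ω)
    (hprob : ∀ ε i, IsProbabilityMeasure (Pstart ε i))
    (hmeas : ∀ ε n, Measurable (η ε n))
    (p : ℝ → Fin m → Fin m → ℝ)
    -- Markov chain structure with transition probabilities p_{ε,ij}
    (hMC : ∀ ε ∈ Ioc (0:ℝ) ε₀, ∀ n : ℕ, ∀ I : ℕ → Fin m,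
      Pstart ε (I 0) {ω | ∀ k ≤ n, η ε k ω = I k}
        = ENNReal.ofReal (∏ k ∈ Finset.Icc 1 n, p ε (I (k - 1)) (I k)))
    (hB : CondB p)
    (π : ℝ → Fin m → ℝ)
    (hπ : ∀ᶠ ε in 𝓝[>] (0:ℝ), IsStationaryDist (fun i j => p ε i j) (π ε))
    -- arbitrary family of initial distributions
    (q : ℝ → Fin m → ℝ) (Pq : ℝ → Measure Ω)
    (hq : ∀ ε ∈ Ioc (0:ℝ) ε₀, (∀ i, 0 ≤ q ε i) ∧ ∑ i, q ε i = 1)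
    (hmix : ∀ ε ∈ Ioc (0:ℝ) ε₀, Pq ε = ∑ i, ENNReal.ofReal (q ε i) • Pstart ε i)
    (v : ℝ → ℝ) (hvpos : ∀ ε ∈ Ioc (0:ℝ) ε₀, 0 < v ε)
    (hvinf : Tendsto v (𝓝[>] (0:ℝ)) atTop) :
    ∀ i : Fin m, ∀ T > (0:ℝ), ∀ δ > (0:ℝ),
      Tendsto
        (fun ε => (Pq ε {ω | ∃ t, 0 ≤ t ∧ t ≤ T ∧
          δ < |(occup (η ε) i (Nat.floor (t * v ε)) ω : ℝ) / (π ε i * v ε) - t|}).toReal)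
        (𝓝[>] (0:ℝ)) (𝓝 0) := by
  intro i T hT δ hδ
  obtain ⟨N, hN, c, hcN, hall, hlim⟩ := hB
  obtain ⟨a, ha, hab⟩ := ev_bound p N c hlim
  set D : ℝ := ((2 * N : ℕ) : ℝ) / a ^ (2 * N) with hD
  have hD0 : 0 ≤ D := by positivity
  set ρ : ℝ := a ^ (2 * N) / m with hρ
  have hm' : (0:ℝ) < m := by exact_mod_cast hm
  have hρ0 : 0 < ρ := by positivity
  have hIoc : ∀ᶠ ε in 𝓝[>] (0:ℝ), ε ∈ Ioc (0:ℝ) ε₀ := Ioc_mem_nhdsGT hε₀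
  set K := ⌊T / (δ/2)⌋₊ + 2 with hK
  have hvev : ∀ᶠ ε in 𝓝[>] (0:ℝ), 2 * (1 + D) / (ρ * (δ/2)) + 1 ≤ v ε := hvinf.eventually_ge_atTop _
  let C : ℕ → ℝ := fun j => j * (δ/2) * D ^ 2 * 4 / (ρ * (δ/2)) ^ 2
  have hlimC : Tendsto (fun ε => ∑ j ∈ Finset.range K, C j / v ε) (𝓝[>] (0:ℝ)) (𝓝 0) := by
    have : Tendsto (fun ε => ∑ j ∈ Finset.range K, C j / v ε) (𝓝[>] (0:ℝ))
        (𝓝 (∑ j ∈ Finset.range K, 0)) :=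
      tendsto_finsetSum _ fun j _ => hvinf.const_div_atTop (C j)
    simpa using this
  refine squeeze_zero' (Eventually.of_forall fun ε => ENNReal.toReal_nonneg) ?_ hlimC
  filter_upwards [hab, hIoc, hπ, hvev] with ε hab hε hπ hvε
  have hr : Reach (p ε) a (2 * N) := reach_of_ring (p ε) a N hN c hcN hall hab
  have hp : StochMat (p ε) := stoch_of_chain (η ε) (Pstart ε) (hmeas ε) (p ε) (hMC ε hε) ha hr
  have hM : IsMk (η ε) (Pq ε) (p ε) := by
    rw [hmix ε hε]
    exact isMk_mix (η ε) (Pstart ε) (hprob ε) (hmeas ε) (p ε) (hMC ε hε) hp _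
  have hPq : IsProbabilityMeasure (Pq ε) := by
    constructor
    rw [hmix ε hε]
    simp only [Measure.finsetSum_apply, Measure.smul_apply, smul_eq_mul, measure_univ, mul_one]
    rw [← ENNReal.ofReal_sum_of_nonneg (fun i _ => (hq ε hε).1 i), (hq ε hε).2, ENNReal.ofReal_one]
  have hπi : ρ ≤ π ε i := by
    rw [hρ, div_le_iff₀ hm', mul_comm (π ε i)]
    exact pi_lower_s10 hp ha hr (π ε) hπ i
  have hπ1 : π ε i ≤ 1 := by
    rw [← hπ.2.1]
    exact Finset.single_le_sum (fun j _ => hπ.1 j) (Finset.mem_univ i)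
  have hπ0 : 0 < π ε i := hρ0.trans_le hπi
  have hv0 : 0 < v ε := hvpos ε hε
  have hρδ : 0 < ρ * (δ/2) := by positivity
  have hbig : 2 * (1 + D) < ρ * (δ/2) * v ε := by
    have : 2 * (1 + D) / (ρ * (δ/2)) < v ε := by linarith
    rw [div_lt_iff₀ hρδ] at this
    linarith
  -- pointwise estimate
  have hpt : ∀ j : ℕ, (Pq ε).real {ω | δ / 2 ≤ |(occup (η ε) i (Nat.floor (j * (δ/2) * v ε)) ω : ℝ)
      / (π ε i * v ε) - j * (δ/2)|} ≤ C j / v ε := by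
    intro j
    set t : ℝ := j * (δ/2) with ht
    have ht0 : 0 ≤ t := by positivity
    set n := Nat.floor (t * v ε) with hn
    have hn1 : (n:ℝ) ≤ t * v ε := Nat.floor_le (by positivity)
    have hn2 : t * v ε < n + 1 := Nat.lt_floor_add_one _
    have hsD : D < ρ * (δ/2) * v ε - 1 := by linarith
    have hdev := occup_dev (η ε) (Pq ε) (hmeas ε) hp hM ha hr (π ε) hπ i n
      (ρ * (δ/2) * v ε - 1) hsD
    rw [← hD] at hdev
    refine le_trans (measureReal_mono ?_) (hdev.trans ?_)
    · intro ω h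
      simp only [mem_ofPred_eq] at h ⊢
      set o : ℝ := (occup (η ε) i n ω : ℝ) with ho
      have hpv : 0 < π ε i * v ε := by positivity
      have e1 : o / (π ε i * v ε) - t = (o - t * (π ε i * v ε)) / (π ε i * v ε) := by
        field_simp
      rw [e1, abs_div, abs_of_pos hpv, le_div_iff₀ hpv] at h
      have e2 : o - t * (π ε i * v ε) = (o - n * π ε i) + (n - t * v ε) * π ε i := by ring
      have e3 := abs_add_le (o - n * π ε i) ((n - t * v ε) * π ε i)
      have e4 : |(n - t * v ε) * π ε i| ≤ 1 := by
        rw [abs_mul, abs_of_pos hπ0]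
        exact mul_le_one₀ (abs_le.2 ⟨by linarith, by linarith⟩) hπ0.le hπ1
      have e5 : ρ * (δ/2) * v ε ≤ δ / 2 * (π ε i * v ε) := by
        have := mul_le_mul_of_nonneg_right hπi (show 0 ≤ δ/2 * v ε by positivity)
        linarith
      rw [e2] at h
      linarith
    · have hq1 : ρ * (δ/2) * v ε / 2 ≤ ρ * (δ/2) * v ε - 1 - D := by linarith
      have hq0 : 0 < ρ * (δ/2) * v ε / 2 := by positivity
      calc (n:ℝ) * D ^ 2 / (ρ * (δ/2) * v ε - 1 - D) ^ 2
          ≤ (t * v ε) * D ^ 2 / (ρ * (δ/2) * v ε / 2) ^ 2 := by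
            gcongr
        _ = C j / v ε := by
            simp only [C, ← ht]
            field_simp
            ring
  have hsub : {ω | ∃ t, 0 ≤ t ∧ t ≤ T ∧
      δ < |(occup (η ε) i (Nat.floor (t * v ε)) ω : ℝ) / (π ε i * v ε) - t|} ⊆
      ⋃ j ∈ Finset.range K, {ω | δ / 2 ≤
        |(occup (η ε) i (Nat.floor (j * (δ/2) * v ε)) ω : ℝ) / (π ε i * v ε) - j * (δ/2)|} := by
    rintro ω ⟨t, h0, hT', h⟩
    obtain ⟨j, hj, hjj⟩ := grid
      (X := fun t => (occup (η ε) i (Nat.floor (t * v ε)) ω : ℝ) / (π ε i * v ε))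
      (by
        intro s t _ hst
        have : occup (η ε) i (Nat.floor (s * v ε)) ω ≤ occup (η ε) i (Nat.floor (t * v ε)) ω :=
          occup_mono _ _ _ (Nat.floor_le_floor (mul_le_mul_of_nonneg_right hst hv0.le))
        have h' : (occup (η ε) i (Nat.floor (s * v ε)) ω : ℝ)
          ≤ occup (η ε) i (Nat.floor (t * v ε)) ω := by exact_mod_cast this
        exact div_le_div_of_nonneg_right h' (by positivity)) hδ h0 hT' h
    exact Set.mem_biUnion hj hjj
  calc _ ≤ (Pq ε).real (⋃ j ∈ Finset.range K, {ω | δ / 2 ≤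
        |(occup (η ε) i (Nat.floor (j * (δ/2) * v ε)) ω : ℝ) / (π ε i * v ε) - j * (δ/2)|}) :=
        measureReal_mono hsub (measure_ne_top _ _)
    _ ≤ _ := measureReal_biUnion_finset_le _ _
    _ ≤ _ := Finset.sum_le_sum fun j _ => hpt j
end
end
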